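/- Let m ≥ 1 be an integer and let u be a classical m-equivariant solution of CSS on I = (−1,0) such that ‖u(t,·)‖_{L²}² = 8π(m+1) for all t ∈ (−1,0) and ‖∂_r u(t,·)‖_{L²} → ∞ as t ↗ 0. Then for every R > 0 and every smooth φ : [0,∞) → [0,1] with φ = 1 on [0,1] and φ = 0 on [2,∞), one has lim_{t↗0} 2π·∫₀^∞ φ(r/R)²·r²·|u(t,r)|²·r dr = 0; that is, the localized weighted norm ‖φ(|x|/R)·|x|·u(t)‖_{L²} tends to 0 at the blowup time. -/

import Mathlib

open MeasureTheory Set Filter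

noncomputable section

/-- The Jackiw–Pi vortex `Q(r) = √8 (m+1) r^m / (1 + r^(2m+2))`. -/
def Q (m : ℕ) (r : ℝ) : ℝ :=
  Real.sqrt 8 * (m + 1) * r ^ m / (1 + r ^ (2 * m + 2))

/-- `A_θ[u](r) = -(1/2) ∫₀^r |u(r')|² r' dr'`. -/
def Atheta (u : ℝ → ℂ) (r : ℝ) : ℝ :=
  -(1 / 2) * ∫ s in (0:ℝ)..r, ‖u s‖ ^ 2 * s

/-- Bilinear version `A_θ[f,g](r) = -(1/2) ∫₀^r Re(conj f g) r' dr'`. -/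
def Atheta2 (f g : ℝ → ℂ) (r : ℝ) : ℝ :=
  -(1 / 2) * ∫ s in (0:ℝ)..r, ((starRingEnd ℂ) (f s) * g s).re * s

/-- `A_t[u](r) = -∫_r^∞ (m + A_θ[u](r')) |u(r')|² / r' dr'`. -/
def At (m : ℕ) (u : ℝ → ℂ) (r : ℝ) : ℝ :=
  -∫ s in Set.Ioi r, ((m : ℝ) + Atheta u s) * ‖u s‖ ^ 2 / s

/-- Squared (2D radial) `L²` norm: `‖u‖² = 2π ∫₀^∞ |u(r)|² r dr`. -/
def L2sq (u : ℝ → ℂ) : ℝ :=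
  2 * Real.pi * ∫ r in Set.Ioi (0:ℝ), ‖u r‖ ^ 2 * r

/-- Squared equivariant `Ḣ¹_m` norm. -/
def H1msq (m : ℕ) (u : ℝ → ℂ) : ℝ :=
  2 * Real.pi * ∫ r in Set.Ioi (0:ℝ), (‖deriv u r‖ ^ 2 + (m : ℝ) ^ 2 * ‖u r‖ ^ 2 / r ^ 2) * r

/-- The energy functional. -/
def Energy (m : ℕ) (u : ℝ → ℂ) : ℝ :=
  2 * Real.pi * ∫ r in Set.Ioi (0:ℝ),
    ((1 / 2) * ‖deriv u r‖ ^ 2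
      + (1 / 2) * (((m : ℝ) + Atheta u r) / r) ^ 2 * ‖u r‖ ^ 2
      - (1 / 4) * ‖u r‖ ^ 4) * r

/-- The Chern–Simons–Schrödinger equation at the point `(t, r)`:
`i ∂_t u - A_t[u] u + ∂_r² u + (1/r) ∂_r u - ((m + A_θ[u])/r)² u + |u|² u = 0`. -/
def CSSeq (m : ℕ) (u : ℝ → ℝ → ℂ) (t r : ℝ) : Prop :=
  Complex.I * deriv (fun s => u s r) t
    - (At m (u t) r : ℂ) * u t r
    + deriv (deriv (u t)) r
    + (1 / (r : ℂ)) * deriv (u t) r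
    - ((((m : ℝ) + Atheta (u t) r) / r : ℝ) : ℂ) ^ 2 * u t r
    + ((‖u t r‖ : ℝ) : ℂ) ^ 2 * u t r = 0

/-- A classical `m`-equivariant solution of CSS on the open interval `I`. -/
structure IsCSS (m : ℕ) (I : Set ℝ) (u : ℝ → ℝ → ℂ) : Prop where
  smooth : ContDiffOn ℝ (⊤ : ℕ∞) (fun p : ℝ × ℝ => u p.1 p.2) (I ×ˢ Set.Ioi (0:ℝ))
  integrable : ∀ t ∈ I, IntegrableOn (fun r => ‖u t r‖ ^ 2 * r) (Set.Ioi (0:ℝ))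
  equivariant : ∃ U : ℝ → ℝ × ℝ → ℂ,
    ContDiffOn ℝ (⊤ : ℕ∞) (fun p : ℝ × (ℝ × ℝ) => U p.1 p.2) (I ×ˢ (Set.univ : Set (ℝ × ℝ))) ∧
    ∀ t ∈ I, ∀ x : ℝ × ℝ, x ≠ 0 →
      U t x = u t (Real.sqrt (x.1 ^ 2 + x.2 ^ 2)) *
        (((x.1 : ℂ) + (x.2 : ℂ) * Complex.I) / ((Real.sqrt (x.1 ^ 2 + x.2 ^ 2) : ℝ) : ℂ)) ^ m
  bounded : ∀ J : Set ℝ, J ⊆ I → IsCompact J → ∃ C : ℝ, ∀ t ∈ J,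
    Real.sqrt (L2sq (u t)) + Real.sqrt (H1msq m (u t)) ≤ C
  eq : ∀ t ∈ I, ∀ r : ℝ, 0 < r → CSSeq m u t r

/-- Tightness: uniformly small mass near spatial infinity. -/
def Tight (I : Set ℝ) (u : ℝ → ℝ → ℂ) : Prop :=
  ∀ η : ℝ, 0 < η → ∃ R : ℝ, ∀ t ∈ I,
    2 * Real.pi * ∫ r in Set.Ioi R, ‖u t r‖ ^ 2 * r < η

/-- The real inner product `(f,g)_r = Re (2π ∫₀^∞ f conj(g) r dr)`. -/
def iprod (f g : ℝ → ℂ) : ℝ :=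
  2 * Real.pi * (∫ r in Set.Ioi (0:ℝ), f r * (starRingEnd ℂ) (g r) * (r : ℂ)).re

/-- `ΛQ = r Q' + Q`. -/
def LamQ (m : ℕ) (r : ℝ) : ℝ := r * deriv (Q m) r + Q m r

/-- The linearized Bogomol'nyi operator `L_Q`. -/
def LQ (m : ℕ) (f : ℝ → ℂ) (r : ℝ) : ℂ :=
  deriv f r - ((((m : ℝ) + Atheta (fun s => (Q m s : ℂ)) r) / r : ℝ) : ℂ) * f r
    - ((2 * Atheta2 (fun s => (Q m s : ℂ)) f r / r : ℝ) : ℂ) * (Q m r : ℂ)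

end


open MeasureTheory Set Filter

lemma dom_int {E : Type*} [NormedAddCommGroup E] {f : ℝ → E} {g : ℝ → ℝ}
    (hf : ContinuousOn f (Ioi 0)) (hg : IntegrableOn g (Ioi 0))
    (h : ∀ r, 0 < r → ‖f r‖ ≤ g r) : IntegrableOn f (Ioi 0) := by
  refine Integrable.mono' hg (hf.aestronglyMeasurable measurableSet_Ioi) ?_
  exact (ae_restrict_iff' measurableSet_Ioi).2 (Eventually.of_forall fun r hr => h r hr)

lemma dom_le {E : Type*} [NormedAddCommGroup E] [NormedSpace ℝ E] {f : ℝ → E} {g : ℝ → ℝ}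
    (hg : IntegrableOn g (Ioi 0))
    (h : ∀ r, 0 < r → ‖f r‖ ≤ g r) : ‖∫ r in Ioi (0:ℝ), f r‖ ≤ ∫ r in Ioi (0:ℝ), g r :=
  norm_integral_le_of_norm_le hg
    ((ae_restrict_iff' measurableSet_Ioi).2 (Eventually.of_forall fun r hr => h r hr))

lemma cs_w {S : Set ℝ} (hS : MeasurableSet S) (hpos : S ⊆ Ioi 0) {f g : ℝ → ℝ}
    (hf : Continuous f) (hg : Continuous g)
    (hf2 : IntegrableOn (fun r => f r ^ 2 * r) S) (hg2 : IntegrableOn (fun r => g r ^ 2 * r) S) :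
    IntegrableOn (fun r => f r * g r * r) S ∧
    (∫ r in S, f r * g r * r) ^ 2 ≤ (∫ r in S, f r ^ 2 * r) * (∫ r in S, g r ^ 2 * r) := by
  have hi : IntegrableOn (fun r => f r * g r * r) S := by
    refine Integrable.mono' (hf2.add hg2) (by fun_prop) ?_
    refine (ae_restrict_iff' hS).2 (Eventually.of_forall fun r hr => ?_)
    have : 0 < r := hpos hr
    simp only [Pi.add_apply, Real.norm_eq_abs]
    rw [abs_mul, abs_of_pos this, ← add_mul]
    refine mul_le_mul_of_nonneg_right ?_ this.le
    rw [abs_le]; constructor <;> nlinarith [sq_nonneg (f r + g r), sq_nonneg (f r - g r)]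
  refine ⟨hi, ?_⟩
  have key : ∀ x : ℝ, 0 ≤ (∫ r in S, f r ^ 2 * r) * (x * x) + (-2 * ∫ r in S, f r * g r * r) * x
      + ∫ r in S, g r ^ 2 * r := by
    intro x
    have : (∫ r in S, f r ^ 2 * r) * (x * x) + (-2 * ∫ r in S, f r * g r * r) * x
      + ∫ r in S, g r ^ 2 * r = ∫ r in S, (x * f r - g r) ^ 2 * r := by
      have e : (fun r => (x * f r - g r) ^ 2 * r) = fun r =>
        ((x * x) * (f r ^ 2 * r) + (-2 * x) * (f r * g r * r)) + g r ^ 2 * r := by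
        funext r; ring
      rw [e, integral_add, integral_add, integral_const_mul, integral_const_mul]
      · ring
      · exact hf2.const_mul _
      · exact hi.const_mul _
      · exact (hf2.const_mul _).add (hi.const_mul _)
      · exact hg2
    rw [this]
    refine setIntegral_nonneg hS fun r hr => ?_
    have : 0 < r := hpos hr
    positivity
  have := discrim_le_zero key
  unfold discrim at this
  nlinarith

lemma cs_n {S : Set ℝ} (hS : MeasurableSet S) (hpos : S ⊆ Ioi 0) {f g : ℝ → ℂ}
    (hf : Continuous f) (hg : Continuous g)
    (hf2 : IntegrableOn (fun r => ‖f r‖ ^ 2 * r) S) (hg2 : IntegrableOn (fun r => ‖g r‖ ^ 2 * r) S)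
    {a b x : ℝ} (ha : ∫ r in S, ‖f r‖ ^ 2 * r ≤ a) (hb : ∫ r in S, ‖g r‖ ^ 2 * r ≤ b)
    (hx : 0 ≤ x) (hab : a * b ≤ x ^ 2) :
    ∫ r in S, ‖f r‖ * ‖g r‖ * r ≤ x := by
  have h := (cs_w hS hpos hf.norm hg.norm hf2 hg2).2
  have h1 : 0 ≤ ∫ r in S, ‖f r‖ ^ 2 * r :=
    setIntegral_nonneg hS fun r hr => by
      have : 0 < r := hpos hr
      positivity
  have h2 : 0 ≤ ∫ r in S, ‖g r‖ ^ 2 * r :=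
    setIntegral_nonneg hS fun r hr => by
      have : 0 < r := hpos hr
      positivity
  refine abs_le_of_sq_le_sq' ?_ hx |>.2
  calc _ ≤ _ := h
    _ ≤ a * b := mul_le_mul ha hb h2 (h1.trans ha)
    _ ≤ _ := hab

noncomputable def kap (s : ℝ) : ℝ := 4 * s / (1 + s ^ 2) ^ 2

lemma kap_cont : Continuous kap := by
  unfold kap
  refine Continuous.div (by fun_prop) (by fun_prop) fun x => by positivity

lemma kap_nonneg {s : ℝ} (hs : 0 < s) : 0 ≤ kap s := by unfold kap; positivity

lemma kap_int : IntegrableOn kap (Ioi 0) ∧ ∫ s in Ioi (0:ℝ), kap s = 2 := by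
  have hd : ∀ x ∈ Ici (0:ℝ), HasDerivAt (fun s : ℝ => -2 * (1 + s ^ 2)⁻¹) (kap x) x := by
    intro x _
    have h1 : HasDerivAt (fun s : ℝ => 1 + s ^ 2) (2 * x) x := by
      simpa using (hasDerivAt_pow 2 x).const_add 1
    have := (h1.inv (by positivity)).const_mul (-2)
    refine this.congr_deriv ?_
    unfold kap
    field_simp
    ring
  have hl : Tendsto (fun s : ℝ => -2 * (1 + s ^ 2)⁻¹) atTop (nhds 0) := by
    have : Tendsto (fun s : ℝ => (1 + s ^ 2)) atTop atTop :=
      tendsto_atTop_add_const_left _ _ (tendsto_pow_atTop (by norm_num))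
    simpa using this.inv_tendsto_atTop.const_mul (-2)
  have hn : ∀ x ∈ Ioi (0:ℝ), 0 ≤ kap x := fun x hx => kap_nonneg hx
  refine ⟨integrableOn_Ioi_deriv_of_nonneg (hd 0 (by simp)).continuousAt.continuousWithinAt
    (fun x hx => hd x (mem_Ici.2 (le_of_lt (mem_Ioi.1 hx)))) hn hl, ?_⟩
  rw [integral_Ioi_of_hasDerivAt_of_nonneg' hd hn hl]
  norm_num

lemma kap_dom {s a : ℝ} {x : ℝ} (hs : 0 < s) (ha : 0 ≤ a) (h1 : |x| ≤ a) (h2 : s ≤ 1 → |x| ≤ a * s ^ 4) :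
    |x| / s ^ 3 ≤ a * kap s := by
  unfold kap
  rw [div_le_iff₀ (by positivity)]
  have e : a * (4 * s / (1 + s ^ 2) ^ 2) * s ^ 3 = a * (4 * s ^ 4 / (1 + s ^ 2) ^ 2) := by ring
  rw [e]
  rcases le_total s 1 with h | h
  · refine (h2 h).trans (mul_le_mul_of_nonneg_left ?_ ha)
    rw [le_div_iff₀ (by positivity)]
    have : (1 + s ^ 2) ^ 2 ≤ 4 := by nlinarith [sq_nonneg s, mul_le_mul h h hs.le zero_le_one]
    nlinarith [pow_pos hs 4]
  · refine h1.trans (le_mul_of_one_le_right ha ?_)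
    rw [le_div_iff₀ (by positivity)]
    have : 1 ≤ s ^ 2 := by nlinarith
    nlinarith

noncomputable def Mf (g : ℝ → ℂ) (r : ℝ) : ℝ := (1 / 2) * ∫ s in (0:ℝ)..r, ‖g s‖ ^ 2 * s
noncomputable def Zf (m : ℕ) (g : ℝ → ℂ) (r : ℝ) : ℝ := 2 * m * Mf g r - Mf g r ^ 2
noncomputable def Vf (m : ℕ) (g : ℝ → ℂ) (r : ℝ) : ℝ := -2 * ∫ s in Ioi r, Zf m g s / s ^ 3
noncomputable def Pf (m : ℕ) (g : ℝ → ℂ) : ℝ :=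
  ∫ r in Ioi (0:ℝ), (4 * m * Mf g r ^ 2 - 8 / 3 * Mf g r ^ 3) / r ^ 3
noncomputable def Sf (m : ℕ) (g : ℝ → ℂ) : ℝ :=
  Pf m g + 1 / 2 * ∫ r in Ioi (0:ℝ), (‖g r‖ ^ 2) ^ 2 * r

structure Prof (m : ℕ) (B : ℝ) (g g1 : ℝ → ℂ) : Prop where
  cont1 : Continuous g1
  der : ∀ r, HasDerivAt g (g1 r) r
  int0 : IntegrableOn (fun r => ‖g r‖ ^ 2 * r) (Ioi 0)
  int1 : IntegrableOn (fun r => ‖g1 r‖ ^ 2 * r) (Ioi 0)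
  mass : ∫ r in Ioi (0:ℝ), ‖g r‖ ^ 2 * r = 4 * (m + 1)
  grad : ∫ r in Ioi (0:ℝ), ‖g1 r‖ ^ 2 * r ≤ B
  near : ∀ r, 0 ≤ r → r ≤ 1 → ‖g r‖ ≤ B * r
  sup : ∀ r, 0 ≤ r → ‖g r‖ ≤ B
  hB : 4 * ((m:ℝ) + 1) ≤ B

namespace Prof
variable {m : ℕ} {B : ℝ} {g g1 : ℝ → ℂ}

lemma cont (h : Prof m B g g1) : Continuous g :=
  continuous_iff_continuousAt.2 fun r => (h.der r).continuousAt

lemma B4 (h : Prof m B g g1) : 4 ≤ B := by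
  have := h.hB
  have h2 : (0:ℝ) ≤ m := by positivity
  linarith

lemma massB (h : Prof m B g g1) : ∫ r in Ioi (0:ℝ), ‖g r‖ ^ 2 * r ≤ B := h.mass.le.trans h.hB

lemma Mder (h : Prof m B g g1) (r : ℝ) : HasDerivAt (Mf g) (‖g r‖ ^ 2 * r / 2) r := by
  have hc : Continuous fun s => ‖g s‖ ^ 2 * s := by have := h.cont; fun_prop
  have := (intervalIntegral.integral_hasDerivAt_right (hc.intervalIntegrable 0 r)
    (hc.stronglyMeasurableAtFilter _ _) hc.continuousAt).const_mul (1/2 : ℝ)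
  refine this.congr_deriv ?_
  ring

lemma Mcont (h : Prof m B g g1) : Continuous (Mf g) :=
  continuous_iff_continuousAt.2 fun r => (h.Mder r).continuousAt

lemma M0 : Mf g 0 = 0 := by simp [Mf]

lemma Mnonneg {r : ℝ} (hr : 0 ≤ r) : 0 ≤ Mf g r := by
  unfold Mf
  have : 0 ≤ ∫ s in (0:ℝ)..r, ‖g s‖ ^ 2 * s :=
    intervalIntegral.integral_nonneg hr fun s hs => mul_nonneg (by positivity) hs.1
  positivity

lemma Mmono (h : Prof m B g g1) {r s : ℝ} (hr : 0 ≤ r) (hrs : r ≤ s) : Mf g r ≤ Mf g s := by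
  refine monotoneOn_of_deriv_nonneg (convex_Ici 0) h.Mcont.continuousOn
    (fun x _ => (h.Mder x).differentiableAt.differentiableWithinAt) ?_ hr (hr.trans hrs) hrs
  intro x hx
  rw [(h.Mder x).deriv]
  rw [interior_Ici] at hx
  have : 0 < x := hx
  positivity

lemma Mlim (h : Prof m B g g1) : Tendsto (Mf g) atTop (nhds (2 * ((m:ℝ) + 1))) := by
  have := (intervalIntegral_tendsto_integral_Ioi 0 h.int0 tendsto_id).const_mul (1/2 : ℝ)
  rw [h.mass] at this
  have e : 2 * ((m:ℝ) + 1) = 1 / 2 * (4 * (m + 1)) := by ring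
  rw [e]
  exact this

lemma Mle (h : Prof m B g g1) {r : ℝ} (hr : 0 ≤ r) : Mf g r ≤ 2 * ((m:ℝ) + 1) := by
  refine ge_of_tendsto h.Mlim ?_
  filter_upwards [eventually_ge_atTop r] with s hs
  exact h.Mmono hr hs

lemma Mnear (h : Prof m B g g1) {r : ℝ} (hr : 0 ≤ r) (hr1 : r ≤ 1) : Mf g r ≤ B ^ 2 * r ^ 4 := by
  have hc : Continuous fun s => ‖g s‖ ^ 2 * s := by have := h.cont; fun_prop
  have h1 : ∫ s in (0:ℝ)..r, ‖g s‖ ^ 2 * s ≤ ∫ s in (0:ℝ)..r, B ^ 2 * s ^ 3 := by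
    refine intervalIntegral.integral_mono_on hr (hc.intervalIntegrable _ _)
      ((by fun_prop : Continuous fun s : ℝ => B ^ 2 * s ^ 3).intervalIntegrable _ _) ?_
    intro s hs
    have := h.near s hs.1 (hs.2.trans hr1)
    have h2 : ‖g s‖ ^ 2 ≤ (B * s) ^ 2 := pow_le_pow_left₀ (norm_nonneg _) this 2
    nlinarith [hs.1, mul_le_mul_of_nonneg_right h2 hs.1]
  rw [intervalIntegral.integral_const_mul, integral_pow] at h1
  unfold Mf
  have : 0 ≤ B ^ 2 * r ^ 4 := by positivity
  norm_num at h1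
  linarith

lemma Mkap (h : Prof m B g g1) {r : ℝ} (hr : 0 < r) : Mf g r / r ^ 3 ≤ B ^ 2 * kap r := by
  have h0 : |Mf g r| = Mf g r := abs_of_nonneg (Mnonneg hr.le)
  rw [← h0]
  have h4 := h.B4
  refine kap_dom hr (by positivity) ?_ ?_
  · rw [h0]; have := h.Mle hr.le; have := h.hB; nlinarith
  · intro h1; rw [h0]; exact h.Mnear hr.le h1

lemma Mcube_cont (_h : Prof m B g g1) {f : ℝ → ℝ} (hf : Continuous f) :
    ContinuousOn (fun r => f r / r ^ 3) (Ioi 0) :=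
  hf.continuousOn.div (by fun_prop) fun x hx => by have : 0 < x := hx; positivity

lemma Zcont (h : Prof m B g g1) : Continuous (Zf m g) := by
  have := h.Mcont; unfold Zf; fun_prop

lemma Zabs (h : Prof m B g g1) {r : ℝ} (hr : 0 < r) : |Zf m g r / r ^ 3| ≤ B ^ 3 * kap r := by
  have h1 := h.Mkap hr
  have h2 := h.Mle hr.le
  have h3 := Mnonneg (g := g) hr.le
  have h4 := h.hB
  have hm : (0:ℝ) ≤ m := by positivity
  have e : Zf m g r / r ^ 3 = (2 * m - Mf g r) * (Mf g r / r ^ 3) := by unfold Zf; ring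
  have h5 : 0 ≤ Mf g r / r ^ 3 := by positivity
  rw [e, abs_mul, abs_of_nonneg h5]
  have h6 : |2 * (m:ℝ) - Mf g r| ≤ B := by rw [abs_le]; constructor <;> linarith
  calc _ ≤ B * (B ^ 2 * kap r) := mul_le_mul h6 h1 h5 (by linarith)
    _ = _ := by ring

lemma Zint (h : Prof m B g g1) : IntegrableOn (fun r => Zf m g r / r ^ 3) (Ioi 0) :=
  dom_int (h.Mcube_cont h.Zcont) (kap_int.1.const_mul (B ^ 3)) fun r hr => h.Zabs hr

lemma Vabs (h : Prof m B g g1) {r : ℝ} (hr : 0 ≤ r) : |Vf m g r| ≤ 4 * B ^ 3 := by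
  have hsub : Ioi r ⊆ Ioi (0:ℝ) := Ioi_subset_Ioi hr
  have h4 := h.B4
  unfold Vf
  rw [abs_mul]
  have h1 : |∫ s in Ioi r, Zf m g s / s ^ 3| ≤ ∫ s in Ioi r, B ^ 3 * kap s := by
    rw [← Real.norm_eq_abs]
    refine norm_integral_le_of_norm_le (IntegrableOn.mono_set (kap_int.1.const_mul _) hsub)
      ((ae_restrict_iff' measurableSet_Ioi).2 (Eventually.of_forall fun s hs => h.Zabs (hsub hs)))
  have h2 : ∫ s in Ioi r, B ^ 3 * kap s ≤ ∫ s in Ioi (0:ℝ), B ^ 3 * kap s := by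
    refine setIntegral_mono_set (kap_int.1.const_mul _) ?_ hsub.eventuallyLE
    refine (ae_restrict_iff' measurableSet_Ioi).2 (Eventually.of_forall fun s hs => ?_)
    have := kap_nonneg hs
    show 0 ≤ B ^ 3 * kap s
    positivity
  rw [integral_const_mul _ kap, integral_const_mul _ kap, kap_int.2] at h2
  rw [integral_const_mul] at h1
  norm_num
  linarith

lemma Veq (h : Prof m B g g1) {r : ℝ} (hr : 0 ≤ r) :
    Vf m g r = -2 * ((∫ s in Ioi (0:ℝ), Zf m g s / s ^ 3) - ∫ s in (0:ℝ)..r, Zf m g s / s ^ 3) := by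
  unfold Vf
  rw [intervalIntegral.integral_of_le hr, ← Ioc_union_Ioi_eq_Ioi hr, setIntegral_union]
  · ring
  · exact Ioc_disjoint_Ioi le_rfl
  · exact measurableSet_Ioi
  · exact h.Zint.mono_set Ioc_subset_Ioi_self
  · exact h.Zint.mono_set (Ioi_subset_Ioi hr)

lemma Vder (h : Prof m B g g1) {r : ℝ} (hr : 0 < r) :
    HasDerivAt (Vf m g) (2 * (Zf m g r / r ^ 3)) r := by
  have hc := h.Mcube_cont h.Zcont
  have hii : IntervalIntegrable (fun s => Zf m g s / s ^ 3) volume 0 r := by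
    rw [intervalIntegrable_iff_integrableOn_Ioc_of_le hr.le]
    exact h.Zint.mono_set Ioc_subset_Ioi_self
  have h1 := (((intervalIntegral.integral_hasDerivAt_right hii
    (hc.stronglyMeasurableAtFilter isOpen_Ioi r hr)
    (hc.continuousAt (Ioi_mem_nhds hr))).const_sub (∫ s in Ioi (0:ℝ), Zf m g s / s ^ 3)).const_mul (-2))
  have h2 : Vf m g =ᶠ[nhds r] fun r =>
      -2 * ((∫ s in Ioi (0:ℝ), Zf m g s / s ^ 3) - ∫ s in (0:ℝ)..r, Zf m g s / s ^ 3) := by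
    filter_upwards [Ioi_mem_nhds hr] with s hs using h.Veq (le_of_lt hs)
  refine (h1.congr_of_eventuallyEq h2).congr_deriv ?_
  ring

lemma Vcont (h : Prof m B g g1) : ContinuousOn (Vf m g) (Ioi 0) :=
  fun _ hr => (h.Vder hr).continuousAt.continuousWithinAt

lemma Vlim (h : Prof m B g g1) : Tendsto (Vf m g) atTop (nhds 0) := by
  have h1 := ((intervalIntegral_tendsto_integral_Ioi 0 h.Zint tendsto_id).const_sub
    (∫ s in Ioi (0:ℝ), Zf m g s / s ^ 3)).const_mul (-2)
  simp only [sub_self, mul_zero] at h1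
  refine h1.congr' ?_
  filter_upwards [eventually_ge_atTop 0] with r hr
  exact (h.Veq hr).symm

lemma ibpV (h : Prof m B g g1) {k k1 : ℝ → ℂ} (h' : Prof m B k k1) :
    IntegrableOn (fun r => Vf m g r * (‖k r‖ ^ 2 * r)) (Ioi 0) ∧
    IntegrableOn (fun r => Zf m g r * Mf k r / r ^ 3) (Ioi 0) ∧
    ∫ r in Ioi (0:ℝ), Vf m g r * (‖k r‖ ^ 2 * r) = -4 * ∫ r in Ioi (0:ℝ), Zf m g r * Mf k r / r ^ 3 := by
  have hk := h'.cont
  have h4 := h.B4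
  have i1 : IntegrableOn (fun r => Vf m g r * (‖k r‖ ^ 2 * r)) (Ioi 0) := by
    refine dom_int (h.Vcont.mul (by fun_prop)) (h'.int0.const_mul (4 * B ^ 3)) fun r hr => ?_
    rw [norm_mul, Real.norm_eq_abs, Real.norm_of_nonneg (by positivity)]
    exact mul_le_mul_of_nonneg_right (h.Vabs hr.le) (by positivity)
  have i2 : IntegrableOn (fun r => Zf m g r * Mf k r / r ^ 3) (Ioi 0) := by
    refine dom_int (h.Mcube_cont (h.Zcont.mul h'.Mcont)) ((kap_int.1.const_mul (B ^ 3)).const_mul B)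
      fun r hr => ?_
    have e : Zf m g r * Mf k r / r ^ 3 = Mf k r * (Zf m g r / r ^ 3) := by ring
    have h0 := Mnonneg (g := k) hr.le
    rw [e, norm_mul, Real.norm_eq_abs, Real.norm_eq_abs, abs_of_nonneg h0]
    refine mul_le_mul ?_ (h.Zabs hr) (abs_nonneg _) (by linarith)
    have := h'.Mle hr.le
    have := h.hB
    have hm : (0:ℝ) ≤ m := by positivity
    linarith
  refine ⟨i1, i2, ?_⟩
  have hd : ∀ x ∈ Ioi (0:ℝ), HasDerivAt (fun r => Vf m g r * Mf k r)
      ((1/2) * (Vf m g x * (‖k x‖ ^ 2 * x)) + 2 * (Zf m g x * Mf k x / x ^ 3)) x := by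
    intro x hx
    refine ((h.Vder hx).mul (h'.Mder x)).congr_deriv ?_
    ring
  have h0 : ContinuousWithinAt (fun r => Vf m g r * Mf k r) (Ici 0) 0 := by
    have hz : Tendsto (fun r => 4 * B ^ 3 * Mf k r) (nhdsWithin 0 (Ici 0)) (nhds 0) := by
      have : Tendsto (fun r => 4 * B ^ 3 * Mf k r) (nhds 0) (nhds (4 * B ^ 3 * Mf k 0)) :=
        (h'.Mcont.const_mul _).tendsto 0
      rw [M0, mul_zero] at this
      exact this.mono_left nhdsWithin_le_nhds
    unfold ContinuousWithinAt
    simp only [M0, mul_zero]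
    refine squeeze_zero_norm' ?_ hz
    filter_upwards [self_mem_nhdsWithin] with r hr
    rw [norm_mul, Real.norm_eq_abs, Real.norm_of_nonneg (Mnonneg hr)]
    exact mul_le_mul_of_nonneg_right (h.Vabs hr) (Mnonneg hr)
  have hl : Tendsto (fun r => Vf m g r * Mf k r) atTop (nhds 0) := by
    simpa using h.Vlim.mul h'.Mlim
  have := integral_Ioi_of_hasDerivAt_of_tendsto h0 hd ((i1.const_mul _).add (i2.const_mul _)) hl
  rw [integral_add (i1.const_mul _) (i2.const_mul _), integral_const_mul, integral_const_mul, M0] at this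
  linarith

end Prof

open MeasureTheory Set Filter

noncomputable def Wf (m : ℕ) (g : ℝ → ℂ) (r : ℝ) : ℝ := Vf m g r - ‖g r‖ ^ 2

structure Close (B q : ℝ) (g k : ℝ → ℂ) : Prop where
  q0 : 0 ≤ q
  q1 : q ≤ 1
  near : ∀ r, 0 ≤ r → r ≤ 1 → ‖g r - k r‖ ≤ B * q ^ 4 * r
  l2 : ∫ r in Ioi (0:ℝ), ‖g r - k r‖ ^ 2 * r ≤ B * q ^ 4
  sup : ∀ r, 0 ≤ r → ‖g r - k r‖ ≤ B * q

lemma norm_sq_diff (a b : ℂ) : |‖a‖ ^ 2 - ‖b‖ ^ 2| ≤ ‖a - b‖ * (‖a‖ + ‖b‖) := by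
  have : ‖a‖ ^ 2 - ‖b‖ ^ 2 = (‖a‖ - ‖b‖) * (‖a‖ + ‖b‖) := by ring
  rw [this, abs_mul, abs_of_nonneg (by positivity : 0 ≤ ‖a‖ + ‖b‖)]
  exact mul_le_mul_of_nonneg_right (abs_norm_sub_norm_le a b) (by positivity)

namespace Prof
variable {m : ℕ} {B q : ℝ} {g g1 k k1 : ℝ → ℂ}

lemma wint (h : Prof m B g g1) (h' : Prof m B k k1) :
    IntegrableOn (fun r => ‖g r - k r‖ ^ 2 * r) (Ioi 0) := by
  have := h.cont
  have := h'.cont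
  refine dom_int (by fun_prop) ((h.int0.const_mul 2).add (h'.int0.const_mul 2)) fun r hr => ?_
  rw [Real.norm_of_nonneg (by positivity)]
  have h1 : ‖g r - k r‖ ^ 2 ≤ 2 * ‖g r‖ ^ 2 + 2 * ‖k r‖ ^ 2 := by
    have h2 : ‖g r - k r‖ ^ 2 ≤ (‖g r‖ + ‖k r‖) ^ 2 :=
      pow_le_pow_left₀ (norm_nonneg _) (norm_sub_le _ _) 2
    nlinarith [sq_nonneg (‖g r‖ - ‖k r‖)]
  have := mul_le_mul_of_nonneg_right h1 hr.le
  simp only [Pi.add_apply]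
  linarith

lemma gkint (h : Prof m B g g1) (h' : Prof m B k k1) :
    IntegrableOn (fun r => ‖g r‖ * ‖k r‖ * r) (Ioi 0) :=
  (cs_w measurableSet_Ioi le_rfl h.cont.norm h'.cont.norm h.int0 h'.int0).1

lemma gkle (h : Prof m B g g1) (h' : Prof m B k k1) :
    ∫ r in Ioi (0:ℝ), ‖g r‖ * ‖k r‖ * r ≤ B :=
  cs_n measurableSet_Ioi le_rfl h.cont h'.cont h.int0 h'.int0 h.massB h'.massB
    (by linarith [h.B4]) (by nlinarith)

lemma g1kint (h : Prof m B g g1) (h' : Prof m B k k1) :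
    IntegrableOn (fun r => ‖g1 r‖ * ‖k r‖ * r) (Ioi 0) :=
  (cs_w measurableSet_Ioi le_rfl h.cont1.norm h'.cont.norm h.int1 h'.int0).1

lemma g1kle (h : Prof m B g g1) (h' : Prof m B k k1) :
    ∫ r in Ioi (0:ℝ), ‖g1 r‖ * ‖k r‖ * r ≤ B :=
  cs_n measurableSet_Ioi le_rfl h.cont1 h'.cont h.int1 h'.int0 h.grad h'.massB
    (by linarith [h.B4]) (by nlinarith)

lemma g1k1int (h : Prof m B g g1) (h' : Prof m B k k1) :
    IntegrableOn (fun r => ‖g1 r‖ * ‖k1 r‖ * r) (Ioi 0) :=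
  (cs_w measurableSet_Ioi le_rfl h.cont1.norm h'.cont1.norm h.int1 h'.int1).1

lemma g1k1le (h : Prof m B g g1) (h' : Prof m B k k1) :
    ∫ r in Ioi (0:ℝ), ‖g1 r‖ * ‖k1 r‖ * r ≤ B :=
  cs_n measurableSet_Ioi le_rfl h.cont1 h'.cont1 h.int1 h'.int1 h.grad h'.grad
    (by linarith [h.B4]) (by nlinarith)

lemma wkint (h : Prof m B g g1) (h' : Prof m B k k1) :
    IntegrableOn (fun r => ‖g r - k r‖ * ‖k r‖ * r) (Ioi 0) :=
  (cs_w measurableSet_Ioi le_rfl (h.cont.sub h'.cont).norm h'.cont.norm (h.wint h') h'.int0).1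

lemma wkle (h : Prof m B g g1) (h' : Prof m B k k1) (c : Close B q g k) :
    ∫ r in Ioi (0:ℝ), ‖g r - k r‖ * ‖k r‖ * r ≤ B * q ^ 2 :=
  cs_n measurableSet_Ioi le_rfl (h.cont.sub h'.cont) h'.cont (h.wint h') h'.int0 c.l2 h'.massB
    (by have := h.B4; positivity) (by nlinarith)

lemma wgint (h : Prof m B g g1) (h' : Prof m B k k1) :
    IntegrableOn (fun r => ‖g r - k r‖ * ‖g r‖ * r) (Ioi 0) :=
  (cs_w measurableSet_Ioi le_rfl (h.cont.sub h'.cont).norm h.cont.norm (h.wint h') h.int0).1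

lemma wgle (h : Prof m B g g1) (h' : Prof m B k k1) (c : Close B q g k) :
    ∫ r in Ioi (0:ℝ), ‖g r - k r‖ * ‖g r‖ * r ≤ B * q ^ 2 :=
  cs_n measurableSet_Ioi le_rfl (h.cont.sub h'.cont) h.cont (h.wint h') h.int0 c.l2 h.massB
    (by have := h.B4; positivity) (by nlinarith)

lemma Mdiff (h : Prof m B g g1) (h' : Prof m B k k1) (r : ℝ) :
    Mf g r - Mf k r = (1/2) * ∫ s in (0:ℝ)..r, (‖g s‖ ^ 2 - ‖k s‖ ^ 2) * s := by
  have := h.cont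
  have := h'.cont
  unfold Mf
  rw [← mul_sub, ← intervalIntegral.integral_sub]
  · congr 2
    funext s
    ring
  · exact Continuous.intervalIntegrable (by fun_prop) _ _
  · exact Continuous.intervalIntegrable (by fun_prop) _ _

lemma dM (h : Prof m B g g1) (h' : Prof m B k k1) (c : Close B q g k) {r : ℝ} (hr : 0 ≤ r) :
    |Mf g r - Mf k r| ≤ B * q ^ 2 := by
  rw [h.Mdiff h', abs_mul, intervalIntegral.integral_of_le hr]
  have i : IntegrableOn (fun r => ‖g r - k r‖ * ‖g r‖ * r + ‖g r - k r‖ * ‖k r‖ * r) (Ioi 0) :=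
    (h.wgint h').add (h.wkint h')
  have h1 : |∫ s in Ioc 0 r, (‖g s‖ ^ 2 - ‖k s‖ ^ 2) * s| ≤
      ∫ s in Ioc 0 r, (‖g s - k s‖ * ‖g s‖ * s + ‖g s - k s‖ * ‖k s‖ * s) := by
    rw [← Real.norm_eq_abs]
    refine norm_integral_le_of_norm_le (i.mono_set Ioc_subset_Ioi_self) ?_
    refine (ae_restrict_iff' measurableSet_Ioc).2 (Eventually.of_forall fun s hs => ?_)
    rw [norm_mul, Real.norm_eq_abs, Real.norm_of_nonneg hs.1.le, ← add_mul, ← mul_add]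
    exact mul_le_mul_of_nonneg_right (norm_sq_diff _ _) hs.1.le
  have h2 : ∫ s in Ioc 0 r, (‖g s - k s‖ * ‖g s‖ * s + ‖g s - k s‖ * ‖k s‖ * s) ≤
      ∫ s in Ioi (0:ℝ), (‖g s - k s‖ * ‖g s‖ * s + ‖g s - k s‖ * ‖k s‖ * s) := by
    refine setIntegral_mono_set i ?_ Ioc_subset_Ioi_self.eventuallyLE
    refine (ae_restrict_iff' measurableSet_Ioi).2 (Eventually.of_forall fun s hs => ?_)
    have : 0 < s := hs
    show 0 ≤ ‖g s - k s‖ * ‖g s‖ * s + ‖g s - k s‖ * ‖k s‖ * s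
    positivity
  rw [integral_add (h.wgint h') (h.wkint h')] at h2
  have h3 := h.wkle h' c
  have h4 := h.wgle h' c
  norm_num
  linarith

lemma dMnear (h : Prof m B g g1) (h' : Prof m B k k1) (c : Close B q g k) {r : ℝ} (hr : 0 ≤ r)
    (hr1 : r ≤ 1) : |Mf g r - Mf k r| ≤ B ^ 2 * q ^ 4 * r ^ 4 := by
  have := h.cont
  have := h'.cont
  have hB := h.B4
  rw [h.Mdiff h', abs_mul]
  have h1 : |∫ s in (0:ℝ)..r, (‖g s‖ ^ 2 - ‖k s‖ ^ 2) * s| ≤ ∫ s in (0:ℝ)..r, 2 * B ^ 2 * q ^ 4 * s ^ 3 := by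
    rw [← Real.norm_eq_abs]
    refine intervalIntegral.norm_integral_le_of_norm_le hr ?_
      (Continuous.intervalIntegrable (by fun_prop) _ _)
    refine Eventually.of_forall fun s hs => ?_
    rw [norm_mul, Real.norm_eq_abs, Real.norm_of_nonneg hs.1.le]
    have h2 := norm_sq_diff (g s) (k s)
    have h3 := c.near s hs.1.le (hs.2.trans hr1)
    have h4 := h.near s hs.1.le (hs.2.trans hr1)
    have h5 := h'.near s hs.1.le (hs.2.trans hr1)
    have h6 : ‖g s - k s‖ * (‖g s‖ + ‖k s‖) ≤ B * q ^ 4 * s * (B * s + B * s) :=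
      mul_le_mul h3 (add_le_add h4 h5) (by positivity) (by have := hs.1; positivity)
    have := mul_le_mul_of_nonneg_right (h2.trans h6) hs.1.le
    linarith
  rw [intervalIntegral.integral_const_mul, integral_pow] at h1
  have : 0 ≤ B ^ 2 * q ^ 4 * r ^ 4 := by positivity
  norm_num at h1 ⊢
  linarith

lemma dMkap (h : Prof m B g g1) (h' : Prof m B k k1) (c : Close B q g k) {r : ℝ} (hr : 0 < r) :
    |Mf g r - Mf k r| / r ^ 3 ≤ B ^ 2 * q ^ 2 * kap r := by
  have hB := h.B4
  have hq : q ^ 4 ≤ q ^ 2 := pow_le_pow_of_le_one c.q0 c.q1 (by norm_num)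
  refine kap_dom hr (by positivity) ((h.dM h' c hr.le).trans ?_) fun h1 =>
    (h.dMnear h' c hr.le h1).trans ?_
  · have : B ≤ B ^ 2 := by nlinarith
    gcongr
  · gcongr

lemma dZ (h : Prof m B g g1) (h' : Prof m B k k1) (c : Close B q g k) {r : ℝ} (hr : 0 < r) :
    |Zf m g r / r ^ 3 - Zf m k r / r ^ 3| ≤ B ^ 3 * q ^ 2 * kap r := by
  have e : Zf m g r / r ^ 3 - Zf m k r / r ^ 3 =
    (2 * m - (Mf g r + Mf k r)) * ((Mf g r - Mf k r) / r ^ 3) := by unfold Zf; ring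
  have h2 := h.Mle hr.le
  have h3 := Mnonneg (g := g) hr.le
  have h2' := h'.Mle hr.le
  have h3' := Mnonneg (g := k) hr.le
  have h4 := h.hB
  have hm : (0:ℝ) ≤ m := by positivity
  have h6 : |2 * (m:ℝ) - (Mf g r + Mf k r)| ≤ B := by rw [abs_le]; constructor <;> linarith
  have h1 := h.dMkap h' c hr
  rw [e, abs_mul, abs_div, abs_of_pos (by positivity : 0 < r ^ 3)]
  calc _ ≤ B * (B ^ 2 * q ^ 2 * kap r) := mul_le_mul h6 h1 (by positivity) (by linarith)
    _ = _ := by ring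

lemma dV (h : Prof m B g g1) (h' : Prof m B k k1) (c : Close B q g k) {r : ℝ} (hr : 0 < r) :
    |Vf m g r - Vf m k r| ≤ 4 * B ^ 3 * q ^ 2 := by
  have hsub : Ioi r ⊆ Ioi (0:ℝ) := Ioi_subset_Ioi hr.le
  have hB := h.B4
  unfold Vf
  rw [← mul_sub, ← integral_sub (h.Zint.mono_set hsub) (h'.Zint.mono_set hsub), abs_mul]
  have h1 : |∫ s in Ioi r, (Zf m g s / s ^ 3 - Zf m k s / s ^ 3)| ≤
      ∫ s in Ioi r, B ^ 3 * q ^ 2 * kap s := by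
    rw [← Real.norm_eq_abs]
    refine norm_integral_le_of_norm_le (IntegrableOn.mono_set (kap_int.1.const_mul _) hsub)
      ((ae_restrict_iff' measurableSet_Ioi).2 (Eventually.of_forall fun s hs => h.dZ h' c (hsub hs)))
  have h2 : ∫ s in Ioi r, B ^ 3 * q ^ 2 * kap s ≤ ∫ s in Ioi (0:ℝ), B ^ 3 * q ^ 2 * kap s := by
    refine setIntegral_mono_set (kap_int.1.const_mul _) ?_ hsub.eventuallyLE
    refine (ae_restrict_iff' measurableSet_Ioi).2 (Eventually.of_forall fun s hs => ?_)
    have := kap_nonneg hs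
    show 0 ≤ B ^ 3 * q ^ 2 * kap s
    positivity
  rw [integral_const_mul _ kap, integral_const_mul _ kap, kap_int.2] at h2
  rw [integral_const_mul] at h1
  norm_num
  linarith

lemma drho (h : Prof m B g g1) (h' : Prof m B k k1) (c : Close B q g k) {r : ℝ} (hr : 0 < r) :
    |‖g r‖ ^ 2 - ‖k r‖ ^ 2| ≤ 2 * B ^ 2 * q := by
  have hB := h.B4
  have h2 := norm_sq_diff (g r) (k r)
  have h3 := c.sup r hr.le
  have h6 : ‖g r - k r‖ * (‖g r‖ + ‖k r‖) ≤ B * q * (B + B) :=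
    mul_le_mul h3 (add_le_add (h.sup r hr.le) (h'.sup r hr.le)) (by positivity)
      (by have := c.q0; positivity)
  linarith

lemma dW (h : Prof m B g g1) (h' : Prof m B k k1) (c : Close B q g k) {r : ℝ} (hr : 0 < r) :
    |Wf m g r - Wf m k r| ≤ 6 * B ^ 3 * q := by
  have h1 := h.dV h' c hr
  have h2 := h.drho h' c hr
  have hB := h.B4
  have e : Wf m g r - Wf m k r = (Vf m g r - Vf m k r) - (‖g r‖ ^ 2 - ‖k r‖ ^ 2) := by
    unfold Wf; ring
  rw [e]
  refine (abs_sub _ _).trans ?_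
  have hq : q ^ 2 ≤ q := by nlinarith [c.q0, c.q1]
  have h3 : 4 * B ^ 3 * q ^ 2 ≤ 4 * B ^ 3 * q := by gcongr
  have h4 : 2 * B ^ 2 * q ≤ 2 * B ^ 3 * q := by
    have : B ^ 2 ≤ B ^ 3 := pow_le_pow_right₀ (by linarith) (by norm_num)
    have := c.q0
    gcongr
  linarith

lemma Wabs (h : Prof m B g g1) {r : ℝ} (hr : 0 < r) : |Wf m g r| ≤ 5 * B ^ 3 := by
  have h1 := h.Vabs hr.le
  have hB := h.B4
  have h2 : ‖g r‖ ^ 2 ≤ B ^ 2 := pow_le_pow_left₀ (norm_nonneg _) (h.sup r hr.le) 2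
  have : B ^ 2 ≤ B ^ 3 := pow_le_pow_right₀ (by linarith) (by norm_num)
  unfold Wf
  refine (abs_sub _ _).trans ?_
  rw [abs_of_nonneg (by positivity : 0 ≤ ‖g r‖ ^ 2)]
  linarith

lemma Wcont (h : Prof m B g g1) : ContinuousOn (Wf m g) (Ioi 0) := by
  have := h.cont
  exact h.Vcont.sub (by fun_prop)

lemma Pint (h : Prof m B g g1) :
    IntegrableOn (fun r => (4 * m * Mf g r ^ 2 - 8 / 3 * Mf g r ^ 3) / r ^ 3) (Ioi 0) := by
  have hc := h.Mcont
  have hB := h.B4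
  refine dom_int (h.Mcube_cont (by fun_prop)) (kap_int.1.const_mul (3 * B ^ 2 * B ^ 2)) fun r hr => ?_
  have e : (4 * m * Mf g r ^ 2 - 8 / 3 * Mf g r ^ 3) / r ^ 3 =
    (4 * m * Mf g r - 8 / 3 * Mf g r ^ 2) * (Mf g r / r ^ 3) := by ring
  have h2 := h.Mle hr.le
  have h3 := Mnonneg (g := g) hr.le
  have h4 := h.hB
  have hm : (0:ℝ) ≤ m := by positivity
  have h5 := h.Mkap hr
  have h6 : 0 ≤ Mf g r / r ^ 3 := by positivity
  rw [e, norm_mul, Real.norm_eq_abs, Real.norm_of_nonneg h6, mul_assoc (3 * B ^ 2)]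
  refine mul_le_mul ?_ h5 h6 (by positivity)
  have hMB : Mf g r ≤ B := by linarith
  rw [abs_le]; constructor <;> nlinarith

lemma r4int (h : Prof m B g g1) : IntegrableOn (fun r => (‖g r‖ ^ 2) ^ 2 * r) (Ioi 0) := by
  have := h.cont
  refine dom_int (by fun_prop) (h.int0.const_mul (B ^ 2)) fun r hr => ?_
  rw [Real.norm_of_nonneg (by positivity)]
  have h2 : ‖g r‖ ^ 2 ≤ B ^ 2 := pow_le_pow_left₀ (norm_nonneg _) (h.sup r hr.le) 2
  calc _ = ‖g r‖ ^ 2 * (‖g r‖ ^ 2 * r) := by ring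
    _ ≤ _ := mul_le_mul_of_nonneg_right h2 (by positivity)

lemma dS (h : Prof m B g g1) (h' : Prof m B k k1) (c : Close B q g k) :
    |Sf m g - Sf m k| ≤ 8 * B ^ 4 * q := by
  have hB := h.B4
  have hq0 := c.q0
  have h1 : |Pf m g - Pf m k| ≤ 3 * B ^ 2 * (B ^ 2 * q ^ 2) * 2 := by
    unfold Pf
    rw [← integral_sub h.Pint h'.Pint, ← Real.norm_eq_abs, ← kap_int.2, ← integral_const_mul]
    refine dom_le (kap_int.1.const_mul _) fun r hr => ?_
    have e : (4 * m * Mf g r ^ 2 - 8 / 3 * Mf g r ^ 3) / r ^ 3 - (4 * m * Mf k r ^ 2 - 8 / 3 * Mf k r ^ 3) / r ^ 3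
      = (4 * m * (Mf g r + Mf k r) - 8 / 3 * (Mf g r ^ 2 + Mf g r * Mf k r + Mf k r ^ 2)) *
        ((Mf g r - Mf k r) / r ^ 3) := by ring
    have h2 := h.Mle hr.le
    have h3 := Mnonneg (g := g) hr.le
    have h2' := h'.Mle hr.le
    have h3' := Mnonneg (g := k) hr.le
    have h4 := h.hB
    have hm : (0:ℝ) ≤ m := by positivity
    have h5 := h.dMkap h' c hr
    rw [e, norm_mul, Real.norm_eq_abs, Real.norm_eq_abs, abs_div, abs_of_pos (by positivity : 0 < r ^ 3), mul_assoc (3 * B ^ 2)]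
    refine mul_le_mul ?_ h5 (by positivity) (by positivity)
    have hMB : Mf g r ≤ B / 2 := by linarith
    have hMB' : Mf k r ≤ B / 2 := by linarith
    have a1 : 4 * m * (Mf g r + Mf k r) ≤ B * B :=
      mul_le_mul (by linarith) (by linarith) (by linarith) (by linarith)
    have a0 : 0 ≤ 4 * m * (Mf g r + Mf k r) := by positivity
    have a2 : Mf g r ^ 2 ≤ (B / 2) ^ 2 := pow_le_pow_left₀ h3 hMB 2
    have a3 : Mf k r ^ 2 ≤ (B / 2) ^ 2 := pow_le_pow_left₀ h3' hMB' 2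
    have a4 : Mf g r * Mf k r ≤ (B / 2) * (B / 2) := mul_le_mul hMB hMB' h3' (by linarith)
    have a5 : 0 ≤ Mf g r * Mf k r := by positivity
    rw [abs_le]; constructor <;> nlinarith [sq_nonneg (Mf g r), sq_nonneg (Mf k r)]
  have h2 : |(∫ r in Ioi (0:ℝ), (‖g r‖ ^ 2) ^ 2 * r) - ∫ r in Ioi (0:ℝ), (‖k r‖ ^ 2) ^ 2 * r| ≤
      2 * B ^ 2 * q * (B + B) := by
    have h3 : 2 * B ^ 2 * q * (∫ r in Ioi (0:ℝ), (‖g r‖ ^ 2 * r + ‖k r‖ ^ 2 * r)) ≤ 2 * B ^ 2 * q * (B + B) := by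
      rw [integral_add h.int0 h'.int0]
      have := h.massB
      have := h'.massB
      gcongr
    refine le_trans ?_ h3
    rw [← integral_sub h.r4int h'.r4int, ← Real.norm_eq_abs, ← integral_const_mul]
    refine dom_le ((h.int0.add h'.int0).const_mul _) fun r hr => ?_
    have e : (‖g r‖ ^ 2) ^ 2 * r - (‖k r‖ ^ 2) ^ 2 * r =
      (‖g r‖ ^ 2 - ‖k r‖ ^ 2) * (‖g r‖ ^ 2 * r + ‖k r‖ ^ 2 * r) := by ring
    have p : 0 ≤ ‖g r‖ ^ 2 * r + ‖k r‖ ^ 2 * r := by positivity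
    rw [e, norm_mul, Real.norm_eq_abs, Real.norm_of_nonneg p]
    exact mul_le_mul_of_nonneg_right (h.drho h' c hr) p
  have e : Sf m g - Sf m k = (Pf m g - Pf m k) + 1 / 2 *
    ((∫ r in Ioi (0:ℝ), (‖g r‖ ^ 2) ^ 2 * r) - ∫ r in Ioi (0:ℝ), (‖k r‖ ^ 2) ^ 2 * r) := by
    unfold Sf; ring
  rw [e]
  refine (abs_add_le _ _).trans ?_
  rw [abs_mul]
  norm_num
  have hq : q ^ 2 ≤ q := by nlinarith [c.q0, c.q1]
  have a3 : 6 * B ^ 4 * q ^ 2 ≤ 6 * B ^ 4 * q := by gcongr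
  have a4 : 2 * B ^ 3 * q ≤ 2 * B ^ 4 * q := by
    have : B ^ 3 ≤ B ^ 4 := pow_le_pow_right₀ (by linarith) (by norm_num)
    gcongr
  linarith

end Prof

open MeasureTheory Set Filter

noncomputable def pot (m : ℕ) (g k : ℝ → ℂ) (r : ℝ) : ℂ :=
  (((m:ℝ) ^ 2 / r ^ 2 + Wf m g r : ℝ) : ℂ) * (g r * (starRingEnd ℂ) (k r)) * (r : ℂ)

lemma re_polar (a b : ℂ) : (a * (starRingEnd ℂ) b).re = (‖a‖ ^ 2 + ‖b‖ ^ 2 - ‖a - b‖ ^ 2) / 2 := by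
  rw [Complex.sq_norm, Complex.sq_norm, Complex.sq_norm, Complex.normSq_sub]
  ring

lemma iadd {f g : ℝ → ℝ} {S : Set ℝ} (hf : IntegrableOn f S) (hg : IntegrableOn g S) :
    IntegrableOn (fun r => f r + g r) S := hf.add hg

namespace Prof
variable {m : ℕ} {B q : ℝ} {g g1 k k1 : ℝ → ℂ}

lemma mle (h : Prof m B g g1) : (m:ℝ) ≤ B := by
  have := h.hB
  have hm : (0:ℝ) ≤ m := by positivity
  linarith

lemma dM3int (h : Prof m B g g1) (h' : Prof m B k k1) (c : Close B q g k) :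
    IntegrableOn (fun r => (Mf g r - Mf k r) ^ 3 / r ^ 3) (Ioi 0) ∧
    |∫ r in Ioi (0:ℝ), (Mf g r - Mf k r) ^ 3 / r ^ 3| ≤ 2 * B ^ 4 * q ^ 6 := by
  have h1 := h.Mcont
  have h2 := h'.Mcont
  have hb : ∀ r, 0 < r → ‖(Mf g r - Mf k r) ^ 3 / r ^ 3‖ ≤ B ^ 4 * q ^ 6 * kap r := by
    intro r hr
    have e : ‖(Mf g r - Mf k r) ^ 3 / r ^ 3‖ = |Mf g r - Mf k r| ^ 2 * (|Mf g r - Mf k r| / r ^ 3) := by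
      rw [Real.norm_eq_abs, abs_div, abs_of_pos (by positivity : 0 < r ^ 3), abs_pow]; ring
    rw [e]
    have h3 : |Mf g r - Mf k r| ^ 2 ≤ (B * q ^ 2) ^ 2 := pow_le_pow_left₀ (abs_nonneg _) (h.dM h' c hr.le) 2
    calc _ ≤ (B * q ^ 2) ^ 2 * (B ^ 2 * q ^ 2 * kap r) :=
          mul_le_mul h3 (h.dMkap h' c hr) (by positivity) (by positivity)
      _ = _ := by ring
  refine ⟨dom_int (h.Mcube_cont (by fun_prop)) (kap_int.1.const_mul _) hb, ?_⟩
  have := dom_le (kap_int.1.const_mul _) hb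
  rw [integral_const_mul, kap_int.2] at this
  rw [← Real.norm_eq_abs]
  linarith

lemma key (h : Prof m B g g1) (h' : Prof m B k k1) (c : Close B q g k) :
    |(∫ r in Ioi (0:ℝ), (Wf m g r - Wf m k r) * (g r * (starRingEnd ℂ) (k r)).re * r) +
      (Sf m g - Sf m k)| ≤ 5 * B ^ 4 * q ^ 5 := by
  have hB := h.B4
  have hq0 := c.q0
  obtain ⟨a1, b1, e1⟩ := h.ibpV h
  obtain ⟨a2, b2, e2⟩ := h.ibpV h'
  obtain ⟨a3, b3, e3⟩ := h'.ibpV h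
  obtain ⟨a4, b4, e4⟩ := h'.ibpV h'
  obtain ⟨d1, d2⟩ := h.dM3int h' c
  have hwb : ∀ r, 0 < r → ‖(Wf m g r - Wf m k r) * (‖g r - k r‖ ^ 2 * r)‖ ≤
      6 * B ^ 3 * q * (‖g r - k r‖ ^ 2 * r) := by
    intro r hr
    rw [norm_mul, Real.norm_eq_abs, Real.norm_of_nonneg (by positivity : 0 ≤ ‖g r - k r‖ ^ 2 * r)]
    exact mul_le_mul_of_nonneg_right (h.dW h' c hr) (by positivity)
  have wi : IntegrableOn (fun r => (Wf m g r - Wf m k r) * (‖g r - k r‖ ^ 2 * r)) (Ioi 0) := by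
    have := h.cont
    have := h'.cont
    exact dom_int ((h.Wcont.sub h'.Wcont).mul (by fun_prop)) ((h.wint h').const_mul _) hwb
  have wl : |∫ r in Ioi (0:ℝ), (Wf m g r - Wf m k r) * (‖g r - k r‖ ^ 2 * r)| ≤ 6 * B ^ 3 * q * (B * q ^ 4) := by
    have := dom_le ((h.wint h').const_mul _) hwb
    rw [integral_const_mul] at this
    rw [← Real.norm_eq_abs]
    refine this.trans (mul_le_mul_of_nonneg_left c.l2 (by positivity))
  have E1 : ∫ r in Ioi (0:ℝ), (Wf m g r - Wf m k r) * (g r * (starRingEnd ℂ) (k r)).re * r =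
      ∫ r in Ioi (0:ℝ), ((1/2) * (Vf m g r * (‖g r‖ ^ 2 * r)) + (1/2) * (Vf m g r * (‖k r‖ ^ 2 * r))
        + (-1/2) * (Vf m k r * (‖g r‖ ^ 2 * r)) + (-1/2) * (Vf m k r * (‖k r‖ ^ 2 * r))
        + (-1/2) * ((‖g r‖ ^ 2) ^ 2 * r) + (1/2) * ((‖k r‖ ^ 2) ^ 2 * r)
        + (-1/2) * ((Wf m g r - Wf m k r) * (‖g r - k r‖ ^ 2 * r))) := by
    congr 1
    funext r
    rw [re_polar]
    unfold Wf
    ring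
  have E2 : (∫ r in Ioi (0:ℝ), ((-2) * (Zf m g r * Mf g r / r ^ 3) + (-2) * (Zf m g r * Mf k r / r ^ 3) +
      2 * (Zf m k r * Mf g r / r ^ 3) + 2 * (Zf m k r * Mf k r / r ^ 3))) =
      ∫ r in Ioi (0:ℝ), ((-1) * ((4 * m * Mf g r ^ 2 - 8 / 3 * Mf g r ^ 3) / r ^ 3) +
        1 * ((4 * m * Mf k r ^ 2 - 8 / 3 * Mf k r ^ 3) / r ^ 3) + (-2/3) * ((Mf g r - Mf k r) ^ 3 / r ^ 3)) := by
    congr 1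
    funext r
    unfold Zf
    ring
  rw [integral_add (iadd (iadd (b1.const_mul _) (b2.const_mul _)) (b3.const_mul _)) (b4.const_mul _),
    integral_add (iadd (b1.const_mul _) (b2.const_mul _)) (b3.const_mul _),
    integral_add (b1.const_mul _) (b2.const_mul _),
    integral_add (iadd (h.Pint.const_mul _) (h'.Pint.const_mul _)) (d1.const_mul _),
    integral_add (h.Pint.const_mul _) (h'.Pint.const_mul _)] at E2
  simp only [integral_const_mul] at E2
  rw [integral_add (iadd (iadd (iadd (iadd (iadd (a1.const_mul _) (a2.const_mul _)) (a3.const_mul _)) (a4.const_mul _)) (h.r4int.const_mul _)) (h'.r4int.const_mul _)) (wi.const_mul _),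
    integral_add (iadd (iadd (iadd (iadd (a1.const_mul _) (a2.const_mul _)) (a3.const_mul _)) (a4.const_mul _)) (h.r4int.const_mul _)) (h'.r4int.const_mul _),
    integral_add (iadd (iadd (iadd (a1.const_mul _) (a2.const_mul _)) (a3.const_mul _)) (a4.const_mul _)) (h.r4int.const_mul _),
    integral_add (iadd (iadd (a1.const_mul _) (a2.const_mul _)) (a3.const_mul _)) (a4.const_mul _),
    integral_add (iadd (a1.const_mul _) (a2.const_mul _)) (a3.const_mul _),
    integral_add (a1.const_mul _) (a2.const_mul _)] at E1
  simp only [integral_const_mul] at E1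
  rw [e1, e2, e3, e4] at E1
  have : (∫ r in Ioi (0:ℝ), (Wf m g r - Wf m k r) * (g r * (starRingEnd ℂ) (k r)).re * r) +
      (Sf m g - Sf m k) = (-2/3) * (∫ r in Ioi (0:ℝ), (Mf g r - Mf k r) ^ 3 / r ^ 3) +
      (-1/2) * ∫ r in Ioi (0:ℝ), (Wf m g r - Wf m k r) * (‖g r - k r‖ ^ 2 * r) := by
    rw [E1]
    unfold Sf Pf
    linarith
  rw [this]
  refine (abs_add_le _ _).trans ?_
  rw [abs_mul, abs_mul]
  have hq : q ^ 6 ≤ q ^ 5 := pow_le_pow_of_le_one c.q0 c.q1 (by norm_num)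
  have a5 : 2 * B ^ 4 * q ^ 6 ≤ 2 * B ^ 4 * q ^ 5 := by gcongr
  have a6 : 0 ≤ B ^ 4 * q ^ 5 := by positivity
  norm_num [abs_div]
  linarith

lemma near_div (h : Prof m B g g1) {a r : ℝ} (hr : 0 < r) (ha : 0 ≤ a) (hn : r ≤ 1 → a ≤ q * r)
    (h1 : 0 ≤ q) (h' : Prof m B k k1) :
    a * ‖k r‖ / r ≤ q * B * kap r + a * ‖k r‖ * r := by
  have hB := h.B4
  have hk := kap_nonneg hr
  rcases le_total r 1 with h2 | h2
  · have h3 : a * ‖k r‖ ≤ (q * r) * (B * r) := mul_le_mul (hn h2) (h'.near r hr.le h2) (norm_nonneg _) (by positivity)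
    have h4 : r ≤ kap r := by
      unfold kap
      rw [le_div_iff₀ (by positivity)]
      have : (1 + r ^ 2) ^ 2 ≤ 4 := by nlinarith [sq_nonneg r, mul_le_mul h2 h2 hr.le zero_le_one]
      nlinarith
    have h5 : a * ‖k r‖ / r ≤ q * B * r := by
      rw [div_le_iff₀ hr]; nlinarith
    have h6 : q * B * r ≤ q * B * kap r := by gcongr
    have : 0 ≤ a * ‖k r‖ * r := by positivity
    linarith
  · have h3 : a * ‖k r‖ / r ≤ a * ‖k r‖ * r := by
      rw [div_le_iff₀ hr]
      have : 0 ≤ a * ‖k r‖ := by positivity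
      have : a * ‖k r‖ * 1 ≤ a * ‖k r‖ * (r * r) := by
        refine mul_le_mul_of_nonneg_left ?_ this
        nlinarith
      linarith
    have : 0 ≤ q * B * kap r := by positivity
    linarith

lemma pot_cont (h : Prof m B g g1) (h' : Prof m B k k1) : ContinuousOn (pot m g k) (Ioi 0) := by
  have := h.cont
  have := h'.cont
  unfold pot
  refine ContinuousOn.mul (ContinuousOn.mul ?_ (by fun_prop)) (by fun_prop)
  refine Complex.continuous_ofReal.comp_continuousOn (ContinuousOn.add ?_ h.Wcont)
  exact continuousOn_const.div (by fun_prop) fun x hx => by have : 0 < x := hx; positivity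

lemma pot_norm (h : Prof m B g g1) (h' : Prof m B k k1) {r : ℝ} (hr : 0 < r) :
    ‖pot m g k r‖ ≤ B ^ 4 * kap r + 6 * B ^ 3 * (‖g r‖ * ‖k r‖ * r) := by
  have hB := h.B4
  have hm := h.mle
  have hm0 : (0:ℝ) ≤ m := by positivity
  have h1 := h.near_div hr (norm_nonneg (g r)) (h.near r hr.le) (by linarith) h'
  have e : ‖pot m g k r‖ = |(m:ℝ) ^ 2 / r ^ 2 + Wf m g r| * (‖g r‖ * ‖k r‖ * r) := by
    unfold pot
    rw [norm_mul, norm_mul, norm_mul, Complex.norm_real, Complex.norm_real, RCLike.norm_conj,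
      Real.norm_eq_abs, Real.norm_of_nonneg hr.le]
    ring
  rw [e]
  have h2 : |(m:ℝ) ^ 2 / r ^ 2 + Wf m g r| ≤ (m:ℝ) ^ 2 / r ^ 2 + 5 * B ^ 3 := by
    refine (abs_add_le _ _).trans ?_
    rw [abs_of_nonneg (by positivity : 0 ≤ (m:ℝ) ^ 2 / r ^ 2)]
    linarith [h.Wabs hr]
  have p : 0 ≤ ‖g r‖ * ‖k r‖ * r := by positivity
  have h3 : (m:ℝ) ^ 2 * (‖g r‖ * ‖k r‖ / r) ≤ B ^ 2 * (B * B * kap r + ‖g r‖ * ‖k r‖ * r) := by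
    refine mul_le_mul (pow_le_pow_left₀ hm0 hm 2) h1 (by positivity) (by positivity)
  have h4 : B ^ 2 * (‖g r‖ * ‖k r‖ * r) ≤ B ^ 3 * (‖g r‖ * ‖k r‖ * r) := by
    refine mul_le_mul_of_nonneg_right (pow_le_pow_right₀ (by linarith) (by norm_num)) p
  calc _ ≤ ((m:ℝ) ^ 2 / r ^ 2 + 5 * B ^ 3) * (‖g r‖ * ‖k r‖ * r) := mul_le_mul_of_nonneg_right h2 p
    _ = (m:ℝ) ^ 2 * (‖g r‖ * ‖k r‖ / r) + 5 * B ^ 3 * (‖g r‖ * ‖k r‖ * r) := by field_simp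
    _ ≤ _ := by linarith

lemma pot_int (h : Prof m B g g1) (h' : Prof m B k k1) : IntegrableOn (pot m g k) (Ioi 0) ∧
    ∫ r in Ioi (0:ℝ), ‖pot m g k r‖ ≤ 8 * B ^ 4 := by
  have i : IntegrableOn (fun r => B ^ 4 * kap r + 6 * B ^ 3 * (‖g r‖ * ‖k r‖ * r)) (Ioi 0) :=
    (kap_int.1.const_mul _).add ((h.gkint h').const_mul _)
  have hi := dom_int (h.pot_cont h') i fun r hr => h.pot_norm h' hr
  have hB := h.B4
  refine ⟨hi, ?_⟩
  have h1 : ∫ r in Ioi (0:ℝ), ‖pot m g k r‖ ≤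
      ∫ r in Ioi (0:ℝ), (B ^ 4 * kap r + 6 * B ^ 3 * (‖g r‖ * ‖k r‖ * r)) :=
    setIntegral_mono_on hi.norm i measurableSet_Ioi fun r hr => h.pot_norm h' hr
  rw [integral_add (kap_int.1.const_mul _) ((h.gkint h').const_mul _), integral_const_mul,
    integral_const_mul, kap_int.2] at h1
  have h2 : 6 * B ^ 3 * ∫ r in Ioi (0:ℝ), ‖g r‖ * ‖k r‖ * r ≤ 6 * B ^ 3 * B :=
    mul_le_mul_of_nonneg_left (h.gkle h') (by positivity)
  linarith

lemma pot_diff (h : Prof m B g g1) (h' : Prof m B k k1) (c : Close B q g k) :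
    ∫ r in Ioi (0:ℝ), ‖pot m g k r - pot m k k r‖ ≤ 14 * B ^ 4 * q := by
  have hB := h.B4
  have hm := h.mle
  have hm0 : (0:ℝ) ≤ m := by positivity
  have hq0 := c.q0
  have hb : ∀ r ∈ Ioi (0:ℝ), ‖pot m g k r - pot m k k r‖ ≤ B ^ 4 * q * kap r +
      6 * B ^ 3 * (‖g r - k r‖ * ‖k r‖ * r) + 6 * B ^ 3 * q * (‖g r‖ * ‖k r‖ * r) := by
    intro r hr
    have hr : 0 < r := hr
    have e : pot m g k r - pot m k k r =
      (((m:ℝ) ^ 2 / r ^ 2 + Wf m k r : ℝ) : ℂ) * ((g r - k r) * (starRingEnd ℂ) (k r)) * (r : ℂ) +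
      ((Wf m g r - Wf m k r : ℝ) : ℂ) * (g r * (starRingEnd ℂ) (k r)) * (r : ℂ) := by
      unfold pot; push_cast; ring
    rw [e]
    refine (norm_add_le _ _).trans ?_
    rw [norm_mul, norm_mul, norm_mul, norm_mul, norm_mul, norm_mul, Complex.norm_real, Complex.norm_real,
      Complex.norm_real, RCLike.norm_conj, Real.norm_eq_abs, Real.norm_eq_abs, Real.norm_eq_abs, abs_of_pos hr]
    have h1 := h.near_div hr (norm_nonneg (g r - k r)) (c.near r hr.le) (by positivity) h'
    have h2 : |(m:ℝ) ^ 2 / r ^ 2 + Wf m k r| ≤ (m:ℝ) ^ 2 / r ^ 2 + 5 * B ^ 3 := by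
      refine (abs_add_le _ _).trans ?_
      rw [abs_of_nonneg (by positivity : 0 ≤ (m:ℝ) ^ 2 / r ^ 2)]
      linarith [h'.Wabs hr]
    have p : 0 ≤ ‖g r - k r‖ * ‖k r‖ * r := by positivity
    have p2 : 0 ≤ ‖g r‖ * ‖k r‖ * r := by positivity
    have h3 : (m:ℝ) ^ 2 * (‖g r - k r‖ * ‖k r‖ / r) ≤
        B ^ 2 * (B * q ^ 4 * B * kap r + ‖g r - k r‖ * ‖k r‖ * r) := by
      refine mul_le_mul (pow_le_pow_left₀ hm0 hm 2) h1 (by positivity) (by positivity)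
    have h4 : B ^ 2 * (‖g r - k r‖ * ‖k r‖ * r) ≤ B ^ 3 * (‖g r - k r‖ * ‖k r‖ * r) := by
      refine mul_le_mul_of_nonneg_right (pow_le_pow_right₀ (by linarith) (by norm_num)) p
    have h5 : |Wf m g r - Wf m k r| * (‖g r‖ * ‖k r‖ * r) ≤ 6 * B ^ 3 * q * (‖g r‖ * ‖k r‖ * r) :=
      mul_le_mul_of_nonneg_right (h.dW h' c hr) p2
    have h6 : |(m:ℝ) ^ 2 / r ^ 2 + Wf m k r| * (‖g r - k r‖ * ‖k r‖ * r) ≤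
        (m:ℝ) ^ 2 * (‖g r - k r‖ * ‖k r‖ / r) + 5 * B ^ 3 * (‖g r - k r‖ * ‖k r‖ * r) := by
      calc _ ≤ ((m:ℝ) ^ 2 / r ^ 2 + 5 * B ^ 3) * (‖g r - k r‖ * ‖k r‖ * r) := mul_le_mul_of_nonneg_right h2 p
        _ = _ := by field_simp
    have h7 : B ^ 4 * q ^ 4 * kap r ≤ B ^ 4 * q * kap r := by
      have := kap_nonneg hr
      have : q ^ 4 ≤ q := by
        simpa using pow_le_pow_of_le_one c.q0 c.q1 (by norm_num : 1 ≤ 4)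
      gcongr
    linarith
  have i : IntegrableOn (fun r => B ^ 4 * q * kap r +
      6 * B ^ 3 * (‖g r - k r‖ * ‖k r‖ * r) + 6 * B ^ 3 * q * (‖g r‖ * ‖k r‖ * r)) (Ioi 0) :=
    ((kap_int.1.const_mul _).add ((h.wkint h').const_mul _)).add ((h.gkint h').const_mul _)
  have h1 := setIntegral_mono_on ((h.pot_int h').1.sub (h'.pot_int h').1).norm i measurableSet_Ioi hb
  rw [integral_add (iadd (kap_int.1.const_mul _) ((h.wkint h').const_mul _)) ((h.gkint h').const_mul _),
    integral_add (kap_int.1.const_mul _) ((h.wkint h').const_mul _), integral_const_mul,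
    integral_const_mul, integral_const_mul, kap_int.2] at h1
  have h2 : 6 * B ^ 3 * q * ∫ r in Ioi (0:ℝ), ‖g r‖ * ‖k r‖ * r ≤ 6 * B ^ 3 * q * B :=
    mul_le_mul_of_nonneg_left (h.gkle h') (by positivity)
  have h3 : 6 * B ^ 3 * ∫ r in Ioi (0:ℝ), ‖g r - k r‖ * ‖k r‖ * r ≤ 6 * B ^ 3 * (B * q ^ 2) :=
    mul_le_mul_of_nonneg_left (h.wkle h' c) (by positivity)
  have h4 : 6 * B ^ 4 * q ^ 2 ≤ 6 * B ^ 4 * q := by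
    have : q ^ 2 ≤ q := by nlinarith [c.q0, c.q1]
    gcongr
  refine h1.trans ?_
  linarith

end Prof

open MeasureTheory Set Filter

noncomputable def Ff (m : ℕ) (g g1 : ℝ → ℂ) : ℝ :=
  (∫ r in Ioi (0:ℝ), ‖g1 r‖ ^ 2 * r) +
    ∫ r in Ioi (0:ℝ), ((m:ℝ) ^ 2 / r ^ 2 + Wf m g r) * (‖g r‖ ^ 2 * r)

noncomputable def fd (m : ℕ) (g g1 : ℝ → ℂ) (r : ℝ) : ℂ :=
  g1 r - (((m - Mf g r) / r : ℝ) : ℂ) * g r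

lemma pot_self (m : ℕ) (g : ℝ → ℂ) (r : ℝ) :
    pot m g g r = ((((m:ℝ) ^ 2 / r ^ 2 + Wf m g r) * (‖g r‖ ^ 2 * r) : ℝ) : ℂ) := by
  unfold pot
  rw [Complex.mul_conj, Complex.normSq_eq_norm_sq]
  push_cast
  ring

lemma normsq_sub_real (a b : ℂ) (y : ℝ) :
    ‖a - (y : ℂ) * b‖ ^ 2 = ‖a‖ ^ 2 - 2 * y * (a * (starRingEnd ℂ) b).re + y ^ 2 * ‖b‖ ^ 2 := by
  rw [Complex.sq_norm, Complex.sq_norm, Complex.sq_norm]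
  simp [Complex.normSq_apply]
  ring

lemma hasDerivAt_normsq {g g1 : ℝ → ℂ} {r : ℝ} (h : HasDerivAt g (g1 r) r) :
    HasDerivAt (fun s => ‖g s‖ ^ 2) (2 * (g1 r * (starRingEnd ℂ) (g r)).re) r := by
  have := h.norm_sq
  convert this using 1
  simp [Complex.inner]

namespace Prof
variable {m : ℕ} {B q : ℝ} {g g1 k k1 : ℝ → ℂ}

lemma Ff_eq (h : Prof m B g g1) : (∫ r in Ioi (0:ℝ), pot m g g r) =
    ((Ff m g g1 - ∫ r in Ioi (0:ℝ), ‖g1 r‖ ^ 2 * r : ℝ) : ℂ) := by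
  simp only [pot_self]
  rw [integral_complex_ofReal]
  unfold Ff
  congr 1
  ring

lemma g0 (h : Prof m B g g1) : g 0 = 0 := by
  have := h.near 0 le_rfl zero_le_one
  simpa using this

lemma yabs (h : Prof m B g g1) {r : ℝ} (hr : 0 ≤ r) : |(m:ℝ) - Mf g r| ≤ B := by
  have h1 := h.Mle hr
  have h2 := Mnonneg (g := g) hr
  have h3 := h.hB
  have hm : (0:ℝ) ≤ m := by positivity
  rw [abs_le]; constructor <;> linarith

lemma rho_div (h : Prof m B g g1) {r : ℝ} (hr : 0 < r) :
    ‖g r‖ ^ 2 / r ≤ B ^ 2 * kap r + ‖g r‖ ^ 2 * r := by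
  have h1 := h.near_div hr (norm_nonneg (g r)) (h.near r hr.le) (by linarith [h.B4]) h
  have e : ‖g r‖ ^ 2 = ‖g r‖ * ‖g r‖ := by ring
  rw [e]
  linarith

lemma rho_div_int (h : Prof m B g g1) : IntegrableOn (fun r => ‖g r‖ ^ 2 / r) (Ioi 0) := by
  have hc := h.cont
  refine dom_int ?_ (iadd (kap_int.1.const_mul (B^2)) h.int0) fun r hr => ?_
  · exact ContinuousOn.div (by fun_prop) (by fun_prop) fun x hx => (ne_of_gt hx)
  · rw [Real.norm_of_nonneg (by positivity)]
    exact h.rho_div hr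

lemma fd_sq (_h : Prof m B g g1) {r : ℝ} (hr : 0 < r) : ‖fd m g g1 r‖ ^ 2 * r =
    ‖g1 r‖ ^ 2 * r - (m - Mf g r) * (2 * (g1 r * (starRingEnd ℂ) (g r)).re) +
      (m - Mf g r) ^ 2 * (‖g r‖ ^ 2 / r) := by
  unfold fd
  rw [normsq_sub_real]
  field_simp

lemma fd_cont (h : Prof m B g g1) : ContinuousOn (fd m g g1) (Ioi 0) := by
  have := h.cont
  have := h.cont1
  have := h.Mcont
  unfold fd
  refine ContinuousOn.sub (by fun_prop) (ContinuousOn.mul ?_ (by fun_prop))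
  refine Complex.continuous_ofReal.comp_continuousOn ?_
  exact ContinuousOn.div (by fun_prop) (by fun_prop) fun x hx => (ne_of_gt hx)

lemma fd_le (h : Prof m B g g1) {r : ℝ} (hr : 0 < r) : ‖fd m g g1 r‖ ^ 2 * r ≤
    2 * (‖g1 r‖ ^ 2 * r) + 2 * B ^ 2 * (‖g r‖ ^ 2 / r) := by
  have h1 : ‖fd m g g1 r‖ ≤ ‖g1 r‖ + B / r * ‖g r‖ := by
    unfold fd
    refine (norm_sub_le _ _).trans ?_
    rw [norm_mul, Complex.norm_real, Real.norm_eq_abs, abs_div, abs_of_pos hr]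
    have := h.yabs hr.le
    gcongr
  have h2 : ‖fd m g g1 r‖ ^ 2 ≤ 2 * ‖g1 r‖ ^ 2 + 2 * (B / r * ‖g r‖) ^ 2 := by
    have := pow_le_pow_left₀ (norm_nonneg _) h1 2
    nlinarith [sq_nonneg (‖g1 r‖ - B / r * ‖g r‖)]
  have h3 := mul_le_mul_of_nonneg_right h2 hr.le
  have e : (2 * ‖g1 r‖ ^ 2 + 2 * (B / r * ‖g r‖) ^ 2) * r =
    2 * (‖g1 r‖ ^ 2 * r) + 2 * B ^ 2 * (‖g r‖ ^ 2 / r) := by field_simp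
  linarith

lemma fd_int (h : Prof m B g g1) : IntegrableOn (fun r => ‖fd m g g1 r‖ ^ 2 * r) (Ioi 0) := by
  refine dom_int ?_ (iadd (h.int1.const_mul 2) (h.rho_div_int.const_mul (2 * B ^ 2))) fun r hr => ?_
  · exact (h.fd_cont.norm.pow 2).mul (by fun_prop)
  · rw [Real.norm_of_nonneg (by positivity)]
    exact h.fd_le hr

lemma rho_lim (h : Prof m B g g1) : Tendsto (fun r => ‖g r‖ ^ 2) atTop (nhds 0) := by
  have hc := h.cont
  have hc1 := h.cont1
  have hs : Ioi (1:ℝ) ⊆ Ioi 0 := Ioi_subset_Ioi zero_le_one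
  refine tendsto_zero_of_hasDerivAt_of_integrableOn_Ioi (a := 1)
    (f' := fun r => 2 * (g1 r * (starRingEnd ℂ) (g r)).re)
    (fun x _ => hasDerivAt_normsq (h.der x)) ?_ ?_
  · refine Integrable.mono' (IntegrableOn.mono_set ((h.g1kint h).const_mul 2) hs) ?_ ?_
    · refine Continuous.aestronglyMeasurable ?_
      exact continuous_const.mul (Complex.continuous_re.comp (hc1.mul (Complex.continuous_conj.comp hc)))
    · refine (ae_restrict_iff' measurableSet_Ioi).2 (Eventually.of_forall fun r hr => ?_)
      have hr : 1 < r := hr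
      rw [norm_mul, Real.norm_eq_abs, Real.norm_eq_abs, abs_two]
      have h1 := Complex.abs_re_le_norm (g1 r * (starRingEnd ℂ) (g r))
      rw [norm_mul, RCLike.norm_conj] at h1
      have : 0 ≤ ‖g1 r‖ * ‖g r‖ := by positivity
      nlinarith
  · refine Integrable.mono' (h.int0.mono_set hs) ?_ ?_
    · exact (hc.norm.pow 2).aestronglyMeasurable
    · refine (ae_restrict_iff' measurableSet_Ioi).2 (Eventually.of_forall fun r hr => ?_)
      have hr : 1 < r := hr
      rw [Real.norm_of_nonneg (by positivity)]
      nlinarith [sq_nonneg ‖g r‖]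

lemma energy_id (h : Prof m B g g1) :
    ∫ r in Ioi (0:ℝ), ‖fd m g g1 r‖ ^ 2 * r = Ff m g g1 + Sf m g := by
  obtain ⟨a1, b1, e1⟩ := h.ibpV h
  have hB := h.B4
  have hMc := h.Mcont
  have hc := h.cont
  set Φ : ℝ → ℝ := fun r => -((m - Mf g r) * ‖g r‖ ^ 2) + (-2 * m * Mf g r ^ 2 + 2 / 3 * Mf g r ^ 3) / r ^ 2 with hΦ
  have hCM : ∀ r, 0 < r → |Φ r| ≤ B * ‖g r‖ ^ 2 + 3 * B ^ 2 * (Mf g r / r ^ 2) := by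
    intro r hr
    have h1 := h.Mle hr.le
    have h2 := Mnonneg (g := g) hr.le
    have h3 := h.hB
    have hm : (0:ℝ) ≤ m := by positivity
    have h4 := h.yabs hr.le
    have h5 : |-2 * m * Mf g r + 2 / 3 * Mf g r ^ 2| ≤ 3 * B ^ 2 := by
      rw [abs_le]; constructor <;> nlinarith
    have e : Φ r = -((m - Mf g r) * ‖g r‖ ^ 2) + (-2 * m * Mf g r + 2 / 3 * Mf g r ^ 2) * (Mf g r / r ^ 2) := by
      simp only [hΦ]; ring
    rw [e]
    refine (abs_add_le _ _).trans ?_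
    rw [abs_neg, abs_mul, abs_mul, abs_of_nonneg (by positivity : 0 ≤ ‖g r‖ ^ 2),
      abs_of_nonneg (by positivity : 0 ≤ Mf g r / r ^ 2)]
    have := mul_le_mul_of_nonneg_right h4 (by positivity : 0 ≤ ‖g r‖ ^ 2)
    have := mul_le_mul_of_nonneg_right h5 (by positivity : 0 ≤ Mf g r / r ^ 2)
    linarith
  have hΦ0 : Φ 0 = 0 := by simp [hΦ, h.g0]
  have hcont : ContinuousWithinAt Φ (Ici 0) 0 := by
    rw [ContinuousWithinAt, hΦ0]
    have hl : Tendsto (fun r : ℝ => (B ^ 3 + 3 * B ^ 4) * r ^ 2) (nhdsWithin 0 (Ici 0)) (nhds 0) := by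
      have : Tendsto (fun r : ℝ => (B ^ 3 + 3 * B ^ 4) * r ^ 2) (nhds 0) (nhds ((B ^ 3 + 3 * B ^ 4) * 0 ^ 2)) :=
        Continuous.tendsto (by fun_prop) 0
      simp only [ne_eq, OfNat.ofNat_ne_zero, not_false_eq_true, zero_pow, mul_zero] at this
      exact this.mono_left nhdsWithin_le_nhds
    refine squeeze_zero_norm' ?_ hl
    have h1 : ∀ᶠ r : ℝ in nhdsWithin 0 (Ici 0), r < 1 := nhdsWithin_le_nhds (Iio_mem_nhds zero_lt_one)
    filter_upwards [h1, self_mem_nhdsWithin] with r hr1 hr0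
    rcases (show (0:ℝ) ≤ r from hr0).eq_or_lt with h0 | h0
    · rw [← h0, hΦ0]; simp
    · rw [Real.norm_eq_abs]
      refine (hCM r h0).trans ?_
      have h2 := h.near r h0.le hr1.le
      have h3 := h.Mnear h0.le hr1.le
      have h4 : ‖g r‖ ^ 2 ≤ (B * r) ^ 2 := pow_le_pow_left₀ (norm_nonneg _) h2 2
      have h5 : Mf g r / r ^ 2 ≤ B ^ 2 * r ^ 2 := by
        rw [div_le_iff₀ (by positivity)]; linarith
      have h6 : 3 * B ^ 2 * (Mf g r / r ^ 2) ≤ 3 * B ^ 2 * (B ^ 2 * r ^ 2) := by gcongr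
      nlinarith
  have hlim : Tendsto Φ atTop (nhds 0) := by
    have hl : Tendsto (fun r : ℝ => B * ‖g r‖ ^ 2 + 3 * B ^ 2 * (B / r ^ 2)) atTop (nhds 0) := by
      have h1 := h.rho_lim.const_mul B
      have h2 : Tendsto (fun r : ℝ => B / r ^ 2) atTop (nhds 0) :=
        tendsto_const_nhds.div_atTop (tendsto_pow_atTop (by norm_num))
      have := h1.add (h2.const_mul (3 * B ^ 2))
      simpa using this
    refine squeeze_zero_norm' ?_ hl
    filter_upwards [eventually_gt_atTop 0] with r hr
    rw [Real.norm_eq_abs]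
    refine (hCM r hr).trans ?_
    have h1 := h.Mle hr.le
    have h3 := h.hB
    have hm : (0:ℝ) ≤ m := by positivity
    have : Mf g r ≤ B := by linarith
    gcongr
  set E : ℝ → ℝ := fun r => ‖g1 r‖ ^ 2 * r + (m:ℝ) ^ 2 * (‖g r‖ ^ 2 / r) + (-1/2) * ((‖g r‖ ^ 2) ^ 2 * r)
    + 1 * ((4 * m * Mf g r ^ 2 - 8 / 3 * Mf g r ^ 3) / r ^ 3) + (-4) * (Zf m g r * Mf g r / r ^ 3) with hE
  have iE : IntegrableOn E (Ioi 0) := iadd (iadd (iadd (iadd h.int1 (h.rho_div_int.const_mul _))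
    (h.r4int.const_mul _)) (h.Pint.const_mul _)) (b1.const_mul _)
  have hder : ∀ r ∈ Ioi (0:ℝ), HasDerivAt Φ (‖fd m g g1 r‖ ^ 2 * r - E r) r := by
    intro r hr
    have hr : 0 < r := hr
    have hM := h.Mder r
    have hρ := hasDerivAt_normsq (h.der r)
    have d1 := ((hM.const_sub (m:ℝ)).mul hρ).neg
    have d2 := (((hM.pow 2).const_mul (-2 * (m:ℝ))).add ((hM.pow 3).const_mul (2/3))).div
      (hasDerivAt_pow 2 r) (by positivity)
    refine (d1.add d2).congr_deriv ?_
    simp only [hE, Pi.add_apply, Pi.pow_apply, Pi.mul_apply]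
    rw [h.fd_sq hr]
    unfold Zf
    generalize (g1 r * (starRingEnd ℂ) (g r)).re = X
    generalize ‖g r‖ = a
    generalize Mf g r = M
    field_simp
    ring
  have I := integral_Ioi_of_hasDerivAt_of_tendsto hcont hder (h.fd_int.sub iE) hlim
  rw [hΦ0, integral_sub h.fd_int iE, sub_zero, sub_eq_zero] at I
  rw [I]
  simp only [hE]
  rw [integral_add (iadd (iadd (iadd h.int1 (h.rho_div_int.const_mul _))
    (h.r4int.const_mul _)) (h.Pint.const_mul _)) (b1.const_mul _),
    integral_add (iadd (iadd h.int1 (h.rho_div_int.const_mul _))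
    (h.r4int.const_mul _)) (h.Pint.const_mul _), integral_add (iadd h.int1 (h.rho_div_int.const_mul _))
    (h.r4int.const_mul _), integral_add h.int1 (h.rho_div_int.const_mul _)]
  simp only [integral_const_mul]
  rw [← e1]
  have e2 : ∫ r in Ioi (0:ℝ), ((m:ℝ) ^ 2 / r ^ 2 + Wf m g r) * (‖g r‖ ^ 2 * r) =
      ∫ r in Ioi (0:ℝ), ((m:ℝ) ^ 2 * (‖g r‖ ^ 2 / r) + Vf m g r * (‖g r‖ ^ 2 * r) + (-1) * ((‖g r‖ ^ 2) ^ 2 * r)) := by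
    refine setIntegral_congr_fun measurableSet_Ioi fun r hr => ?_
    have hr : 0 < r := hr
    simp only [Wf]
    field_simp
    ring
  rw [integral_add (iadd (h.rho_div_int.const_mul _) a1) (h.r4int.const_mul _),
    integral_add (h.rho_div_int.const_mul _) a1, integral_const_mul, integral_const_mul] at e2
  unfold Ff Sf Pf
  rw [e2]
  ring

end Prof

open MeasureTheory Set Filter

noncomputable def CI (R : ℝ) (f : ℝ → ℂ) : ℂ := ∫ r in (0:ℝ)..R, ((1 - r / R : ℝ) : ℂ) * f r

noncomputable def pr (g k : ℝ → ℂ) (r : ℝ) : ℂ := g r * (starRingEnd ℂ) (k r) * (r : ℂ)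

lemma iint {R : ℝ} (hR : 0 < R) {f : ℝ → ℂ} (hf : IntegrableOn f (Ioi 0)) :
    IntervalIntegrable f volume 0 R := by
  rw [intervalIntegrable_iff_integrableOn_Ioc_of_le hR.le]
  exact hf.mono_set Ioc_subset_Ioi_self

lemma chi_iint {R : ℝ} {f : ℝ → ℂ} (hf : IntervalIntegrable f volume 0 R) :
    IntervalIntegrable (fun r => ((1 - r / R : ℝ) : ℂ) * f r) volume 0 R :=
  hf.continuousOn_mul (by fun_prop)

lemma chi_norm {R r : ℝ} (hR : 0 < R) (hr : r ∈ Ioc 0 R) (z : ℂ) :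
    ‖((1 - r / R : ℝ) : ℂ) * z‖ ≤ ‖z‖ := by
  rw [norm_mul, Complex.norm_real, Real.norm_eq_abs]
  have h1 : r / R ≤ 1 := (div_le_one hR).2 hr.2
  have h2 : 0 ≤ r / R := div_nonneg hr.1.le hR.le
  have : |1 - r / R| ≤ 1 := by rw [abs_le]; constructor <;> linarith
  exact mul_le_of_le_one_left (norm_nonneg _) this

lemma CI_le {R : ℝ} (hR : 0 < R) {f : ℝ → ℂ} (hf : IntegrableOn f (Ioi 0)) :
    ‖CI R f‖ ≤ ∫ r in Ioi (0:ℝ), ‖f r‖ := by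
  unfold CI
  rw [intervalIntegral.integral_of_le hR.le]
  have h1 : ‖∫ r in Ioc 0 R, ((1 - r / R : ℝ) : ℂ) * f r‖ ≤ ∫ r in Ioc 0 R, ‖f r‖ := by
    refine norm_integral_le_of_norm_le (hf.mono_set Ioc_subset_Ioi_self).norm ?_
    exact (ae_restrict_iff' measurableSet_Ioc).2 (Eventually.of_forall fun r hr => chi_norm hR hr _)
  refine h1.trans (setIntegral_mono_set hf.norm (Eventually.of_forall fun r => norm_nonneg _) ?_)
  exact Ioc_subset_Ioi_self.eventuallyLE

lemma int_le {R : ℝ} (hR : 0 < R) {f : ℝ → ℂ} (hf : IntegrableOn f (Ioi 0)) :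
    ‖∫ r in (0:ℝ)..R, f r‖ ≤ ∫ r in Ioi (0:ℝ), ‖f r‖ := by
  rw [intervalIntegral.integral_of_le hR.le]
  refine (norm_integral_le_integral_norm _).trans
    (setIntegral_mono_set hf.norm (Eventually.of_forall fun r => norm_nonneg _) ?_)
  exact Ioc_subset_Ioi_self.eventuallyLE

lemma CI_tendsto {f : ℝ → ℂ} (hf : IntegrableOn f (Ioi 0)) :
    Tendsto (fun R => CI R f) atTop (nhds (∫ r in Ioi (0:ℝ), f r)) := by
  have h1 : Tendsto (fun R : ℝ => ∫ r in Ioi (0:ℝ), (Ioc 0 R).indicator (fun r => ((1 - r / R : ℝ) : ℂ) * f r) r)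
      atTop (nhds (∫ r in Ioi (0:ℝ), f r)) := by
    refine tendsto_integral_filter_of_dominated_convergence (fun r => ‖f r‖) ?_ ?_ hf.norm ?_
    · filter_upwards with R
      refine AEStronglyMeasurable.indicator ?_ measurableSet_Ioc
      exact AEStronglyMeasurable.mul (Continuous.aestronglyMeasurable (by fun_prop)) hf.aestronglyMeasurable
    · filter_upwards [eventually_gt_atTop 0] with R hR
      filter_upwards with r
      by_cases h : r ∈ Ioc 0 R
      · rw [indicator_of_mem h]; exact chi_norm hR h _
      · rw [indicator_of_notMem h]; simp
    · refine (ae_restrict_iff' measurableSet_Ioi).2 (Eventually.of_forall fun r hr => ?_)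
      have hr : 0 < r := hr
      have h2 : Tendsto (fun R : ℝ => ((1 - r / R : ℝ) : ℂ) * f r) atTop (nhds (f r)) := by
        have h3 : Tendsto (fun R : ℝ => 1 - r / R) atTop (nhds (1 - 0)) :=
          (tendsto_const_nhds.div_atTop tendsto_id).const_sub 1
        have := ((Complex.continuous_ofReal.tendsto _).comp h3).mul_const (f r)
        simpa using this
      refine h2.congr' ?_
      filter_upwards [eventually_ge_atTop r] with R hR
      rw [indicator_of_mem (show r ∈ Ioc 0 R from ⟨hr, hR⟩)]
  refine h1.congr' ?_
  filter_upwards [eventually_gt_atTop 0] with R hR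
  unfold CI
  rw [intervalIntegral.integral_of_le hR.le, setIntegral_indicator measurableSet_Ioc,
    inter_eq_self_of_subset_right Ioc_subset_Ioi_self]

lemma CI_sub {R : ℝ} {f g : ℝ → ℂ} (hf : IntervalIntegrable f volume 0 R)
    (hg : IntervalIntegrable g volume 0 R) : CI R (fun r => f r - g r) = CI R f - CI R g := by
  unfold CI
  rw [← intervalIntegral.integral_sub (chi_iint hf) (chi_iint hg)]
  simp only [mul_sub]

lemma CI_add {R : ℝ} {f g : ℝ → ℂ} (hf : IntervalIntegrable f volume 0 R)
    (hg : IntervalIntegrable g volume 0 R) : CI R (fun r => f r + g r) = CI R f + CI R g := by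
  unfold CI
  rw [← intervalIntegral.integral_add (chi_iint hf) (chi_iint hg)]
  simp only [mul_add]

lemma ii_conj {R : ℝ} (hR : 0 < R) {f : ℝ → ℂ} :
    ∫ r in (0:ℝ)..R, (starRingEnd ℂ) (f r) = (starRingEnd ℂ) (∫ r in (0:ℝ)..R, f r) := by
  rw [intervalIntegral.integral_of_le hR.le, intervalIntegral.integral_of_le hR.le]
  exact integral_conj

lemma CI_conj {R : ℝ} (hR : 0 < R) {f : ℝ → ℂ} :
    CI R (fun r => (starRingEnd ℂ) (f r)) = (starRingEnd ℂ) (CI R f) := by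
  unfold CI
  rw [← ii_conj hR]
  simp

lemma pr_conj (g k : ℝ → ℂ) (r : ℝ) : (starRingEnd ℂ) (pr g k r) = pr k g r := by
  unfold pr
  simp only [map_mul, Complex.conj_ofReal, Complex.conj_conj]
  ring

lemma pr_cont {g k : ℝ → ℂ} (hg : Continuous g) (hk : Continuous k) : Continuous (pr g k) := by
  unfold pr
  have := Complex.continuous_conj.comp hk
  exact (hg.mul this).mul Complex.continuous_ofReal

lemma pr_norm {g k : ℝ → ℂ} {r : ℝ} (hr : 0 < r) : ‖pr g k r‖ = ‖g r‖ * ‖k r‖ * r := by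
  unfold pr
  rw [norm_mul, norm_mul, RCLike.norm_conj, Complex.norm_real, Real.norm_of_nonneg hr.le]

lemma pr_int {g k : ℝ → ℂ} (hg : Continuous g) (hk : Continuous k)
    (hi : IntegrableOn (fun r => ‖g r‖ * ‖k r‖ * r) (Ioi 0)) : IntegrableOn (pr g k) (Ioi 0) :=
  dom_int (pr_cont hg hk).continuousOn hi fun _ hr => (pr_norm hr).le

lemma pr_int_norm {g k : ℝ → ℂ} :
    ∫ r in Ioi (0:ℝ), ‖pr g k r‖ = ∫ r in Ioi (0:ℝ), ‖g r‖ * ‖k r‖ * r :=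
  setIntegral_congr_fun measurableSet_Ioi fun _ hr => pr_norm hr

noncomputable def HR (m : ℕ) (R : ℝ) (g g1 k k1 : ℝ → ℂ) : ℂ :=
  CI R (pr g1 k1) - (1 / R : ℝ) * (∫ r in (0:ℝ)..R, pr g1 k r) + CI R (pot m g k)

lemma pot_conj (m : ℕ) (g k : ℝ → ℂ) (r : ℝ) : pot m g k r - (starRingEnd ℂ) (pot m k g r) =
    ((Wf m g r - Wf m k r : ℝ) : ℂ) * pr g k r := by
  unfold pot pr
  simp only [map_mul, Complex.conj_ofReal, Complex.conj_conj]
  push_cast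
  ring

namespace Prof
variable {m : ℕ} {B q : ℝ} {g g1 k k1 gt g2 : ℝ → ℂ}

lemma p00 (h : Prof m B g g1) (h' : Prof m B k k1) : IntegrableOn (pr g k) (Ioi 0) :=
  pr_int h.cont h'.cont (h.gkint h')
lemma p10 (h : Prof m B g g1) (h' : Prof m B k k1) : IntegrableOn (pr g1 k) (Ioi 0) :=
  pr_int h.cont1 h'.cont (h.g1kint h')
lemma p11 (h : Prof m B g g1) (h' : Prof m B k k1) : IntegrableOn (pr g1 k1) (Ioi 0) :=
  pr_int h.cont1 h'.cont1 (h.g1k1int h')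

lemma HR_le (h : Prof m B g g1) (h' : Prof m B k k1) {R : ℝ} (hR : 1 ≤ R) :
    ‖HR m R g g1 k k1‖ ≤ 10 * B ^ 4 := by
  have hR0 : 0 < R := by linarith
  have hB := h.B4
  have h1 := CI_le hR0 (h.p11 h')
  have h2 := int_le hR0 (h.p10 h')
  have h3 := CI_le hR0 (h.pot_int h').1
  rw [pr_int_norm] at h1 h2
  have h4 := h.g1k1le h'
  have h5 := h.g1kle h'
  have h6 := (h.pot_int h').2
  have h7 : ‖((1 / R : ℝ) : ℂ) * (∫ r in (0:ℝ)..R, pr g1 k r)‖ ≤ B := by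
    rw [norm_mul, Complex.norm_real, Real.norm_of_nonneg (by positivity)]
    have : 1 / R ≤ 1 := (div_le_one hR0).2 hR
    have := mul_le_of_le_one_left (norm_nonneg (∫ r in (0:ℝ)..R, pr g1 k r)) this
    linarith
  have h8 : B ≤ B ^ 4 := by simpa using pow_le_pow_right₀ (by linarith : 1 ≤ B) (by norm_num : 1 ≤ 4)
  unfold HR
  refine (norm_add_le _ _).trans ?_
  have := norm_sub_le (CI R (pr g1 k1)) (((1 / R : ℝ) : ℂ) * (∫ r in (0:ℝ)..R, pr g1 k r))
  linarith

lemma ident (h : Prof m B g g1) (h' : Prof m B k k1) {R : ℝ} (hR : 0 < R)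
    (d2 : ∀ r, HasDerivAt g1 (g2 r) r) (c2 : Continuous g2)
    (eq : ∀ r : ℝ, 0 < r → Complex.I * gt r + g2 r + g1 r / r -
      (((m:ℝ) ^ 2 / r ^ 2 + Wf m g r : ℝ) : ℂ) * g r = 0) :
    CI R (pr gt k) = -Complex.I * HR m R g g1 k k1 := by
  have hg := h.cont1
  have hk := h'.cont
  have hk1 := h'.cont1
  have hkc := Complex.continuous_conj.comp hk
  have hk1c := Complex.continuous_conj.comp hk1
  have hoc : Continuous fun r : ℝ => (r : ℂ) := Complex.continuous_ofReal
  have A1 : CI R (pr gt k) = -Complex.I * (CI R (pot m g k) -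
      ∫ r in (0:ℝ)..R, (((1 - r / R : ℝ) : ℂ) * (starRingEnd ℂ) (k r)) * (g1 r + r * g2 r)) := by
    unfold CI
    rw [← intervalIntegral.integral_sub (chi_iint (iint hR (h.pot_int h').1)),
      ← intervalIntegral.integral_const_mul]
    · refine intervalIntegral.integral_congr_ae (Eventually.of_forall fun r hr => ?_)
      rw [uIoc_of_le hR.le] at hr
      have hr0 : 0 < r := hr.1
      have e := eq r hr0
      have hrc : (r:ℂ) ≠ 0 := by exact_mod_cast hr0.ne'
      have e2 : gt r = -Complex.I * ((((m:ℝ) ^ 2 / r ^ 2 + Wf m g r : ℝ) : ℂ) * g r - g2 r - g1 r / r) := by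
        have : gt r = -Complex.I * (Complex.I * gt r) := by
          rw [← mul_assoc]; simp
        rw [this]
        congr 1
        linear_combination e
      unfold pr pot
      rw [e2]
      field_simp
      ring
    · refine Continuous.intervalIntegrable ?_ _ _
      refine Continuous.mul (Continuous.mul (by fun_prop) hkc) (hg.add (hoc.mul c2))
  have A2 := intervalIntegral.integral_mul_deriv_eq_deriv_mul (a := 0) (b := R)
    (u := fun r : ℝ => ((1 - r / R : ℝ) : ℂ) * (starRingEnd ℂ) (k r))
    (v := fun r : ℝ => (r : ℂ) * g1 r)
    (u' := fun r : ℝ => ((-(1 / R) : ℝ) : ℂ) * (starRingEnd ℂ) (k r) +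
      ((1 - r / R : ℝ) : ℂ) * (starRingEnd ℂ) (k1 r))
    (v' := fun r : ℝ => g1 r + r * g2 r) ?_ ?_ ?_ ?_
  · rw [A1, A2]
    congr 1
    have e0 : ((1 - R / R : ℝ) : ℂ) = 0 := by rw [div_self hR.ne']; simp
    have A3 : ∫ x in (0:ℝ)..R, (((-(1 / R) : ℝ) : ℂ) * (starRingEnd ℂ) (k x) +
        ((1 - x / R : ℝ) : ℂ) * (starRingEnd ℂ) (k1 x)) * ((x:ℂ) * g1 x) =
        CI R (pr g1 k1) - ((1 / R : ℝ) : ℂ) * ∫ r in (0:ℝ)..R, pr g1 k r := by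
      unfold CI
      rw [← intervalIntegral.integral_const_mul, ← intervalIntegral.integral_sub
        (chi_iint (iint hR (h.p11 h'))) ((iint hR (h.p10 h')).const_mul _)]
      congr 1
      funext x
      unfold pr
      push_cast
      ring
    rw [A3]
    unfold HR
    simp only [e0]
    push_cast
    ring
  · intro x _
    have d1 : HasDerivAt (fun r : ℝ => ((1 - r / R : ℝ) : ℂ)) ((-(1 / R) : ℝ) : ℂ) x :=
      HasDerivAt.ofReal_comp (((hasDerivAt_id x).div_const R).const_sub 1)
    have d3 : HasDerivAt (fun r => (starRingEnd ℂ) (k r)) ((starRingEnd ℂ) (k1 x)) x := (h'.der x).star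
    exact d1.mul d3
  · intro x _
    have d1 : HasDerivAt (fun r : ℝ => (r : ℂ)) ((1:ℝ) : ℂ) x := HasDerivAt.ofReal_comp (hasDerivAt_id x)
    refine (d1.mul (d2 x)).congr_deriv ?_
    push_cast
    ring
  · refine Continuous.intervalIntegrable ?_ _ _
    exact (continuous_const.mul hkc).add (Continuous.mul (by fun_prop) hk1c)
  · exact (hg.add (hoc.mul c2)).intervalIntegrable _ _

lemma HR_lim (h : Prof m B g g1) :
    Tendsto (fun R => HR m R g g1 g g1) atTop (nhds ((Ff m g g1 : ℝ) : ℂ)) := by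
  have h1 := CI_tendsto (h.p11 h)
  have h2 := CI_tendsto (h.pot_int h).1
  have h3 : Tendsto (fun R : ℝ => ((1 / R : ℝ) : ℂ) * (∫ r in (0:ℝ)..R, pr g1 g r)) atTop (nhds 0) := by
    have a := intervalIntegral_tendsto_integral_Ioi 0 (h.p10 h) tendsto_id
    have b : Tendsto (fun R : ℝ => ((1 / R : ℝ) : ℂ)) atTop (nhds ((0:ℝ) : ℂ)) :=
      (Complex.continuous_ofReal.tendsto _).comp (tendsto_const_nhds.div_atTop tendsto_id)
    simpa using b.mul a
  have := (h1.sub h3).add h2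
  have e : (∫ r in Ioi (0:ℝ), pr g1 g1 r) - 0 + (∫ r in Ioi (0:ℝ), pot m g g r) = ((Ff m g g1 : ℝ) : ℂ) := by
    rw [h.Ff_eq]
    have : ∀ r, pr g1 g1 r = ((‖g1 r‖ ^ 2 * r : ℝ) : ℂ) := by
      intro r
      unfold pr
      rw [Complex.mul_conj, Complex.normSq_eq_norm_sq]
      push_cast; ring
    simp only [this]
    rw [integral_complex_ofReal]
    push_cast; ring
  rw [e] at this
  exact this

lemma HR_anti (h : Prof m B g g1) (h' : Prof m B k k1) :
    Tendsto (fun R => HR m R g g1 k k1 - (starRingEnd ℂ) (HR m R k k1 g g1)) atTop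
      (nhds (∫ r in Ioi (0:ℝ), ((Wf m g r - Wf m k r : ℝ) : ℂ) * pr g k r)) := by
  have ip1 := (h.pot_int h').1
  have ip2 := (h'.pot_int h).1
  have ip3 : IntegrableOn (fun r => (starRingEnd ℂ) (pot m k g r)) (Ioi 0) := by
    refine dom_int (Complex.continuous_conj.comp_continuousOn (h'.pot_cont h)) ip2.norm fun r _ => ?_
    rw [RCLike.norm_conj]
  have i : IntegrableOn (fun r => ((Wf m g r - Wf m k r : ℝ) : ℂ) * pr g k r) (Ioi 0) := by
    refine (ip1.sub ip3).congr ?_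
    exact Eventually.of_forall fun r => pot_conj m g k r
  have h1 := CI_tendsto i
  have h3 : ∀ {g g1 k k1 : ℝ → ℂ}, Prof m B g g1 → Prof m B k k1 →
      Tendsto (fun R : ℝ => ((1 / R : ℝ) : ℂ) * (∫ r in (0:ℝ)..R, pr g1 k r)) atTop (nhds 0) := by
    intro g g1 k k1 h h'
    have a := intervalIntegral_tendsto_integral_Ioi 0 (h.p10 h') tendsto_id
    have b : Tendsto (fun R : ℝ => ((1 / R : ℝ) : ℂ)) atTop (nhds ((0:ℝ) : ℂ)) :=
      (Complex.continuous_ofReal.tendsto _).comp (tendsto_const_nhds.div_atTop tendsto_id)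
    simpa using b.mul a
  have h5 : Tendsto (fun R : ℝ => (starRingEnd ℂ) (((1 / R : ℝ) : ℂ) * (∫ r in (0:ℝ)..R, pr k1 g r))) atTop
      (nhds 0) := by
    have := (Complex.continuous_conj.tendsto _).comp (h3 h' h)
    rw [map_zero] at this
    exact this
  have h4 := (h1.sub (h3 h h')).add h5
  rw [sub_zero, add_zero] at h4
  refine h4.congr' ?_
  filter_upwards [eventually_gt_atTop 0] with R hR
  have e1 : CI R (fun r => ((Wf m g r - Wf m k r : ℝ) : ℂ) * pr g k r) =
      CI R (pot m g k) - (starRingEnd ℂ) (CI R (pot m k g)) := by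
    rw [← CI_conj hR, ← CI_sub (iint hR ip1) (iint hR ip3)]
    congr 1
    funext r
    exact (pot_conj m g k r).symm
  have e2 : (starRingEnd ℂ) (CI R (pr k1 g1)) = CI R (pr g1 k1) := by
    rw [← CI_conj hR]
    congr 1
    funext r
    exact pr_conj _ _ _
  unfold HR
  rw [e1, map_add, map_sub, e2]
  ring

end Prof

open MeasureTheory Set Filter

lemma par {a b R : ℝ} {F F' : ℝ → ℝ → ℂ} (hR : 0 < R) (hF : ∀ σ ∈ Ioo a b, Continuous (F σ))
    (hd : ∀ σ ∈ Ioo a b, ∀ r, HasDerivAt (fun s => F s r) (F' σ r) σ)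
    (hc : ContinuousOn (fun p : ℝ × ℝ => F' p.1 p.2) (Ioo a b ×ˢ univ)) {t : ℝ} (ht : t ∈ Ioo a b) :
    HasDerivAt (fun σ => ∫ r in (0:ℝ)..R, F σ r) (∫ r in (0:ℝ)..R, F' t r) t := by
  obtain ⟨ε, hε, hsub⟩ := Metric.nhds_basis_closedBall.mem_iff.1 (Ioo_mem_nhds ht.1 ht.2)
  have hK : IsCompact (Metric.closedBall t ε ×ˢ Icc (0:ℝ) R) := (isCompact_closedBall t ε).prod isCompact_Icc
  have hcK : ContinuousOn (fun p : ℝ × ℝ => F' p.1 p.2) (Metric.closedBall t ε ×ˢ Icc (0:ℝ) R) :=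
    hc.mono (prod_mono hsub (subset_univ _))
  obtain ⟨C, hC⟩ := hK.exists_bound_of_continuousOn hcK
  have hc' : Continuous (F' t) := by
    rw [← continuousOn_univ]
    exact hc.comp (f := fun r => (t, r)) (by fun_prop) fun r _ => ⟨ht, mem_univ _⟩
  refine (intervalIntegral.hasDerivAt_integral_of_dominated_loc_of_deriv_le (μ := volume) (s := Metric.closedBall t ε)
    (bound := fun _ => C) (Metric.closedBall_mem_nhds t hε) ?_ ((hF t ht).intervalIntegrable _ _)
    hc'.aestronglyMeasurable ?_ intervalIntegrable_const ?_).2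
  · filter_upwards [Metric.closedBall_mem_nhds t hε] with σ hσ
    exact (hF σ (hsub hσ)).aestronglyMeasurable
  · refine Eventually.of_forall fun r hr σ hσ => ?_
    rw [uIoc_of_le hR.le] at hr
    exact hC (σ, r) ⟨hσ, hr.1.le, hr.2⟩
  · exact Eventually.of_forall fun r _ σ hσ => hd σ (hsub hσ) r

lemma sup_ge1 {w w1 : ℝ → ℂ} (hc1 : Continuous w1) (hd : ∀ r, HasDerivAt w (w1 r) r)
    (hi : IntegrableOn (fun r => ‖w r‖ * ‖w1 r‖ * r) (Ioi 0)) {r : ℝ} (hr : 1 ≤ r) :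
    ‖w r‖ ^ 2 ≤ ‖w 1‖ ^ 2 + 2 * ∫ s in Ioi (0:ℝ), ‖w s‖ * ‖w1 s‖ * s := by
  have hc : Continuous w := continuous_iff_continuousAt.2 fun r => (hd r).continuousAt
  have hcr : Continuous fun s => 2 * (w1 s * (starRingEnd ℂ) (w s)).re :=
    continuous_const.mul (Complex.continuous_re.comp (hc1.mul (Complex.continuous_conj.comp hc)))
  have h1 := intervalIntegral.integral_eq_sub_of_hasDerivAt (a := 1) (b := r)
    (fun s _ => hasDerivAt_normsq (hd s)) (hcr.intervalIntegrable _ _)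
  have h2 : ∫ s in (1:ℝ)..r, 2 * (w1 s * (starRingEnd ℂ) (w s)).re ≤
      ∫ s in (1:ℝ)..r, 2 * (‖w s‖ * ‖w1 s‖ * s) := by
    refine intervalIntegral.integral_mono_on hr (hcr.intervalIntegrable _ _)
      (Continuous.intervalIntegrable (by fun_prop) _ _) fun s hs => ?_
    have h3 := Complex.re_le_norm (w1 s * (starRingEnd ℂ) (w s))
    rw [norm_mul, RCLike.norm_conj] at h3
    have : 0 ≤ ‖w1 s‖ * ‖w s‖ := by positivity
    nlinarith [hs.1]
  have h3 : ∫ s in (1:ℝ)..r, 2 * (‖w s‖ * ‖w1 s‖ * s) ≤ 2 * ∫ s in Ioi (0:ℝ), ‖w s‖ * ‖w1 s‖ * s := by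
    rw [intervalIntegral.integral_const_mul, intervalIntegral.integral_of_le hr]
    refine mul_le_mul_of_nonneg_left ?_ zero_le_two
    refine setIntegral_mono_set hi ?_ ?_
    · refine (ae_restrict_iff' measurableSet_Ioi).2 (Eventually.of_forall fun s hs => ?_)
      have : 0 < s := hs
      simp only [Pi.zero_apply]
      positivity
    · exact LE.le.eventuallyLE fun s hs => lt_trans zero_lt_one hs.1
  linarith

lemma Prof.mono {m : ℕ} {B B' : ℝ} {g g1 : ℝ → ℂ} (h : Prof m B g g1) (hB : B ≤ B') : Prof m B' g g1 where
  cont1 := h.cont1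
  der := h.der
  int0 := h.int0
  int1 := h.int1
  mass := h.mass
  grad := h.grad.trans hB
  near := fun r h0 h1 => (h.near r h0 h1).trans (mul_le_mul_of_nonneg_right hB h0)
  sup := fun r h0 => (h.sup r h0).trans hB
  hB := h.hB.trans hB

structure Sol (m : ℕ) (B a b : ℝ) (v vt vr vrr : ℝ → ℝ → ℂ) : Prop where
  prof : ∀ t ∈ Ioo a b, Prof m B (v t) (vr t)
  dt : ∀ t ∈ Ioo a b, ∀ r, HasDerivAt (fun s => v s r) (vt t r) t
  drr : ∀ t ∈ Ioo a b, ∀ r, HasDerivAt (vr t) (vrr t r) r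
  cv : ContinuousOn (fun p : ℝ × ℝ => v p.1 p.2) (Ioo a b ×ˢ univ)
  cvt : ContinuousOn (fun p : ℝ × ℝ => vt p.1 p.2) (Ioo a b ×ˢ univ)
  cvrr : ∀ t ∈ Ioo a b, Continuous (vrr t)
  lip1 : ∀ s ∈ Ioo a b, ∀ t ∈ Ioo a b, ∀ r ∈ Icc (0:ℝ) 1, ‖vr s r - vr t r‖ ≤ B * |s - t|
  lip : ∀ R0 : ℝ, ∃ L : ℝ, 0 ≤ L ∧ ∀ s ∈ Ioo a b, ∀ t ∈ Ioo a b, ∀ r ∈ Icc (0:ℝ) R0,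
    ‖vr s r - vr t r‖ ≤ L * |s - t|
  eq : ∀ t ∈ Ioo a b, ∀ r : ℝ, 0 < r → Complex.I * vt t r + vrr t r + vr t r / r -
      (((m:ℝ) ^ 2 / r ^ 2 + Wf m (v t) r : ℝ) : ℂ) * v t r = 0

namespace Sol
variable {m : ℕ} {B a b : ℝ} {v vt vr vrr : ℝ → ℝ → ℂ}

lemma vtc (S : Sol m B a b v vt vr vrr) {t : ℝ} (ht : t ∈ Ioo a b) : Continuous (vt t) := by
  rw [← continuousOn_univ]
  exact S.cvt.comp (f := fun r => (t, r)) (by fun_prop) fun r _ => ⟨ht, mem_univ _⟩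

lemma idn (S : Sol m B a b v vt vr vrr) {s t R : ℝ} (hs : s ∈ Ioo a b) (ht : t ∈ Ioo a b) (hR : 0 < R) :
    CI R (pr (vt s) (v t)) = -Complex.I * HR m R (v s) (vr s) (v t) (vr t) :=
  (S.prof s hs).ident (S.prof t ht) hR (S.drr s hs) (S.cvrr s hs) (S.eq s hs)

lemma gR (S : Sol m B a b v vt vr vrr) {s t R : ℝ} (hs : s ∈ Ioo a b) (ht : t ∈ Ioo a b) (hR : 0 < R) :
    HasDerivAt (fun σ => CI R (pr (v σ) (v t))) (-Complex.I * HR m R (v s) (vr s) (v t) (vr t)) s := by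
  rw [← S.idn hs ht hR]
  have hk := (S.prof t ht).cont
  unfold CI
  refine par (F := fun σ r => ((1 - r / R : ℝ) : ℂ) * pr (v σ) (v t) r)
    (F' := fun σ r => ((1 - r / R : ℝ) : ℂ) * pr (vt σ) (v t) r) hR ?_ ?_ ?_ hs
  · intro σ hσ
    exact Continuous.mul (by fun_prop) (pr_cont (S.prof σ hσ).cont hk)
  · intro σ hσ r
    unfold pr
    exact (((S.dt σ hσ r).mul_const _).mul_const _).const_mul _
  · unfold pr
    have h1 : ContinuousOn (fun p : ℝ × ℝ => (starRingEnd ℂ) (v t p.2)) (Ioo a b ×ˢ univ) :=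
      (Complex.continuous_conj.comp (hk.comp continuous_snd)).continuousOn
    exact ContinuousOn.mul (by fun_prop) ((S.cvt.mul h1).mul (by fun_prop))

lemma kR (S : Sol m B a b v vt vr vrr) {h t R : ℝ} (hh : 0 < h) (ht : t ∈ Ioo a (b - h)) (hR : 0 < R) :
    HasDerivAt (fun σ => CI R (pr (v (σ + h)) (v σ)))
      (-Complex.I * (HR m R (v (t+h)) (vr (t+h)) (v t) (vr t) -
        (starRingEnd ℂ) (HR m R (v t) (vr t) (v (t+h)) (vr (t+h))))) t := by
  have i1 : ∀ σ ∈ Ioo a (b - h), σ ∈ Ioo a b := fun σ hσ => ⟨hσ.1, by linarith [hσ.2]⟩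
  have i2 : ∀ σ ∈ Ioo a (b - h), σ + h ∈ Ioo a b := fun σ hσ => ⟨by linarith [hσ.1], by linarith [hσ.2]⟩
  have e : -Complex.I * (HR m R (v (t+h)) (vr (t+h)) (v t) (vr t) -
        (starRingEnd ℂ) (HR m R (v t) (vr t) (v (t+h)) (vr (t+h)))) =
      CI R (fun r => pr (vt (t+h)) (v t) r + pr (v (t+h)) (vt t) r) := by
    rw [CI_add, S.idn (i2 t ht) (i1 t ht) hR]
    · have : CI R (pr (v (t+h)) (vt t)) = (starRingEnd ℂ) (CI R (pr (vt t) (v (t+h)))) := by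
        rw [← CI_conj hR]
        congr 1
        funext r
        exact (pr_conj _ _ _).symm
      rw [this, S.idn (i1 t ht) (i2 t ht) hR]
      simp only [map_mul, map_neg, Complex.conj_I]
      ring
    · exact (pr_cont (S.vtc (i2 t ht)) (S.prof t (i1 t ht)).cont).intervalIntegrable _ _
    · exact (pr_cont (S.prof _ (i2 t ht)).cont (S.vtc (i1 t ht))).intervalIntegrable _ _
  rw [e]
  unfold CI
  refine par (F := fun σ r => ((1 - r / R : ℝ) : ℂ) * pr (v (σ+h)) (v σ) r)
    (F' := fun σ r => ((1 - r / R : ℝ) : ℂ) * (pr (vt (σ+h)) (v σ) r + pr (v (σ+h)) (vt σ) r)) hR ?_ ?_ ?_ ht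
  · intro σ hσ
    exact Continuous.mul (by fun_prop) (pr_cont (S.prof _ (i2 σ hσ)).cont (S.prof σ (i1 σ hσ)).cont)
  · intro σ hσ r
    unfold pr
    have d1 : HasDerivAt (fun s => v (s + h) r) (vt (σ + h) r) σ :=
      (S.dt _ (i2 σ hσ) r).comp_add_const σ h
    have d2 : HasDerivAt (fun s => (starRingEnd ℂ) (v s r)) ((starRingEnd ℂ) (vt σ r)) σ := (S.dt σ (i1 σ hσ) r).star
    refine (((d1.mul d2).mul_const (r:ℂ)).const_mul _).congr_deriv ?_
    ring
  · unfold pr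
    have sh : ∀ {f : ℝ → ℝ → ℂ}, ContinuousOn (fun p : ℝ × ℝ => f p.1 p.2) (Ioo a b ×ˢ univ) →
        ContinuousOn (fun p : ℝ × ℝ => f (p.1 + h) p.2) (Ioo a (b - h) ×ˢ univ) := by
      intro f hf
      exact hf.comp (f := fun p : ℝ × ℝ => (p.1 + h, p.2)) (by fun_prop) fun p hp => ⟨i2 _ hp.1, mem_univ _⟩
    have ns : ∀ {f : ℝ → ℝ → ℂ}, ContinuousOn (fun p : ℝ × ℝ => f p.1 p.2) (Ioo a b ×ˢ univ) →
        ContinuousOn (fun p : ℝ × ℝ => (starRingEnd ℂ) (f p.1 p.2)) (Ioo a (b - h) ×ˢ univ) := by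
      intro f hf
      exact Complex.continuous_conj.comp_continuousOn (hf.mono fun p hp => ⟨i1 _ hp.1, mem_univ _⟩)
    exact ContinuousOn.mul (by fun_prop) ((((sh S.cvt).mul (ns S.cv)).mul (by fun_prop)).add
      (((sh S.cv).mul (ns S.cvt)).mul (by fun_prop)))

lemma tdiff (S : Sol m B a b v vt vr vrr) {s t : ℝ} (hs : s ∈ Ioo a b) (ht : t ∈ Ioo a b) :
    ‖(∫ r in Ioi (0:ℝ), pr (v s) (v t) r) - ∫ r in Ioi (0:ℝ), pr (v t) (v t) r‖ ≤ 10 * B ^ 4 * |s - t| := by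
  have l1 := CI_tendsto ((S.prof s hs).p00 (S.prof t ht))
  have l2 := CI_tendsto ((S.prof t ht).p00 (S.prof t ht))
  refine le_of_tendsto (l1.sub l2).norm ?_
  filter_upwards [eventually_ge_atTop 1] with R hR
  refine (convex_Ioo a b).norm_image_sub_le_of_norm_hasDerivWithin_le
    (fun σ hσ => (S.gR hσ ht (by linarith)).hasDerivWithinAt) (fun σ hσ => ?_) ht hs
  rw [norm_mul, norm_neg, Complex.norm_I, one_mul]
  exact (S.prof σ hσ).HR_le (S.prof t ht) hR

lemma mass_pr {g g1 : ℝ → ℂ} (h : Prof m B g g1) :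
    ∫ r in Ioi (0:ℝ), pr g g r = ((4 * ((m:ℝ) + 1) : ℝ) : ℂ) := by
  have : ∀ r, pr g g r = ((‖g r‖ ^ 2 * r : ℝ) : ℂ) := by
    intro r
    unfold pr
    rw [Complex.mul_conj, Complex.normSq_eq_norm_sq]
    push_cast; ring
  simp only [this]
  rw [integral_complex_ofReal, h.mass]

lemma l2 (S : Sol m B a b v vt vr vrr) {s t : ℝ} (hs : s ∈ Ioo a b) (ht : t ∈ Ioo a b) :
    ∫ r in Ioi (0:ℝ), ‖v s r - v t r‖ ^ 2 * r ≤ 20 * B ^ 4 * |s - t| := by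
  have p := S.prof s hs
  have p' := S.prof t ht
  have ip := p.p00 p'
  have ire : IntegrableOn (fun r => (pr (v s) (v t) r).re) (Ioi 0) := ip.re
  have e : ∫ r in Ioi (0:ℝ), ‖v s r - v t r‖ ^ 2 * r =
      ∫ r in Ioi (0:ℝ), (‖v s r‖ ^ 2 * r + ‖v t r‖ ^ 2 * r + (-2) * (pr (v s) (v t) r).re) := by
    congr 1
    funext r
    have := re_polar (v s r) (v t r)
    unfold pr
    rw [Complex.re_mul_ofReal, this]
    ring
  rw [integral_add (iadd p.int0 p'.int0) (ire.const_mul _), integral_add p.int0 p'.int0, integral_const_mul,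
    p.mass, p'.mass] at e
  have e2 : ∫ r in Ioi (0:ℝ), (pr (v s) (v t) r).re = (∫ r in Ioi (0:ℝ), pr (v s) (v t) r).re :=
    integral_re ip
  have h1 := S.tdiff hs ht
  rw [mass_pr p'] at h1
  have h2 := (abs_le.1 ((Complex.abs_re_le_norm _).trans h1)).1
  rw [Complex.sub_re, Complex.ofReal_re] at h2
  rw [e, e2]
  linarith

lemma close (S : Sol m B a b v vt vr vrr) {s t q : ℝ} (hs : s ∈ Ioo a b) (ht : t ∈ Ioo a b)
    (q0 : 0 ≤ q) (q1 : q ≤ 1) (hq : |s - t| = q ^ 4) : Close (100 * B ^ 4) q (v s) (v t) := by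
  have p := S.prof s hs
  have p' := S.prof t ht
  have hB := p.B4
  have hB3 : B ≤ B ^ 4 := by simpa using pow_le_pow_right₀ (by linarith : 1 ≤ B) (by norm_num : 1 ≤ 4)
  have hnear : ∀ r, 0 ≤ r → r ≤ 1 → ‖v s r - v t r‖ ≤ B * q ^ 4 * r := by
    intro r h0 h1
    have := norm_image_sub_le_of_norm_deriv_le_segment' (f := fun x => v s x - v t x)
      (f' := fun x => vr s x - vr t x) (a := 0) (b := 1) (C := B * q ^ 4)
      (fun x _ => ((p.der x).sub (p'.der x)).hasDerivWithinAt)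
      (fun x hx => by rw [← hq]; exact S.lip1 s hs t ht x ⟨hx.1, hx.2.le⟩) r ⟨h0, h1⟩
    simpa [p.g0, p'.g0] using this
  have hl2 : ∫ r in Ioi (0:ℝ), ‖v s r - v t r‖ ^ 2 * r ≤ 20 * B ^ 4 * q ^ 4 := by
    rw [← hq]; exact S.l2 hs ht
  refine ⟨q0, q1, fun r h0 h1 => (hnear r h0 h1).trans ?_, hl2.trans ?_, ?_⟩
  · have : B * q ^ 4 ≤ 100 * B ^ 4 * q ^ 4 := mul_le_mul_of_nonneg_right (by linarith) (by positivity)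
    exact mul_le_mul_of_nonneg_right this h0
  · exact mul_le_mul_of_nonneg_right (by linarith) (by positivity)
  · intro r h0
    have q41 : q ^ 4 ≤ q := by simpa using pow_le_pow_of_le_one q0 q1 (by norm_num : 1 ≤ 4)
    rcases le_total r 1 with h1 | h1
    · refine (hnear r h0 h1).trans ?_
      have : B * q ^ 4 * r ≤ B * q ^ 4 * 1 := mul_le_mul_of_nonneg_left h1 (by positivity)
      have : B * q ^ 4 ≤ 100 * B ^ 4 * q := mul_le_mul (by linarith) q41 (by positivity) (by positivity)
      linarith
    · have i1 : IntegrableOn (fun r => ‖vr s r - vr t r‖ ^ 2 * r) (Ioi 0) ∧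
          ∫ r in Ioi (0:ℝ), ‖vr s r - vr t r‖ ^ 2 * r ≤ 4 * B := by
        have c1 := p.cont1
        have c2 := p'.cont1
        have hb : ∀ r : ℝ, 0 < r → ‖‖vr s r - vr t r‖ ^ 2 * r‖ ≤ 2 * (‖vr s r‖ ^ 2 * r) + 2 * (‖vr t r‖ ^ 2 * r) := by
          intro r hr
          rw [Real.norm_of_nonneg (by positivity)]
          have h1 := pow_le_pow_left₀ (norm_nonneg _) (norm_sub_le (vr s r) (vr t r)) 2
          have h2 : ‖vr s r - vr t r‖ ^ 2 ≤ 2 * ‖vr s r‖ ^ 2 + 2 * ‖vr t r‖ ^ 2 := by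
            nlinarith [sq_nonneg (‖vr s r‖ - ‖vr t r‖)]
          nlinarith
        have ii := iadd (p.int1.const_mul 2) (p'.int1.const_mul 2)
        have hii := dom_int (by fun_prop) ii hb
        refine ⟨hii, ?_⟩
        have := setIntegral_mono_on hii ii measurableSet_Ioi fun r hr => (le_abs_self _).trans (hb r hr)
        rw [integral_add (p.int1.const_mul 2) (p'.int1.const_mul 2), integral_const_mul, integral_const_mul] at this
        linarith [p.grad, p'.grad]
      have cc := cs_w measurableSet_Ioi le_rfl (p.cont.sub p'.cont).norm (p.cont1.sub p'.cont1).norm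
        (p.wint p') i1.1
      have h3 := cs_n measurableSet_Ioi le_rfl (p.cont.sub p'.cont) (p.cont1.sub p'.cont1)
        (p.wint p') i1.1 hl2 i1.2 (x := 9 * B ^ 3 * q ^ 2) (by positivity) (by
          have : B ^ 5 ≤ B ^ 6 := pow_le_pow_right₀ (by linarith) (by norm_num)
          have : B ^ 5 * q ^ 4 ≤ B ^ 6 * q ^ 4 := by gcongr
          nlinarith [this, (by positivity : 0 ≤ B ^ 6 * q ^ 4)])
      have h4 := sup_ge1 (w := fun r => v s r - v t r) (w1 := fun r => vr s r - vr t r)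
        (p.cont1.sub p'.cont1) (fun r => (p.der r).sub (p'.der r)) cc.1 h1
      have h5 := hnear 1 zero_le_one le_rfl
      have h6 : ‖v s 1 - v t 1‖ ^ 2 ≤ B ^ 2 * q ^ 2 := by
        have h7 : ‖v s 1 - v t 1‖ ≤ B * q := h5.trans (by rw [mul_one]; gcongr)
        calc _ ≤ (B * q) ^ 2 := pow_le_pow_left₀ (norm_nonneg _) h7 2
          _ = _ := by ring
      have h8 : ‖v s r - v t r‖ ^ 2 ≤ (100 * B ^ 4 * q) ^ 2 := by
        have a1 : B ^ 2 ≤ B ^ 8 := pow_le_pow_right₀ (by linarith) (by norm_num)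
        have a2 : B ^ 3 ≤ B ^ 8 := pow_le_pow_right₀ (by linarith) (by norm_num)
        have a3 : B ^ 2 * q ^ 2 ≤ B ^ 8 * q ^ 2 := by gcongr
        have a4 : B ^ 3 * q ^ 2 ≤ B ^ 8 * q ^ 2 := by gcongr
        have a5 : 0 ≤ B ^ 8 * q ^ 2 := by positivity
        simp only [Pi.sub_apply] at h3
        nlinarith
      exact (sq_le_sq₀ (norm_nonneg _) (by positivity)).1 h8

end Sol

open MeasureTheory Set Filter

noncomputable def qq (x : ℝ) : ℝ := Real.sqrt (Real.sqrt x)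

lemma qq4 {x : ℝ} (hx : 0 ≤ x) : qq x ^ 4 = x := by
  unfold qq
  have : Real.sqrt (Real.sqrt x) ^ 4 = (Real.sqrt (Real.sqrt x) ^ 2) ^ 2 := by ring
  rw [this, Real.sq_sqrt (Real.sqrt_nonneg x), Real.sq_sqrt hx]

lemma qq0 (x : ℝ) : 0 ≤ qq x := Real.sqrt_nonneg _

lemma qq_le {x c : ℝ} (hc : 0 ≤ c) (h : x ≤ c ^ 4) : qq x ≤ c := by
  unfold qq
  rw [Real.sqrt_le_left hc, Real.sqrt_le_left (by positivity)]
  calc x ≤ c ^ 4 := h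
    _ = _ := by ring

lemma qq1 {x : ℝ} (h : x ≤ 1) : qq x ≤ 1 := qq_le zero_le_one (by simpa using h)

lemma tail_small {f : ℝ → ℝ} (hf : IntegrableOn f (Ioi 0)) {ε : ℝ} (hε : 0 < ε) :
    ∃ R0 : ℝ, 0 < R0 ∧ ∫ r in Ioi R0, f r ≤ ε := by
  have h1 := intervalIntegral_tendsto_integral_Ioi 0 hf tendsto_id
  have h2 := h1.eventually (lt_mem_nhds (show (∫ r in Ioi (0:ℝ), f r) - ε < ∫ r in Ioi (0:ℝ), f r by linarith))
  obtain ⟨R0, h3, h4⟩ := (h2.and (eventually_gt_atTop 0)).exists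
  refine ⟨R0, h4, ?_⟩
  have e : ∫ r in Ioi (0:ℝ), f r = (∫ r in Ioc 0 R0, f r) + ∫ r in Ioi R0, f r := by
    rw [← setIntegral_union (Ioc_disjoint_Ioi le_rfl) measurableSet_Ioi (hf.mono_set Ioc_subset_Ioi_self)
      (hf.mono_set (Ioi_subset_Ioi h4.le)), Ioc_union_Ioi_eq_Ioi h4.le]
  simp only [id] at h3
  rw [intervalIntegral.integral_of_le h4.le] at h3
  linarith

namespace Prof
variable {m : ℕ} {B q : ℝ} {g g1 k k1 : ℝ → ℂ}
lemma w1int (p : Prof m B g g1) (p' : Prof m B k k1) :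
    IntegrableOn (fun r => ‖g1 r - k1 r‖ ^ 2 * r) (Ioi 0) ∧
      ∫ r in Ioi (0:ℝ), ‖g1 r - k1 r‖ ^ 2 * r ≤ 4 * B := by
  have c1 := p.cont1
  have c2 := p'.cont1
  have hb : ∀ r : ℝ, 0 < r → ‖‖g1 r - k1 r‖ ^ 2 * r‖ ≤ 2 * (‖g1 r‖ ^ 2 * r) + 2 * (‖k1 r‖ ^ 2 * r) := by
    intro r hr
    rw [Real.norm_of_nonneg (by positivity)]
    have h1 := pow_le_pow_left₀ (norm_nonneg _) (norm_sub_le (g1 r) (k1 r)) 2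
    have h2 : ‖g1 r - k1 r‖ ^ 2 ≤ 2 * ‖g1 r‖ ^ 2 + 2 * ‖k1 r‖ ^ 2 := by
      nlinarith [sq_nonneg (‖g1 r‖ - ‖k1 r‖)]
    nlinarith
  have ii := iadd (p.int1.const_mul 2) (p'.int1.const_mul 2)
  have hii := dom_int (by fun_prop) ii hb
  refine ⟨hii, ?_⟩
  have := setIntegral_mono_on hii ii measurableSet_Ioi fun r hr => (le_abs_self _).trans (hb r hr)
  rw [integral_add (p.int1.const_mul 2) (p'.int1.const_mul 2), integral_const_mul, integral_const_mul] at this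
  linarith [p.grad, p'.grad]

lemma pr_sub (g k l : ℝ → ℂ) (r : ℝ) : pr (fun r => g r - k r) l r = pr g l r - pr k l r := by
  unfold pr; ring

lemma HR_diff (p : Prof m B g g1) (p' : Prof m B k k1) (c : Close B q g k) {R : ℝ} (hR : 0 < R) :
    ‖HR m R g g1 k k1 - HR m R k k1 k k1‖ ≤
      (∫ r in Ioi (0:ℝ), ‖g1 r - k1 r‖ * ‖k1 r‖ * r) + 2 * B / R + 14 * B ^ 4 * q := by
  have hB := p.B4
  have cw : Continuous fun r => g1 r - k1 r := p.cont1.sub p'.cont1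
  have w1 := p.w1int p'
  have ia := (cs_w measurableSet_Ioi le_rfl cw.norm p'.cont1.norm w1.1 p'.int1).1
  have ib := (cs_w measurableSet_Ioi le_rfl cw.norm p'.cont.norm w1.1 p'.int0).1
  have ja := pr_int cw p'.cont1 ia
  have jb := pr_int cw p'.cont ib
  have lb := cs_n measurableSet_Ioi le_rfl cw p'.cont w1.1 p'.int0 w1.2 p'.massB (x := 2 * B) (by linarith)
    (by nlinarith)
  have e1 : CI R (pr g1 k1) - CI R (pr k1 k1) = CI R (pr (fun r => g1 r - k1 r) k1) := by
    rw [← CI_sub (iint hR (p.p11 p')) (iint hR (p'.p11 p'))]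
    congr 1; funext r; exact (pr_sub _ _ _ _).symm
  have e2 : (∫ r in (0:ℝ)..R, pr g1 k r) - (∫ r in (0:ℝ)..R, pr k1 k r) =
      ∫ r in (0:ℝ)..R, pr (fun r => g1 r - k1 r) k r := by
    rw [← intervalIntegral.integral_sub (iint hR (p.p10 p')) (iint hR (p'.p10 p'))]
    congr 1; funext r; exact (pr_sub _ _ _ _).symm
  have e3 : CI R (pot m g k) - CI R (pot m k k) = CI R (fun r => pot m g k r - pot m k k r) :=
    (CI_sub (iint hR (p.pot_int p').1) (iint hR (p'.pot_int p').1)).symm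
  have e : HR m R g g1 k k1 - HR m R k k1 k k1 = CI R (pr (fun r => g1 r - k1 r) k1) -
      ((1 / R : ℝ) : ℂ) * (∫ r in (0:ℝ)..R, pr (fun r => g1 r - k1 r) k r) +
      CI R (fun r => pot m g k r - pot m k k r) := by
    rw [← e1, ← e2, ← e3]; unfold HR; ring
  rw [e]
  have b1 := CI_le hR ja
  have b2 := int_le hR jb
  have b3 := CI_le hR ((p.pot_int p').1.sub (p'.pot_int p').1)
  have b4 := p.pot_diff p' c
  rw [pr_int_norm] at b1 b2
  have b5 : ‖((1 / R : ℝ) : ℂ) * (∫ r in (0:ℝ)..R, pr (fun r => g1 r - k1 r) k r)‖ ≤ 2 * B / R := by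
    rw [norm_mul, Complex.norm_real, Real.norm_of_nonneg (by positivity)]
    rw [one_div, inv_mul_eq_div]
    gcongr
    exact b2.trans lb
  have b6 : ‖CI R (fun r => pot m g k r - pot m k k r)‖ ≤ 14 * B ^ 4 * q := b3.trans b4
  refine (norm_add_le _ _).trans ?_
  have := norm_sub_le (CI R (pr (fun r => g1 r - k1 r) k1)) (((1 / R : ℝ) : ℂ) * (∫ r in (0:ℝ)..R, pr (fun r => g1 r - k1 r) k r))
  linarith
end Prof

namespace Sol
variable {m : ℕ} {B a b : ℝ} {v vt vr vrr : ℝ → ℝ → ℂ}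

lemma gradtail (S : Sol m B a b v vt vr vrr) {t ε : ℝ} (ht : t ∈ Ioo a b) (hε : 0 < ε) :
    ∃ δ : ℝ, 0 < δ ∧ ∀ σ ∈ Ioo a b, |σ - t| ≤ δ →
      ∫ r in Ioi (0:ℝ), ‖vr σ r - vr t r‖ * ‖vr t r‖ * r ≤ ε := by
  have p' := S.prof t ht
  have hB := p'.B4
  obtain ⟨R0, hR0, hT⟩ := tail_small p'.int1 (show 0 < ε ^ 2 / (16 * B) by positivity)
  obtain ⟨L, hL0, hL⟩ := S.lip R0
  set C1 := ∫ r in Ioc 0 R0, ‖vr t r‖ * r with hC1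
  have hc1 : Continuous (vr t) := p'.cont1
  have iC1 : IntegrableOn (fun r => ‖vr t r‖ * r) (Ioc 0 R0) :=
    (Continuous.integrableOn_Ioc (by fun_prop))
  have hC10 : 0 ≤ C1 := setIntegral_nonneg measurableSet_Ioc fun r hr => mul_nonneg (norm_nonneg _) hr.1.le
  refine ⟨ε / (2 * (L * C1 + 1)), by positivity, fun σ hσ hd => ?_⟩
  have p := S.prof σ hσ
  have cw : Continuous fun r => vr σ r - vr t r := p.cont1.sub p'.cont1
  have w1 := p.w1int p'
  have ia := (cs_w measurableSet_Ioi le_rfl cw.norm p'.cont1.norm w1.1 p'.int1).1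
  have hs : Ioi R0 ⊆ Ioi (0:ℝ) := Ioi_subset_Ioi hR0.le
  have e : ∫ r in Ioi (0:ℝ), ‖vr σ r - vr t r‖ * ‖vr t r‖ * r = (∫ r in Ioc 0 R0, ‖vr σ r - vr t r‖ * ‖vr t r‖ * r) +
      ∫ r in Ioi R0, ‖vr σ r - vr t r‖ * ‖vr t r‖ * r := by
    rw [← setIntegral_union (Ioc_disjoint_Ioi le_rfl) measurableSet_Ioi (ia.mono_set Ioc_subset_Ioi_self)
      (ia.mono_set hs), Ioc_union_Ioi_eq_Ioi hR0.le]
  have h1 : ∫ r in Ioc 0 R0, ‖vr σ r - vr t r‖ * ‖vr t r‖ * r ≤ ∫ r in Ioc 0 R0, (L * |σ - t|) * (‖vr t r‖ * r) := by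
    refine setIntegral_mono_on (ia.mono_set Ioc_subset_Ioi_self) (iC1.const_mul _) measurableSet_Ioc fun r hr => ?_
    rw [mul_assoc]
    exact mul_le_mul_of_nonneg_right (hL σ hσ t ht r ⟨hr.1.le, hr.2⟩) (mul_nonneg (norm_nonneg _) hr.1.le)
  rw [integral_const_mul] at h1
  have h2 : ∫ r in Ioi R0, ‖vr σ r - vr t r‖ * ‖vr t r‖ * r ≤ ε / 2 := by
    refine cs_n measurableSet_Ioi hs cw p'.cont1 (w1.1.mono_set hs) (p'.int1.mono_set hs) (a := 4 * B) ?_ hT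
      (by positivity) ?_
    · refine le_trans (setIntegral_mono_set w1.1 ?_ (LE.le.eventuallyLE hs)) w1.2
      refine (ae_restrict_iff' measurableSet_Ioi).2 (Eventually.of_forall fun s hs => ?_)
      have : 0 < s := hs
      simp only [Pi.zero_apply]
      positivity
    · apply le_of_eq
      field_simp
      ring
  have h3 : L * |σ - t| * C1 ≤ ε / 2 := by
    rw [le_div_iff₀ (by positivity)] at hd
    have : 0 ≤ |σ - t| := abs_nonneg _
    nlinarith
  linarith

lemma HRd (S : Sol m B a b v vt vr vrr) {t ε : ℝ} (ht : t ∈ Ioo a b) (hε : 0 < ε) :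
    ∃ δ : ℝ, 0 < δ ∧ ∃ R1 : ℝ, 0 < R1 ∧ ∀ σ ∈ Ioo a b, |σ - t| ≤ δ → ∀ R, R1 ≤ R →
      ‖HR m R (v σ) (vr σ) (v t) (vr t) - HR m R (v t) (vr t) (v t) (vr t)‖ ≤ ε := by
  have p' := S.prof t ht
  have hB := p'.B4
  set B1 := 100 * B ^ 4 with hB1
  have hBB : B ≤ B1 := by
    have hB3 : B ≤ B ^ 4 := by simpa using pow_le_pow_right₀ (by linarith : 1 ≤ B) (by norm_num : 1 ≤ 4)
    linarith
  have hB10 : 0 < B1 := by positivity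
  obtain ⟨δ1, hδ1, h1⟩ := S.gradtail ht (show 0 < ε / 3 by positivity)
  set c := ε / (3 * (14 * B1 ^ 4)) with hc
  have hc0 : 0 < c := by positivity
  refine ⟨min δ1 (min 1 (c ^ 4)), by positivity, 6 * B1 / ε, by positivity, fun σ hσ hd R hR => ?_⟩
  have d1 : |σ - t| ≤ δ1 := hd.trans (min_le_left _ _)
  have d2 : |σ - t| ≤ 1 := hd.trans ((min_le_right _ _).trans (min_le_left _ _))
  have d3 : |σ - t| ≤ c ^ 4 := hd.trans ((min_le_right _ _).trans (min_le_right _ _))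
  have hR0 : 0 < R := lt_of_lt_of_le (by positivity) hR
  have cl := S.close hσ ht (qq0 |σ - t|) (qq1 d2) (qq4 (abs_nonneg _)).symm
  have := ((S.prof σ hσ).mono hBB).HR_diff (p'.mono hBB) cl hR0
  have a1 := h1 σ hσ d1
  have a2 : 2 * B1 / R ≤ ε / 3 := by
    rw [div_le_iff₀ hR0]
    rw [div_le_iff₀ hε] at hR
    linarith
  have a3 : 14 * B1 ^ 4 * qq |σ - t| ≤ ε / 3 := by
    have : 14 * B1 ^ 4 * qq |σ - t| ≤ 14 * B1 ^ 4 * c := by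
      have := qq_le hc0.le d3
      gcongr
    have e : 14 * B1 ^ 4 * c = ε / 3 := by rw [hc]; field_simp
    linarith
  linarith

lemma Kasym (S : Sol m B a b v vt vr vrr) {t ε : ℝ} (ht : t ∈ Ioo a b) (hε : 0 < ε) :
    ∃ δ : ℝ, 0 < δ ∧ ∀ h : ℝ, 0 < h → h ≤ δ → t + h < b →
      |(∫ r in Ioi (0:ℝ), pr (v (t + h)) (v t) r).im + h * Ff m (v t) (vr t)| ≤ ε * h := by
  obtain ⟨δ, hδ, R1, hR1, H⟩ := S.HRd ht hε
  refine ⟨δ, hδ, fun h h0 hle hb => ?_⟩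
  have p' := S.prof t ht
  have ht' : t + h ∈ Ioo a b := ⟨by linarith [ht.1], hb⟩
  have sub : ∀ σ ∈ Icc t (t+h), σ ∈ Ioo a b := fun σ hσ => ⟨by linarith [ht.1, hσ.1], by linarith [hσ.2]⟩
  have key : ∀ R, R1 ≤ R → ‖(CI R (pr (v (t+h)) (v t)) - CI R (pr (v t) (v t))) +
      Complex.I * HR m R (v t) (vr t) (v t) (vr t) * (h:ℂ)‖ ≤ ε * h := by
    intro R hR
    have hR0 : 0 < R := by linarith
    have := norm_image_sub_le_of_norm_deriv_le_segment' (a := t) (b := t + h) (C := ε)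
      (f := fun σ => CI R (pr (v σ) (v t)) + Complex.I * HR m R (v t) (vr t) (v t) (vr t) * (σ:ℂ))
      (f' := fun σ => -Complex.I * HR m R (v σ) (vr σ) (v t) (vr t) +
        Complex.I * HR m R (v t) (vr t) (v t) (vr t) * ((1:ℝ):ℂ))
      (fun σ hσ => ((S.gR (sub σ hσ) ht hR0).add
        ((HasDerivAt.ofReal_comp (hasDerivAt_id σ)).const_mul _)).hasDerivWithinAt)
      (fun σ hσ => by
        have e : -Complex.I * HR m R (v σ) (vr σ) (v t) (vr t) +
          Complex.I * HR m R (v t) (vr t) (v t) (vr t) * ((1:ℝ):ℂ) =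
          -Complex.I * (HR m R (v σ) (vr σ) (v t) (vr t) - HR m R (v t) (vr t) (v t) (vr t)) := by
          push_cast; ring
        rw [e, norm_mul, norm_neg, Complex.norm_I, one_mul]
        refine H σ (sub σ ⟨hσ.1, hσ.2.le⟩) ?_ R hR
        rw [abs_of_nonneg (by linarith [hσ.1])]
        linarith [hσ.2]) (t + h) ⟨by linarith, le_rfl⟩
    rw [add_sub_cancel_left] at this
    have e : (CI R (pr (v (t+h)) (v t)) - CI R (pr (v t) (v t))) +
      Complex.I * HR m R (v t) (vr t) (v t) (vr t) * (h:ℂ) =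
      (CI R (pr (v (t+h)) (v t)) + Complex.I * HR m R (v t) (vr t) (v t) (vr t) * ((t+h:ℝ):ℂ)) -
      (CI R (pr (v t) (v t)) + Complex.I * HR m R (v t) (vr t) (v t) (vr t) * (t:ℂ)) := by
      push_cast; ring
    rw [e]
    exact this
  have l1 := CI_tendsto ((S.prof _ ht').p00 p')
  have l2 := CI_tendsto (p'.p00 p')
  have l3 := (p'.HR_lim.const_mul Complex.I).mul_const (h:ℂ)
  have l4 := le_of_tendsto ((l1.sub l2).add l3).norm (by
    filter_upwards [eventually_ge_atTop R1] with R hR using key R hR)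
  rw [mass_pr p'] at l4
  refine le_trans (le_of_eq ?_) ((Complex.abs_im_le_norm _).trans l4)
  congr 1
  simp
  ring

lemma Scont (S : Sol m B a b v vt vr vrr) : ContinuousOn (fun t => Sf m (v t)) (Ioo a b) := by
  intro t ht
  have p' := S.prof t ht
  have hB := p'.B4
  set B1 := 100 * B ^ 4 with hB1
  have hBB : B ≤ B1 := by
    have hB3 : B ≤ B ^ 4 := by simpa using pow_le_pow_right₀ (by linarith : 1 ≤ B) (by norm_num : 1 ≤ 4)
    linarith
  have l : Tendsto (fun s => 8 * B1 ^ 4 * qq |s - t|) (nhdsWithin t (Ioo a b)) (nhds 0) := by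
    have : Continuous fun s => 8 * B1 ^ 4 * qq |s - t| := by unfold qq; fun_prop
    have h := this.tendsto t
    simp only [sub_self, abs_zero, qq, Real.sqrt_zero, mul_zero] at h
    exact h.mono_left nhdsWithin_le_nhds
  rw [ContinuousWithinAt, tendsto_iff_norm_sub_tendsto_zero]
  refine squeeze_zero' (Eventually.of_forall fun _ => norm_nonneg _) ?_ l
  have h1 : ∀ᶠ s in nhdsWithin t (Ioo a b), |s - t| < 1 := by
    have : {s : ℝ | |s - t| < 1} ∈ nhds t := by
      have := Metric.ball_mem_nhds t (zero_lt_one' ℝ)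
      simpa [Metric.ball, Real.dist_eq] using this
    exact nhdsWithin_le_nhds this
  filter_upwards [h1, self_mem_nhdsWithin] with s hs1 hs
  exact ((S.prof s hs).mono hBB).dS (p'.mono hBB) (S.close hs ht (qq0 _) (qq1 hs1.le) (qq4 (abs_nonneg _)).symm)

lemma Kint (S : Sol m B a b v vt vr vrr) {t1 t2 q : ℝ} (q0 : 0 < q) (q1 : q ≤ 1) (h12 : t1 < t2)
    (ha : a < t1) (hb : t2 < b - q ^ 4) :
    |(∫ r in Ioi (0:ℝ), pr (v (t2 + q ^ 4)) (v t2) r).im - (∫ r in Ioi (0:ℝ), pr (v (t1 + q ^ 4)) (v t1) r).im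
      - ∫ t in t1..t2, (Sf m (v (t + q ^ 4)) - Sf m (v t))| ≤ 5 * (100 * B ^ 4) ^ 4 * q ^ 5 * (t2 - t1) := by
  set h := q ^ 4 with hh
  have h0 : 0 < h := by positivity
  have i0 : ∀ σ ∈ Icc t1 t2, σ ∈ Ioo a (b - h) := fun σ hσ => ⟨by linarith [hσ.1], by linarith [hσ.2]⟩
  have i1 : ∀ σ ∈ Icc t1 t2, σ ∈ Ioo a b := fun σ hσ => ⟨by linarith [hσ.1], by linarith [hσ.2]⟩
  have i2 : ∀ σ ∈ Icc t1 t2, σ + h ∈ Ioo a b := fun σ hσ => ⟨by linarith [hσ.1], by linarith [hσ.2]⟩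
  have m1 : t1 ∈ Icc t1 t2 := ⟨le_rfl, h12.le⟩
  have m2 : t2 ∈ Icc t1 t2 := ⟨h12.le, le_rfl⟩
  have hB := (S.prof t1 (i1 t1 m1)).B4
  set B1 := 100 * B ^ 4 with hB1
  have hBB : B ≤ B1 := by
    have hB3 : B ≤ B ^ 4 := by simpa using pow_le_pow_right₀ (by linarith : 1 ≤ B) (by norm_num : 1 ≤ 4)
    linarith
  set D : ℝ → ℝ → ℂ := fun R t => -Complex.I * (HR m R (v (t+h)) (vr (t+h)) (v t) (vr t) -
        (starRingEnd ℂ) (HR m R (v t) (vr t) (v (t+h)) (vr (t+h)))) with hD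
  set k : ℝ → ℝ → ℝ := fun R t => (CI R (pr (v (t + h)) (v t))).im with hk
  have hder : ∀ R, 0 < R → ∀ t ∈ Icc t1 t2, HasDerivAt (k R) (D R t).im t := by
    intro R hR t ht
    have d := S.kR h0 (i0 t ht) hR
    have := (Complex.imCLM.hasFDerivAt).comp_hasDerivAt t d
    exact this
  have hDb : ∀ R, 1 ≤ R → ∀ t ∈ Icc t1 t2, ‖(D R t).im‖ ≤ 20 * B ^ 4 := by
    intro R hR t ht
    refine (Complex.abs_im_le_norm _).trans ?_
    simp only [hD]
    rw [norm_mul, norm_neg, Complex.norm_I, one_mul]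
    refine (norm_sub_le _ _).trans ?_
    rw [RCLike.norm_conj]
    linarith [(S.prof _ (i2 t ht)).HR_le (S.prof t (i1 t ht)) hR, (S.prof t (i1 t ht)).HR_le (S.prof _ (i2 t ht)) hR]
  have hDm : ∀ R, 0 < R → AEStronglyMeasurable (fun t => (D R t).im) (volume.restrict (Ioc t1 t2)) := by
    intro R hR
    refine AEStronglyMeasurable.congr (stronglyMeasurable_deriv (k R)).aestronglyMeasurable ?_
    refine (ae_restrict_iff' measurableSet_Ioc).2 (Eventually.of_forall fun t ht => ?_)
    exact (hder R hR t ⟨ht.1.le, ht.2⟩).deriv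
  have hDi : ∀ R, 1 ≤ R → IntervalIntegrable (fun t => (D R t).im) volume t1 t2 := by
    intro R hR
    rw [intervalIntegrable_iff_integrableOn_Ioc_of_le h12.le]
    refine Integrable.mono' (integrable_const (20 * B ^ 4)) (hDm R (by linarith)) ?_
    exact (ae_restrict_iff' measurableSet_Ioc).2 (Eventually.of_forall fun t ht => hDb R hR t ⟨ht.1.le, ht.2⟩)
  have cS1 : ContinuousOn (fun t => Sf m (v t)) (Icc t1 t2) := S.Scont.mono i1
  have cS2 : ContinuousOn (fun t => Sf m (v (t + h))) (Icc t1 t2) :=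
    S.Scont.comp (f := fun t => t + h) (by fun_prop) i2
  have cS : ContinuousOn (fun t => Sf m (v (t + h)) - Sf m (v t)) (Icc t1 t2) := cS2.sub cS1
  have iS : IntervalIntegrable (fun t => Sf m (v (t + h)) - Sf m (v t)) volume t1 t2 := by
    refine ContinuousOn.intervalIntegrable ?_
    rwa [uIcc_of_le h12.le]
  obtain ⟨C, hC⟩ := isCompact_Icc.exists_bound_of_continuousOn cS
  set X : ℝ → ℝ := fun t => (-Complex.I * ∫ r in Ioi (0:ℝ), ((Wf m (v (t+h)) r - Wf m (v t) r : ℝ) : ℂ) *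
    pr (v (t+h)) (v t) r).im - (Sf m (v (t + h)) - Sf m (v t)) with hX
  have lim : Tendsto (fun R => ∫ t in t1..t2, ((D R t).im - (Sf m (v (t + h)) - Sf m (v t)))) atTop
      (nhds (∫ t in t1..t2, X t)) := by
    refine intervalIntegral.tendsto_integral_filter_of_dominated_convergence (fun _ => 20 * B ^ 4 + C) ?_ ?_
      intervalIntegrable_const ?_
    · filter_upwards [eventually_ge_atTop 1] with R hR
      rw [uIoc_of_le h12.le]
      refine (hDm R (by linarith)).sub ?_
      exact (cS.mono Ioc_subset_Icc_self).aestronglyMeasurable measurableSet_Ioc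
    · filter_upwards [eventually_ge_atTop 1] with R hR
      refine Eventually.of_forall fun t ht => ?_
      rw [uIoc_of_le h12.le] at ht
      have ht' : t ∈ Icc t1 t2 := ⟨ht.1.le, ht.2⟩
      exact (norm_sub_le _ _).trans (add_le_add (hDb R hR t ht') (hC t ht'))
    · refine Eventually.of_forall fun t ht => ?_
      rw [uIoc_of_le h12.le] at ht
      have ht' : t ∈ Icc t1 t2 := ⟨ht.1.le, ht.2⟩
      have l := ((S.prof _ (i2 t ht')).HR_anti (S.prof t (i1 t ht'))).const_mul (-Complex.I)
      exact ((Complex.continuous_im.tendsto _).comp l).sub_const _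
  have lim2 : Tendsto (fun R => k R t2 - k R t1 - ∫ t in t1..t2, (Sf m (v (t + h)) - Sf m (v t))) atTop
      (nhds (∫ t in t1..t2, X t)) := by
    refine lim.congr' ?_
    filter_upwards [eventually_ge_atTop 1] with R hR
    rw [intervalIntegral.integral_sub (hDi R hR) iS, intervalIntegral.integral_eq_sub_of_hasDerivAt _ (hDi R hR)]
    intro t ht
    rw [uIcc_of_le h12.le] at ht
    exact hder R (by linarith) t ht
  have kl : ∀ t ∈ Icc t1 t2, Tendsto (fun R => k R t) atTop (nhds (∫ r in Ioi (0:ℝ), pr (v (t + h)) (v t) r).im) := by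
    intro t ht
    exact (Complex.continuous_im.tendsto _).comp (CI_tendsto ((S.prof _ (i2 t ht)).p00 (S.prof t (i1 t ht))))
  have lim3 := ((kl t2 m2).sub (kl t1 m1)).sub_const (∫ t in t1..t2, (Sf m (v (t + h)) - Sf m (v t)))
  rw [tendsto_nhds_unique lim3 lim2, ← Real.norm_eq_abs]
  have hXb : ∀ t ∈ uIoc t1 t2, ‖X t‖ ≤ 5 * B1 ^ 4 * q ^ 5 := by
    intro t ht
    rw [uIoc_of_le h12.le] at ht
    have ht' : t ∈ Icc t1 t2 := ⟨ht.1.le, ht.2⟩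
    have p := (S.prof _ (i2 t ht')).mono hBB
    have p' := (S.prof t (i1 t ht')).mono hBB
    have cl := S.close (i2 t ht') (i1 t ht') q0.le q1 (by rw [add_sub_cancel_left, abs_of_pos h0])
    have ky := p.key p' cl
    have ii : IntegrableOn (fun r => ((Wf m (v (t+h)) r - Wf m (v t) r : ℝ) : ℂ) * pr (v (t+h)) (v t) r) (Ioi 0) := by
      have ip3 : IntegrableOn (fun r => (starRingEnd ℂ) (pot m (v t) (v (t+h)) r)) (Ioi 0) := by
        refine dom_int (Complex.continuous_conj.comp_continuousOn (p'.pot_cont p)) (p'.pot_int p).1.norm fun r _ => ?_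
        rw [RCLike.norm_conj]
      exact ((p.pot_int p').1.sub ip3).congr (Eventually.of_forall fun r => pot_conj m _ _ r)
    have e : ∫ r in Ioi (0:ℝ), (Wf m (v (t+h)) r - Wf m (v t) r) * (v (t+h) r * (starRingEnd ℂ) (v t r)).re * r =
        (∫ r in Ioi (0:ℝ), ((Wf m (v (t+h)) r - Wf m (v t) r : ℝ) : ℂ) * pr (v (t+h)) (v t) r).re := by
      rw [← Complex.reCLM_apply, ← ContinuousLinearMap.integral_comp_comm _ ii]
      congr 1
      funext r
      rw [Complex.reCLM_apply, Complex.re_ofReal_mul]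
      unfold pr
      rw [Complex.re_mul_ofReal]
      ring
    rw [e] at ky
    have e2 : X t = -((∫ r in Ioi (0:ℝ), ((Wf m (v (t+h)) r - Wf m (v t) r : ℝ) : ℂ) * pr (v (t+h)) (v t) r).re +
        (Sf m (v (t + h)) - Sf m (v t))) := by
      simp only [hX]
      rw [Complex.mul_im]
      simp only [Complex.neg_re, Complex.neg_im, Complex.I_re, Complex.I_im]
      ring
    rw [e2, norm_neg]
    exact ky
  have := intervalIntegral.norm_integral_le_of_norm_le_const hXb
  rwa [abs_of_pos (by linarith : 0 < t2 - t1)] at this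

lemma Savg (S : Sol m B a b v vt vr vrr) {t ε : ℝ} (ht : t ∈ Ioo a b) (hε : 0 < ε) :
    ∃ δ : ℝ, 0 < δ ∧ ∀ h : ℝ, 0 < h → h ≤ δ → t + h < b →
      |(∫ s in t..(t+h), Sf m (v s)) - h * Sf m (v t)| ≤ ε * h := by
  have hc := S.Scont t ht
  rw [Metric.continuousWithinAt_iff] at hc
  obtain ⟨δ, hδ, H⟩ := hc ε hε
  refine ⟨δ / 2, by positivity, fun h h0 hle hb => ?_⟩
  have sub : ∀ σ ∈ Icc t (t+h), σ ∈ Ioo a b := fun σ hσ => ⟨by linarith [ht.1, hσ.1], by linarith [hσ.2]⟩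
  have i : IntervalIntegrable (fun s => Sf m (v s)) volume t (t+h) := by
    refine ContinuousOn.intervalIntegrable ?_
    rw [uIcc_of_le (by linarith)]
    exact S.Scont.mono sub
  have e : (∫ s in t..(t+h), Sf m (v s)) - h * Sf m (v t) = ∫ s in t..(t+h), (Sf m (v s) - Sf m (v t)) := by
    rw [intervalIntegral.integral_sub i intervalIntegrable_const, intervalIntegral.integral_const]
    simp
  rw [e, ← Real.norm_eq_abs]
  have := intervalIntegral.norm_integral_le_of_norm_le_const (a := t) (b := t + h) (C := ε)
    (f := fun s => Sf m (v s) - Sf m (v t)) (by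
      intro s hs
      rw [uIoc_of_le (by linarith)] at hs
      have := H (sub s ⟨hs.1.le, hs.2⟩) (by
        rw [Real.dist_eq, abs_of_pos (by linarith [hs.1])]; linarith [hs.2])
      rw [Real.dist_eq] at this
      exact this.le)
  rwa [add_sub_cancel_left, abs_of_pos h0] at this

lemma conserve (S : Sol m B a b v vt vr vrr) {t1 t2 : ℝ} (h1 : a < t1) (h12 : t1 < t2) (h2 : t2 < b) :
    Ff m (v t1) (vr t1) + Sf m (v t1) = Ff m (v t2) (vr t2) + Sf m (v t2) := by
  have ht1 : t1 ∈ Ioo a b := ⟨h1, by linarith⟩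
  have ht2 : t2 ∈ Ioo a b := ⟨by linarith, h2⟩
  have hB := (S.prof t1 ht1).B4
  refine eq_of_abs_sub_le_all fun ε hε => ?_
  obtain ⟨d1, hd1, K1⟩ := S.Kasym ht1 (show 0 < ε / 5 by positivity)
  obtain ⟨d2, hd2, K2⟩ := S.Kasym ht2 (show 0 < ε / 5 by positivity)
  obtain ⟨d3, hd3, S1⟩ := S.Savg ht1 (show 0 < ε / 5 by positivity)
  obtain ⟨d4, hd4, S2⟩ := S.Savg ht2 (show 0 < ε / 5 by positivity)
  set C := 5 * (100 * B ^ 4) ^ 4 * (t2 - t1) with hC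
  have hC0 : 0 < C := by have : 0 < t2 - t1 := by linarith
                         positivity
  obtain ⟨q, hq0, hq1, e1, e2, e3, e4, e5, e6⟩ : ∃ q : ℝ, 0 < q ∧ q ≤ 1 ∧ q ^ 4 ≤ d1 ∧ q ^ 4 ≤ d2 ∧ q ^ 4 ≤ d3 ∧
      q ^ 4 ≤ d4 ∧ q ^ 4 < b - t2 ∧ C * q ≤ ε / 5 := by
    set x := min (min (min d1 d2) (min d3 d4)) (min ((b - t2) / 2) (ε / 5 / C)) with hx
    have hb : 0 < (b - t2) / 2 := by linarith
    have hx0 : 0 < x := by positivity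
    have hqx : min 1 x ^ 4 ≤ min 1 x := by
      simpa using pow_le_pow_of_le_one (by positivity : 0 ≤ min 1 x) (min_le_left _ _) (by norm_num : 1 ≤ 4)
    have g : min 1 x ≤ x := min_le_right _ _
    have a1 : x ≤ d1 := (min_le_left _ _).trans ((min_le_left _ _).trans (min_le_left _ _))
    have a2 : x ≤ d2 := (min_le_left _ _).trans ((min_le_left _ _).trans (min_le_right _ _))
    have a3 : x ≤ d3 := (min_le_left _ _).trans ((min_le_right _ _).trans (min_le_left _ _))
    have a4 : x ≤ d4 := (min_le_left _ _).trans ((min_le_right _ _).trans (min_le_right _ _))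
    have a5 : x ≤ (b - t2) / 2 := (min_le_right _ _).trans (min_le_left _ _)
    have a6 : x ≤ ε / 5 / C := (min_le_right _ _).trans (min_le_right _ _)
    refine ⟨min 1 x, by positivity, min_le_left _ _, by linarith, by linarith, by linarith, by linarith, by linarith, ?_⟩
    rw [le_div_iff₀ hC0] at a6
    nlinarith
  have h0 : 0 < q ^ 4 := by positivity
  have k1 := K1 (q ^ 4) h0 e1 (by linarith)
  have k2 := K2 (q ^ 4) h0 e2 (by linarith)
  have s1 := S1 (q ^ 4) h0 e3 (by linarith)
  have s2 := S2 (q ^ 4) h0 e4 (by linarith)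
  have ki := S.Kint hq0 hq1 h12 h1 (by linarith)
  have ci : ∀ x y, x ∈ Ioo a b → y ∈ Ioo a b → IntervalIntegrable (fun s => Sf m (v s)) volume x y := by
    intro x y hx hy
    refine ContinuousOn.intervalIntegrable (S.Scont.mono ?_)
    intro z hz
    rcases le_total x y with h | h
    · rw [uIcc_of_le h] at hz; exact ⟨by linarith [hx.1, hz.1], by linarith [hy.2, hz.2]⟩
    · rw [uIcc_of_ge h] at hz; exact ⟨by linarith [hy.1, hz.1], by linarith [hx.2, hz.2]⟩
  have ht1' : t1 + q ^ 4 ∈ Ioo a b := ⟨by linarith, by linarith⟩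
  have ht2' : t2 + q ^ 4 ∈ Ioo a b := ⟨by linarith, by linarith⟩
  have eI : ∫ t in t1..t2, (Sf m (v (t + q ^ 4)) - Sf m (v t)) =
      (∫ s in t2..(t2 + q ^ 4), Sf m (v s)) - ∫ s in t1..(t1 + q ^ 4), Sf m (v s) := by
    have ish : IntervalIntegrable (fun t => Sf m (v (t + q ^ 4))) volume t1 t2 := by
      have := (ci _ _ ht1' ht2').comp_add_right (q ^ 4)
      simpa using this
    rw [intervalIntegral.integral_sub ish (ci _ _ ht1 ht2),
      intervalIntegral.integral_comp_add_right (fun s => Sf m (v s)) (q ^ 4)]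
    have a1 := intervalIntegral.integral_add_adjacent_intervals (ci _ _ ht1 ht1') (ci _ _ ht1' ht2')
    have a2 := intervalIntegral.integral_add_adjacent_intervals (ci _ _ ht1 ht2) (ci _ _ ht2 ht2')
    linarith
  rw [eI] at ki
  have e7 : 5 * (100 * B ^ 4) ^ 4 * q ^ 5 * (t2 - t1) ≤ ε / 5 * q ^ 4 := by
    have : 5 * (100 * B ^ 4) ^ 4 * q ^ 5 * (t2 - t1) = (C * q) * q ^ 4 := by rw [hC]; ring
    rw [this]
    exact mul_le_mul_of_nonneg_right e6 h0.le
  have fin : |q ^ 4 * ((Ff m (v t1) (vr t1) + Sf m (v t1)) - (Ff m (v t2) (vr t2) + Sf m (v t2)))| ≤ q ^ 4 * ε := by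
    rw [abs_le] at k1 k2 s1 s2 ki ⊢
    constructor <;> linarith [k1.1, k1.2, k2.1, k2.2, s1.1, s1.2, s2.1, s2.2, ki.1, ki.2]
  rw [abs_mul, abs_of_pos h0] at fin
  exact le_of_mul_le_mul_left fin h0

end Sol

open MeasureTheory Set Filter

noncomputable def pd (e : ℝ × ℝ) (F : ℝ × ℝ → ℂ) (p : ℝ × ℝ) : ℂ := fderiv ℝ F p e

lemma pd_smooth {O : Set (ℝ × ℝ)} (hO : IsOpen O) {F : ℝ × ℝ → ℂ} (e : ℝ × ℝ)
    (hF : ContDiffOn ℝ (⊤ : ℕ∞) F O) : ContDiffOn ℝ (⊤ : ℕ∞) (pd e F) O := by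
  have := hF.fderiv_of_isOpen (m := (⊤ : ℕ∞)) hO (by norm_cast)
  exact this.clm_apply contDiffOn_const

lemma pd_t {O : Set (ℝ × ℝ)} (hO : IsOpen O) {F : ℝ × ℝ → ℂ}
    (hF : ContDiffOn ℝ (⊤ : ℕ∞) F O) {t r : ℝ} (h : (t, r) ∈ O) :
    HasDerivAt (fun s => F (s, r)) (pd (1, 0) F (t, r)) t := by
  have h1 : HasFDerivAt F (fderiv ℝ F (t, r)) (t, r) :=
    ((hF.contDiffAt (hO.mem_nhds h)).differentiableAt (by simp)).hasFDerivAt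
  exact h1.comp_hasDerivAt (f := fun s : ℝ => (s, r)) t ((hasDerivAt_id t).prodMk (hasDerivAt_const t r))

lemma pd_r {O : Set (ℝ × ℝ)} (hO : IsOpen O) {F : ℝ × ℝ → ℂ}
    (hF : ContDiffOn ℝ (⊤ : ℕ∞) F O) {t r : ℝ} (h : (t, r) ∈ O) :
    HasDerivAt (fun s => F (t, s)) (pd (0, 1) F (t, r)) r := by
  have h1 : HasFDerivAt F (fderiv ℝ F (t, r)) (t, r) :=
    ((hF.contDiffAt (hO.mem_nhds h)).differentiableAt (by simp)).hasFDerivAt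
  exact h1.comp_hasDerivAt (f := fun s : ℝ => (t, s)) r ((hasDerivAt_const r t).prodMk (hasDerivAt_id r))

lemma mkSol {m : ℕ} {F : ℝ × ℝ → ℂ} (hF : ContDiffOn ℝ (⊤ : ℕ∞) F (Ioo (-1 : ℝ) 0 ×ˢ univ))
    {a b G : ℝ} (ha : -1 < a) (hb : b < 0) (h0 : ∀ t ∈ Ioo (-1 : ℝ) 0, F (t, 0) = 0)
    (i0 : ∀ t ∈ Ioo a b, IntegrableOn (fun r => ‖F (t, r)‖ ^ 2 * r) (Ioi 0))
    (i1 : ∀ t ∈ Ioo a b, IntegrableOn (fun r => ‖pd (0, 1) F (t, r)‖ ^ 2 * r) (Ioi 0))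
    (hm : ∀ t ∈ Ioo a b, ∫ r in Ioi (0:ℝ), ‖F (t, r)‖ ^ 2 * r = 4 * (m + 1))
    (hG : ∀ t ∈ Ioo a b, ∫ r in Ioi (0:ℝ), ‖pd (0, 1) F (t, r)‖ ^ 2 * r ≤ G)
    (heq : ∀ B, ∀ t ∈ Ioo a b, Prof m B (fun r => F (t, r)) (fun r => pd (0, 1) F (t, r)) → ∀ r : ℝ, 0 < r →
      Complex.I * pd (1, 0) F (t, r) + pd (0, 1) (pd (0, 1) F) (t, r) + pd (0, 1) F (t, r) / r -
      (((m:ℝ) ^ 2 / r ^ 2 + Wf m (fun r => F (t, r)) r : ℝ) : ℂ) * F (t, r) = 0) :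
    ∃ B, Sol m B a b (fun t r => F (t, r)) (fun t r => pd (1, 0) F (t, r)) (fun t r => pd (0, 1) F (t, r))
      (fun t r => pd (0, 1) (pd (0, 1) F) (t, r)) := by
  have hO : IsOpen (Ioo (-1 : ℝ) 0 ×ˢ (univ : Set ℝ)) := isOpen_Ioo.prod isOpen_univ
  have hFr := pd_smooth hO (0, 1) hF
  have hFt := pd_smooth hO (1, 0) hF
  have hFrr := pd_smooth hO (0, 1) hFr
  have hFrt := pd_smooth hO (1, 0) hFr
  have cpt : ∀ R0 : ℝ, IsCompact (Icc a b ×ˢ Icc 0 R0) := fun R0 => isCompact_Icc.prod isCompact_Icc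
  have sub : ∀ R0 : ℝ, Icc a b ×ˢ Icc 0 R0 ⊆ Ioo (-1 : ℝ) 0 ×ˢ (univ : Set ℝ) := by
    rintro R0 ⟨t, r⟩ h
    exact ⟨⟨by linarith [h.1.1], by linarith [h.1.2]⟩, mem_univ _⟩
  have sub' : ∀ t ∈ Ioo a b, t ∈ Ioo (-1 : ℝ) 0 := fun t h => ⟨by linarith [h.1], by linarith [h.2]⟩
  have memO : ∀ t ∈ Ioo a b, ∀ r : ℝ, (t, r) ∈ Ioo (-1 : ℝ) 0 ×ˢ (univ : Set ℝ) :=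
    fun t h r => ⟨sub' t h, mem_univ _⟩
  have slice : ∀ {H : ℝ × ℝ → ℂ}, ContDiffOn ℝ (⊤ : ℕ∞) H (Ioo (-1 : ℝ) 0 ×ˢ univ) → ∀ t ∈ Ioo a b,
      Continuous fun r => H (t, r) := by
    intro H hH t ht
    rw [← continuousOn_univ]
    exact hH.continuousOn.comp (f := fun r => (t, r)) (by fun_prop) fun r _ => memO t ht r
  have lipR : ∀ R0 : ℝ, ∃ L : ℝ, 0 ≤ L ∧ ∀ s ∈ Ioo a b, ∀ t ∈ Ioo a b, ∀ r ∈ Icc (0:ℝ) R0,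
    ‖pd (0, 1) F (s, r) - pd (0, 1) F (t, r)‖ ≤ L * |s - t| := by
    intro R0
    obtain ⟨C, hC⟩ := (cpt R0).exists_bound_of_continuousOn (hFrt.continuousOn.mono (sub R0))
    refine ⟨|C|, abs_nonneg _, fun s hs t ht r hr => ?_⟩
    have := (convex_Ioo a b).norm_image_sub_le_of_norm_hasDerivWithin_le (C := |C|)
      (f := fun σ => pd (0, 1) F (σ, r)) (f' := fun σ => pd (1, 0) (pd (0, 1) F) (σ, r))
      (fun x hx => (pd_t hO hFr (memO x hx r)).hasDerivWithinAt)
      (fun x hx => (hC (x, r) ⟨⟨hx.1.le, hx.2.le⟩, hr⟩).trans (le_abs_self _)) ht hs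
    simpa using this
  obtain ⟨L1, hL1, hlip⟩ := lipR 1
  obtain ⟨C1', hC1'⟩ := (cpt 1).exists_bound_of_continuousOn (hFr.continuousOn.mono (sub 1))
  set C1 := |C1'| with hC1e
  have hC10 : 0 ≤ C1 := abs_nonneg _
  have hC1 : ∀ t ∈ Ioo a b, ∀ r ∈ Icc (0:ℝ) 1, ‖pd (0, 1) F (t, r)‖ ≤ C1 := fun t ht r hr =>
    (hC1' (t, r) ⟨⟨ht.1.le, ht.2.le⟩, hr⟩).trans (le_abs_self _)
  have near : ∀ t ∈ Ioo a b, ∀ r, 0 ≤ r → r ≤ 1 → ‖F (t, r)‖ ≤ C1 * r := by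
    intro t ht r hr hr1
    have := norm_image_sub_le_of_norm_deriv_le_segment' (a := 0) (b := 1) (C := C1)
      (f := fun r => F (t, r)) (f' := fun r => pd (0, 1) F (t, r))
      (fun x hx => (pd_r hO hF (memO t ht x)).hasDerivWithinAt)
      (fun x hx => hC1 t ht x ⟨hx.1, hx.2.le⟩) r ⟨hr, hr1⟩
    simpa [h0 t (sub' t ht)] using this
  have hmm : (0:ℝ) ≤ m := by positivity
  have supb : ∀ t ∈ Ioo a b, ∀ r, 1 ≤ r → ‖F (t, r)‖ ^ 2 ≤ C1 ^ 2 + (4 * ((m:ℝ) + 1) + |G|) := by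
    intro t ht r hr
    have c0 := slice hF t ht
    have c1 := slice hFr t ht
    obtain ⟨I, J⟩ : IntegrableOn (fun r => ‖F (t, r)‖ * ‖pd (0, 1) F (t, r)‖ * r) (Ioi 0) ∧
        2 * ∫ r in Ioi (0:ℝ), ‖F (t, r)‖ * ‖pd (0, 1) F (t, r)‖ * r ≤ 4 * ((m:ℝ) + 1) + |G| := by
      have ii := iadd (i0 t ht) (i1 t ht)
      have hh : ∀ r : ℝ, 0 < r → ‖(2:ℝ) * (‖F (t, r)‖ * ‖pd (0, 1) F (t, r)‖ * r)‖ ≤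
          ‖F (t, r)‖ ^ 2 * r + ‖pd (0, 1) F (t, r)‖ ^ 2 * r := by
        intro r hr
        rw [Real.norm_of_nonneg (by positivity)]
        nlinarith [mul_nonneg (sq_nonneg (‖F (t, r)‖ - ‖pd (0, 1) F (t, r)‖)) hr.le]
      have k1 := dom_int (f := fun r => (2:ℝ) * (‖F (t, r)‖ * ‖pd (0, 1) F (t, r)‖ * r))
        (continuous_const.mul ((c0.norm.mul c1.norm).mul continuous_id)).continuousOn ii hh
      have k2 := dom_le ii hh
      refine ⟨?_, ?_⟩
      · have := k1.const_mul (1/2)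
        refine this.congr ?_
        exact Eventually.of_forall fun x => by simp only; ring
      · rw [integral_const_mul] at k2
        have k3 := (le_abs_self _).trans k2
        have e : ∫ r in Ioi (0:ℝ), (‖F (t, r)‖ ^ 2 * r + ‖pd (0, 1) F (t, r)‖ ^ 2 * r) =
          (∫ r in Ioi (0:ℝ), ‖F (t, r)‖ ^ 2 * r) + ∫ r in Ioi (0:ℝ), ‖pd (0, 1) F (t, r)‖ ^ 2 * r :=
          integral_add (i0 t ht) (i1 t ht)
        rw [e, hm t ht] at k3
        have := hG t ht
        have := le_abs_self G
        linarith
    have k := sup_ge1 c1 (fun r => pd_r hO hF (memO t ht r)) I hr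
    have k2 := near t ht 1 zero_le_one le_rfl
    have k3 : ‖F (t, 1)‖ ^ 2 ≤ C1 ^ 2 := by
      rw [mul_one] at k2
      gcongr
    linarith
  set B := 4 * ((m:ℝ) + 1) + |G| + C1 + C1 ^ 2 + L1 with hB
  have hG0 := abs_nonneg G
  have hC2 := sq_nonneg C1
  have hprof : ∀ t ∈ Ioo a b, Prof m B (fun r => F (t, r)) (fun r => pd (0, 1) F (t, r)) := by
    intro t ht
    refine ⟨slice hFr t ht, fun r => pd_r hO hF (memO t ht r), i0 t ht, i1 t ht, hm t ht, ?_, ?_, ?_, ?_⟩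
    · linarith [hG t ht, le_abs_self G]
    · intro r hr hr1
      refine (near t ht r hr hr1).trans ?_
      gcongr
      linarith
    · intro r hr
      rcases le_total r 1 with h | h
      · refine (near t ht r hr h).trans ?_
        nlinarith
      · have := supb t ht r h
        have h2 : ‖F (t, r)‖ ^ 2 ≤ B ^ 2 := by nlinarith
        exact (pow_le_pow_iff_left₀ (norm_nonneg _) (by positivity) two_ne_zero).1 h2
    · linarith
  refine ⟨B, hprof, fun t ht r => pd_t hO hF (memO t ht r), fun t ht r => pd_r hO hFr (memO t ht r),
    hF.continuousOn.mono (fun p hp => ⟨sub' _ hp.1, mem_univ _⟩),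
    hFt.continuousOn.mono (fun p hp => ⟨sub' _ hp.1, mem_univ _⟩), fun t ht => slice hFrr t ht, ?_, lipR,
    fun t ht r hr => heq B t ht (hprof t ht) r hr⟩
  intro s hs t ht r hr
  refine (hlip s hs t ht r hr).trans ?_
  gcongr
  linarith

open MeasureTheory Set Filter

lemma Prof.At_eq {m : ℕ} {B : ℝ} {g g1 : ℝ → ℂ} (h : Prof m B g g1) {r : ℝ} (hr : 0 < r) :
    -∫ s in Ioi r, ((m:ℝ) - Mf g s) * ‖g s‖ ^ 2 / s = Zf m g r / r ^ 2 + Vf m g r := by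
  have hd : ∀ x ∈ Ici r, HasDerivAt (fun s => Zf m g s / s ^ 2 + Vf m g s)
      (((m:ℝ) - Mf g x) * ‖g x‖ ^ 2 / x) x := by
    intro x hx
    have hx0 : 0 < x := lt_of_lt_of_le hr hx
    have hZ : HasDerivAt (Zf m g) (2 * m * (‖g x‖ ^ 2 * x / 2) -
        ((2:ℕ):ℝ) * Mf g x ^ (2 - 1) * (‖g x‖ ^ 2 * x / 2)) x :=
      ((h.Mder x).const_mul (2 * (m:ℝ))).sub ((h.Mder x).pow 2)
    have := (hZ.div (hasDerivAt_pow 2 x) (by positivity)).add (h.Vder hx0)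
    refine this.congr_deriv ?_
    norm_num
    field_simp
    ring
  have hi : IntegrableOn (fun s => ((m:ℝ) - Mf g s) * ‖g s‖ ^ 2 / s) (Ioi r) := by
    refine IntegrableOn.mono_set ?_ (Ioi_subset_Ioi hr.le)
    have c := h.cont
    have c' := h.Mcont
    refine dom_int ?_ (h.rho_div_int.const_mul B) fun s hs => ?_
    · exact ContinuousOn.div (by fun_prop) (by fun_prop) fun x hx => (ne_of_gt hx)
    · rw [mul_div_assoc, norm_mul, Real.norm_eq_abs, Real.norm_of_nonneg (by positivity : 0 ≤ ‖g s‖ ^ 2 / s)]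
      gcongr
      exact h.yabs hs.le
  have hl : Tendsto (fun s => Zf m g s / s ^ 2 + Vf m g s) atTop (nhds 0) := by
    have hZ : Tendsto (Zf m g) atTop (nhds (2 * m * (2 * ((m:ℝ) + 1)) - (2 * ((m:ℝ) + 1)) ^ 2)) :=
      (h.Mlim.const_mul _).sub (h.Mlim.pow 2)
    simpa using (hZ.div_atTop (tendsto_pow_atTop two_ne_zero)).add h.Vlim
  rw [integral_Ioi_of_hasDerivAt_of_tendsto' hd hi hl]
  ring

lemma exF {m : ℕ} (hm : 1 ≤ m) {u : ℝ → ℝ → ℂ} (hu : IsCSS m (Ioo (-1 : ℝ) 0) u) :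
    ∃ F : ℝ × ℝ → ℂ, ContDiffOn ℝ (⊤ : ℕ∞) F (Ioo (-1 : ℝ) 0 ×ˢ univ) ∧
      (∀ t ∈ Ioo (-1 : ℝ) 0, F (t, 0) = 0) ∧ ∀ t ∈ Ioo (-1 : ℝ) 0, ∀ r, 0 < r → u t r = F (t, r) := by
  obtain ⟨U, hU, hUe⟩ := hu.equivariant
  have hF : ∀ t ∈ Ioo (-1 : ℝ) 0, ∀ r, 0 < r → u t r = U t (r, 0) := by
    intro t ht r hr
    rw [hUe t ht (r, 0) (by simp [hr.ne'])]
    have : Real.sqrt (r ^ 2 + 0 ^ 2) = r := by simp [Real.sqrt_sq hr.le]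
    simp only [this]
    have hr' : (r : ℂ) ≠ 0 := by exact_mod_cast hr.ne'
    simp [hr']
  refine ⟨fun p => U p.1 (p.2, 0), ?_, ?_, hF⟩
  · exact hU.comp (f := fun p : ℝ × ℝ => (p.1, (p.2, (0:ℝ)))) (by fun_prop) fun p hp => ⟨hp.1, mem_univ _⟩
  · intro t ht
    set θ : ℝ := Real.pi / m with hθ
    have hm' : (m:ℂ) ≠ 0 := by exact_mod_cast (by omega : m ≠ 0)
    have hc : Continuous fun x => U t x := by
      rw [← continuousOn_univ]
      exact hU.continuousOn.comp (f := fun x : ℝ × ℝ => (t, x)) (by fun_prop) fun p hp => ⟨ht, mem_univ _⟩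
    have key : ∀ r, 0 < r → U t (r * Real.cos θ, r * Real.sin θ) = - U t (r, 0) := by
      intro r hr
      have hs : Real.sqrt ((r * Real.cos θ) ^ 2 + (r * Real.sin θ) ^ 2) = r := by
        rw [show (r * Real.cos θ) ^ 2 + (r * Real.sin θ) ^ 2 = r ^ 2 by
          have := Real.sin_sq_add_cos_sq θ
          nlinarith]
        exact Real.sqrt_sq hr.le
      have hne : ((r * Real.cos θ, r * Real.sin θ) : ℝ × ℝ) ≠ 0 := by
        intro h
        have h1 : r * Real.cos θ = 0 := congrArg Prod.fst h
        have h2 : r * Real.sin θ = 0 := congrArg Prod.snd h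
        rw [h1, h2] at hs
        simp at hs
        exact hr.ne' hs.symm
      rw [hUe t ht _ hne, ← hF t ht r hr]
      simp only [hs]
      have hr' : (r : ℂ) ≠ 0 := by exact_mod_cast hr.ne'
      have e1 : (((r * Real.cos θ : ℝ) : ℂ) + ((r * Real.sin θ : ℝ) : ℂ) * Complex.I) / (r:ℂ) =
          Complex.exp (θ * Complex.I) := by
        rw [Complex.exp_mul_I]
        push_cast
        field_simp
      rw [e1, ← Complex.exp_nat_mul]
      have e2 : (m:ℂ) * ((θ:ℂ) * Complex.I) = Real.pi * Complex.I := by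
        rw [hθ]; push_cast; field_simp
      rw [e2, Complex.exp_pi_mul_I]
      ring
    have l1 : Tendsto (fun r : ℝ => U t (r * Real.cos θ, r * Real.sin θ)) (nhdsWithin 0 (Ioi 0))
        (nhds (U t (0, 0))) := by
      have : Continuous fun r : ℝ => U t (r * Real.cos θ, r * Real.sin θ) :=
        hc.comp (by fun_prop)
      have := this.tendsto 0
      simp only [zero_mul] at this
      exact this.mono_left nhdsWithin_le_nhds
    have l2 : Tendsto (fun r : ℝ => -U t (r, 0)) (nhdsWithin 0 (Ioi 0)) (nhds (-U t (0, 0))) := by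
      have : Continuous fun r : ℝ => -U t (r, 0) := (hc.comp (by fun_prop)).neg
      exact (this.tendsto 0).mono_left nhdsWithin_le_nhds
    have l3 := l1.congr' (by
      filter_upwards [self_mem_nhdsWithin] with r hr using key r hr)
    have := tendsto_nhds_unique l3 l2
    exact self_eq_neg.1 this

section
variable {m : ℕ} {u : ℝ → ℝ → ℂ} {F : ℝ × ℝ → ℂ}

lemma F_d1 (hF : ContDiffOn ℝ (⊤ : ℕ∞) F (Ioo (-1 : ℝ) 0 ×ˢ univ))
    (he : ∀ t ∈ Ioo (-1 : ℝ) 0, ∀ r, 0 < r → u t r = F (t, r)) {t r : ℝ} (ht : t ∈ Ioo (-1 : ℝ) 0) (hr : 0 < r) :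
    deriv (u t) r = pd (0, 1) F (t, r) := by
  have hO : IsOpen (Ioo (-1 : ℝ) 0 ×ˢ (univ : Set ℝ)) := isOpen_Ioo.prod isOpen_univ
  have : u t =ᶠ[nhds r] fun s => F (t, s) := by
    filter_upwards [Ioi_mem_nhds hr] with s hs using he t ht s hs
  rw [this.deriv_eq]
  exact (pd_r hO hF ⟨ht, mem_univ _⟩).deriv

lemma F_d2 (hF : ContDiffOn ℝ (⊤ : ℕ∞) F (Ioo (-1 : ℝ) 0 ×ˢ univ))
    (he : ∀ t ∈ Ioo (-1 : ℝ) 0, ∀ r, 0 < r → u t r = F (t, r)) {t r : ℝ} (ht : t ∈ Ioo (-1 : ℝ) 0) (hr : 0 < r) :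
    deriv (deriv (u t)) r = pd (0, 1) (pd (0, 1) F) (t, r) := by
  have hO : IsOpen (Ioo (-1 : ℝ) 0 ×ˢ (univ : Set ℝ)) := isOpen_Ioo.prod isOpen_univ
  have : deriv (u t) =ᶠ[nhds r] fun s => pd (0, 1) F (t, s) := by
    filter_upwards [Ioi_mem_nhds hr] with s hs using F_d1 hF he ht hs
  rw [this.deriv_eq]
  exact (pd_r hO (pd_smooth hO _ hF) ⟨ht, mem_univ _⟩).deriv

lemma F_dt (hF : ContDiffOn ℝ (⊤ : ℕ∞) F (Ioo (-1 : ℝ) 0 ×ˢ univ))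
    (he : ∀ t ∈ Ioo (-1 : ℝ) 0, ∀ r, 0 < r → u t r = F (t, r)) {t r : ℝ} (ht : t ∈ Ioo (-1 : ℝ) 0) (hr : 0 < r) :
    deriv (fun s => u s r) t = pd (1, 0) F (t, r) := by
  have hO : IsOpen (Ioo (-1 : ℝ) 0 ×ˢ (univ : Set ℝ)) := isOpen_Ioo.prod isOpen_univ
  have : (fun s => u s r) =ᶠ[nhds t] fun s => F (s, r) := by
    filter_upwards [Ioo_mem_nhds ht.1 ht.2] with s hs using he s hs r hr
  rw [this.deriv_eq]
  exact (pd_t hO hF ⟨ht, mem_univ _⟩).deriv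

lemma F_eq (hu : IsCSS m (Ioo (-1 : ℝ) 0) u)
    (hF : ContDiffOn ℝ (⊤ : ℕ∞) F (Ioo (-1 : ℝ) 0 ×ˢ univ))
    (he : ∀ t ∈ Ioo (-1 : ℝ) 0, ∀ r, 0 < r → u t r = F (t, r)) {t r B : ℝ} (ht : t ∈ Ioo (-1 : ℝ) 0)
    (h : Prof m B (fun r => F (t, r)) (fun r => pd (0, 1) F (t, r))) (hr : 0 < r) :
    Complex.I * pd (1, 0) F (t, r) + pd (0, 1) (pd (0, 1) F) (t, r) + pd (0, 1) F (t, r) / r -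
      (((m:ℝ) ^ 2 / r ^ 2 + Wf m (fun r => F (t, r)) r : ℝ) : ℂ) * F (t, r) = 0 := by
  have E := hu.eq t ht r hr
  unfold CSSeq at E
  have hA : ∀ s, 0 < s → Atheta (u t) s = - Mf (fun r => F (t, r)) s := by
    intro s hs
    unfold Atheta Mf
    have : ∫ x in (0:ℝ)..s, ‖u t x‖ ^ 2 * x = ∫ x in (0:ℝ)..s, ‖F (t, x)‖ ^ 2 * x := by
      rw [intervalIntegral.integral_of_le hs.le, intervalIntegral.integral_of_le hs.le]
      refine setIntegral_congr_fun measurableSet_Ioc fun x hx => ?_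
      simp only [he t ht x hx.1]
    rw [this]
    ring
  have hAt : At m (u t) r = Zf m (fun r => F (t, r)) r / r ^ 2 + Vf m (fun r => F (t, r)) r := by
    rw [← h.At_eq hr]
    unfold At
    congr 1
    refine setIntegral_congr_fun measurableSet_Ioi fun x hx => ?_
    have hx0 : 0 < x := lt_trans hr hx
    simp only [he t ht x hx0, hA x hx0]
    ring
  rw [F_dt hF he ht hr, F_d1 hF he ht hr, F_d2 hF he ht hr, hA r hr, hAt, he t ht r hr] at E
  rw [← E]
  have hr' : (r : ℂ) ≠ 0 := by exact_mod_cast hr.ne'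
  unfold Wf Zf
  push_cast
  field_simp
  ring

lemma F_div_int (hF : ContDiffOn ℝ (⊤ : ℕ∞) F (Ioo (-1 : ℝ) 0 ×ˢ univ))
    (h0 : ∀ t ∈ Ioo (-1 : ℝ) 0, F (t, 0) = 0) {t : ℝ} (ht : t ∈ Ioo (-1 : ℝ) 0)
    (i0 : IntegrableOn (fun r => ‖F (t, r)‖ ^ 2 * r) (Ioi 0)) :
    IntegrableOn (fun r => ‖F (t, r)‖ ^ 2 / r) (Ioi 0) := by
  have hO : IsOpen (Ioo (-1 : ℝ) 0 ×ˢ (univ : Set ℝ)) := isOpen_Ioo.prod isOpen_univ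
  have slice : ∀ {H : ℝ × ℝ → ℂ}, ContDiffOn ℝ (⊤ : ℕ∞) H (Ioo (-1 : ℝ) 0 ×ˢ univ) →
      Continuous fun r => H (t, r) := by
    intro H hH
    rw [← continuousOn_univ]
    exact hH.continuousOn.comp (f := fun r => (t, r)) (by fun_prop) fun r _ => ⟨ht, mem_univ _⟩
  have c0 := slice hF
  have c1 := slice (pd_smooth hO (0, 1) hF)
  obtain ⟨C, hC⟩ := (isCompact_Icc (a := (0:ℝ)) (b := 1)).exists_bound_of_continuousOn c1.continuousOn
  have near : ∀ r, 0 ≤ r → r ≤ 1 → ‖F (t, r)‖ ≤ C * r := by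
    intro r hr hr1
    have := norm_image_sub_le_of_norm_deriv_le_segment' (a := 0) (b := 1) (C := C)
      (f := fun r => F (t, r)) (f' := fun r => pd (0, 1) F (t, r))
      (fun x hx => (pd_r hO hF ⟨ht, mem_univ _⟩).hasDerivWithinAt)
      (fun x hx => hC x ⟨hx.1, hx.2.le⟩) r ⟨hr, hr1⟩
    simpa [h0 t ht] using this
  refine dom_int ?_ (iadd (kap_int.1.const_mul (C^2)) i0) fun r hr => ?_
  · exact ContinuousOn.div (c0.norm.pow 2).continuousOn (by fun_prop) fun x hx => (ne_of_gt hx)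
  · rw [Real.norm_of_nonneg (by positivity)]
    have k0 := kap_nonneg hr
    rcases le_total r 1 with h | h
    · have h1 : ‖F (t, r)‖ ^ 2 / r ≤ C ^ 2 * r := by
        rw [div_le_iff₀ hr]
        calc ‖F (t, r)‖ ^ 2 ≤ (C * r) ^ 2 := by gcongr; exact near r hr.le h
          _ = _ := by ring
      have h2 : r ≤ kap r := by
        unfold kap
        rw [le_div_iff₀ (by positivity)]
        have : (1 + r ^ 2) ^ 2 ≤ 4 := by
          have h5 : r ^ 2 ≤ 1 := by nlinarith
          nlinarith [sq_nonneg r]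
        nlinarith
      have h3 : C ^ 2 * r ≤ C ^ 2 * kap r := by gcongr
      have h4 : 0 ≤ ‖F (t, r)‖ ^ 2 * r := by positivity
      linarith
    · have h1 : ‖F (t, r)‖ ^ 2 / r ≤ ‖F (t, r)‖ ^ 2 * r := by
        rw [div_le_iff₀ hr, mul_assoc]
        have : 1 ≤ r * r := by nlinarith
        nlinarith [sq_nonneg ‖F (t, r)‖]
      have : 0 ≤ C ^ 2 * kap r := by positivity
      linarith

end

lemma reduce {m : ℕ} (hm : 1 ≤ m) {u : ℝ → ℝ → ℂ} (hu : IsCSS m (Ioo (-1 : ℝ) 0) u)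
    (hmass : ∀ t ∈ Ioo (-1 : ℝ) 0, L2sq (u t) = 8 * Real.pi * (m + 1))
    (hblow : Tendsto
      (fun t => Real.sqrt (2 * Real.pi * ∫ r in Ioi (0:ℝ), ‖deriv (u t) r‖ ^ 2 * r))
      (nhdsWithin 0 (Ioo (-1 : ℝ) 0)) atTop) :
    ∃ T < 0, ∃ e0 : ℝ, ∃ v vr : ℝ → ℝ → ℂ, -1 ≤ T ∧
      (∀ t ∈ Ioo T 0, ∀ r, 0 < r → u t r = v t r ∧ deriv (u t) r = vr t r) ∧
      ∀ t ∈ Ioo T 0, ∃ B, Prof m B (v t) (vr t) ∧ ∫ r in Ioi (0:ℝ), ‖fd m (v t) (vr t) r‖ ^ 2 * r = e0 := by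
  obtain ⟨F, hF, h0, he⟩ := exF hm hu
  have hpi := Real.pi_pos
  obtain ⟨T, hT1, hT0, hTi⟩ : ∃ T : ℝ, -1 ≤ T ∧ T < 0 ∧ ∀ t ∈ Ioo T 0,
      IntegrableOn (fun r => ‖deriv (u t) r‖ ^ 2 * r) (Ioi 0) := by
    have h1 := hblow.eventually_gt_atTop 0
    rw [nhdsWithin_Ioo_eq_nhdsLT (by norm_num)] at h1
    obtain ⟨T, hT, hT'⟩ := (mem_nhdsLT_iff_exists_Ioo_subset' (show (-1:ℝ) < 0 by norm_num)).1 h1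
    refine ⟨max T (-1), le_max_right _ _, max_lt hT (by norm_num), fun t ht => ?_⟩
    have := hT' ⟨(le_max_left _ _).trans_lt ht.1, ht.2⟩
    by_contra hc
    simp only [mem_ofPred_eq] at this
    rw [integral_undef hc] at this
    simp at this
  have up : ∀ t ∈ Ioo T 0, t ∈ Ioo (-1 : ℝ) 0 := fun t ht => ⟨hT1.trans_lt ht.1, ht.2⟩
  have i0 : ∀ t ∈ Ioo (-1 : ℝ) 0, IntegrableOn (fun r => ‖F (t, r)‖ ^ 2 * r) (Ioi 0) := fun t ht =>
    (hu.integrable t ht).congr_fun (fun r hr => by simp only [he t ht r hr]) measurableSet_Ioi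
  have i1 : ∀ t ∈ Ioo T 0, IntegrableOn (fun r => ‖pd (0, 1) F (t, r)‖ ^ 2 * r) (Ioi 0) := fun t ht =>
    (hTi t ht).congr_fun (fun r hr => by simp only [F_d1 hF he (up t ht) hr]) measurableSet_Ioi
  have hmm : ∀ t ∈ Ioo (-1 : ℝ) 0, ∫ r in Ioi (0:ℝ), ‖F (t, r)‖ ^ 2 * r = 4 * (m + 1) := by
    intro t ht
    have := hmass t ht
    unfold L2sq at this
    have e : ∫ r in Ioi (0:ℝ), ‖F (t, r)‖ ^ 2 * r = ∫ r in Ioi (0:ℝ), ‖u t r‖ ^ 2 * r :=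
      setIntegral_congr_fun measurableSet_Ioi fun r hr => by simp only [he t ht r hr]
    rw [e]
    have h2 : 2 * Real.pi * (∫ r in Ioi (0:ℝ), ‖u t r‖ ^ 2 * r) = 2 * Real.pi * (4 * (m + 1)) := by
      rw [this]; ring
    exact mul_left_cancel₀ (by positivity) h2
  have hsol : ∀ a b, T < a → b < 0 → ∃ B, Sol m B a b (fun t r => F (t, r)) (fun t r => pd (1, 0) F (t, r))
      (fun t r => pd (0, 1) F (t, r)) (fun t r => pd (0, 1) (pd (0, 1) F) (t, r)) := by
    intro a b ha hb
    have sub : ∀ t ∈ Icc a b, t ∈ Ioo T 0 := fun t ht => ⟨by linarith [ht.1], by linarith [ht.2]⟩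
    obtain ⟨C, hC⟩ := hu.bounded (Icc a b) (fun t ht => up t (sub t ht)) isCompact_Icc
    refine mkSol (G := C ^ 2 / (2 * Real.pi)) hF (by linarith) hb h0 (fun t ht => i0 t (up t (sub t ⟨ht.1.le, ht.2.le⟩)))
      (fun t ht => i1 t (sub t ⟨ht.1.le, ht.2.le⟩)) (fun t ht => hmm t (up t (sub t ⟨ht.1.le, ht.2.le⟩))) ?_ ?_
    · intro t ht
      have ht1 := sub t ⟨ht.1.le, ht.2.le⟩
      have ht2 := up t ht1
      have k1 := hC t ⟨ht.1.le, ht.2.le⟩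
      have k2 : Real.sqrt (H1msq m (u t)) ≤ C := by linarith [Real.sqrt_nonneg (L2sq (u t))]
      have k3 := (Real.sqrt_le_iff.1 k2).2
      unfold H1msq at k3
      have idiv := (F_div_int hF h0 ht2 (i0 t ht2)).const_mul ((m:ℝ) ^ 2)
      have e : ∫ r in Ioi (0:ℝ), (‖deriv (u t) r‖ ^ 2 + (m : ℝ) ^ 2 * ‖u t r‖ ^ 2 / r ^ 2) * r =
          ∫ r in Ioi (0:ℝ), (‖pd (0, 1) F (t, r)‖ ^ 2 * r + (m:ℝ) ^ 2 * (‖F (t, r)‖ ^ 2 / r)) := by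
        refine setIntegral_congr_fun measurableSet_Ioi fun r hr => ?_
        have hr0 : r ≠ 0 := ne_of_gt hr
        simp only [F_d1 hF he ht2 hr, he t ht2 r hr]
        field_simp
      have e2 : ∫ r in Ioi (0:ℝ), (‖pd (0, 1) F (t, r)‖ ^ 2 * r + (m:ℝ) ^ 2 * (‖F (t, r)‖ ^ 2 / r)) =
          (∫ r in Ioi (0:ℝ), ‖pd (0, 1) F (t, r)‖ ^ 2 * r) + ∫ r in Ioi (0:ℝ), (m:ℝ) ^ 2 * (‖F (t, r)‖ ^ 2 / r) :=
        integral_add (i1 t ht1) idiv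
      rw [e, e2] at k3
      have k4 : 0 ≤ ∫ r in Ioi (0:ℝ), (m:ℝ) ^ 2 * (‖F (t, r)‖ ^ 2 / r) :=
        setIntegral_nonneg measurableSet_Ioi fun r hr => by
          have : (0:ℝ) < r := hr
          positivity
      rw [le_div_iff₀ (by positivity)]
      nlinarith [mul_nonneg hpi.le k4]
    · intro B t ht h r hr
      exact F_eq hu hF he (up t (sub t ⟨ht.1.le, ht.2.le⟩)) h hr
  set E : ℝ → ℝ := fun t => Ff m (fun r => F (t, r)) (fun r => pd (0, 1) F (t, r)) + Sf m (fun r => F (t, r)) with hE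
  have hc : ∀ s t, T < s → s < t → t < 0 → E s = E t := by
    intro s t hs hst ht
    obtain ⟨B, S⟩ := hsol ((T + s) / 2) (t / 2) (by linarith) (by linarith)
    exact S.conserve (by linarith) hst (by linarith)
  refine ⟨T, hT0, E (T / 2), fun t r => F (t, r), fun t r => pd (0, 1) F (t, r), hT1,
    fun t ht r hr => ⟨he t (up t ht) r hr, F_d1 hF he (up t ht) hr⟩, fun t ht => ?_⟩
  obtain ⟨B, S⟩ := hsol ((T + t) / 2) (t / 2) (by linarith [ht.1]) (by linarith [ht.2])
  have P := S.prof t ⟨by linarith [ht.1], by linarith [ht.2]⟩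
  refine ⟨B, P, ?_⟩
  rw [P.energy_id]
  rcases lt_trichotomy t (T / 2) with h | h | h
  · exact hc t _ ht.1 h (by linarith)
  · rw [← h]
  · exact (hc _ t (by linarith) h ht.2).symm

open MeasureTheory Set Filter

namespace Prof
variable {m : ℕ} {B e0 : ℝ} {g g1 : ℝ → ℂ}

lemma re_le (a b : ℂ) : |(a * (starRingEnd ℂ) b).re| ≤ (‖a‖ ^ 2 + ‖b‖ ^ 2) / 2 := by
  refine (Complex.abs_re_le_norm _).trans ?_
  rw [norm_mul, Complex.norm_conj]
  nlinarith [sq_nonneg (‖a‖ - ‖b‖)]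

lemma flow (h : Prof m B g g1) (he : ∫ r in Ioi (0:ℝ), ‖fd m g g1 r‖ ^ 2 * r = e0) {r : ℝ} (hr : 0 < r) :
    |r ^ 2 * ‖g r‖ ^ 2 / 2 - Mf g r * (2 * ((m:ℝ) + 1) - Mf g r)| ≤ (2 * ((m:ℝ) + 1) + e0 / 2) * r := by
  have c0 := h.cont
  have c1 := h.cont1
  have cM := h.Mcont
  set Φ : ℝ → ℝ := fun r => r ^ 2 * ‖g r‖ ^ 2 / 2 - Mf g r * (2 * ((m:ℝ) + 1) - Mf g r) with hΦ
  set D : ℝ → ℝ := fun r => r ^ 2 * (g1 r * (starRingEnd ℂ) (g r)).re - (m - Mf g r) * ‖g r‖ ^ 2 * r with hD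
  have hd : ∀ x, HasDerivAt Φ (D x) x := by
    intro x
    have a1 := ((hasDerivAt_pow 2 x).mul (hasDerivAt_normsq (h.der x))).div_const 2
    have a2 := (h.Mder x).mul ((h.Mder x).const_sub (2 * ((m:ℝ) + 1)))
    refine (a1.sub a2).congr_deriv ?_
    simp only [hD]
    norm_num
    ring
  have hDc : Continuous D := by
    have : Continuous fun r => (g1 r * (starRingEnd ℂ) (g r)).re :=
      Complex.continuous_re.comp (c1.mul (Complex.continuous_conj.comp c0))
    simp only [hD]
    fun_prop
  have hint := intervalIntegral.integral_eq_sub_of_hasDerivAt (a := 0) (b := r) (fun x _ => hd x)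
    (hDc.intervalIntegrable _ _)
  have hΦ0 : Φ 0 = 0 := by simp [hΦ, M0]
  rw [hΦ0, sub_zero] at hint
  change |Φ r| ≤ _
  rw [← hint, ← Real.norm_eq_abs]
  have hI := iadd h.int0 h.fd_int
  have hI2 : IntegrableOn (fun s => r / 2 * (‖g s‖ ^ 2 * s + ‖fd m g g1 s‖ ^ 2 * s)) (Ioi 0) := hI.const_mul _
  have hsub : Ioc 0 r ⊆ Ioi (0:ℝ) := fun x hx => hx.1
  refine (intervalIntegral.norm_integral_le_of_norm_le hr.le
    (g := fun s => r / 2 * (‖g s‖ ^ 2 * s + ‖fd m g g1 s‖ ^ 2 * s)) (Eventually.of_forall fun s hs => ?_) ?_).trans ?_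
  · have hs0 : 0 < s := hs.1
    have e : D s = s ^ 2 * (fd m g g1 s * (starRingEnd ℂ) (g s)).re := by
      simp only [hD, fd]
      have e' : ((g1 s - ((((m:ℝ) - Mf g s) / s : ℝ) : ℂ) * g s) * (starRingEnd ℂ) (g s)).re =
          (g1 s * (starRingEnd ℂ) (g s)).re - (((m:ℝ) - Mf g s) / s) * ‖g s‖ ^ 2 := by
        rw [sub_mul (g1 s), Complex.sub_re, mul_assoc ((((m:ℝ) - Mf g s) / s : ℝ) : ℂ), Complex.re_ofReal_mul,
          Complex.mul_conj, Complex.normSq_eq_norm_sq, Complex.ofReal_re]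
      rw [e']
      field_simp
    rw [e, Real.norm_eq_abs, abs_mul, abs_of_nonneg (by positivity : 0 ≤ s ^ 2)]
    calc s ^ 2 * |(fd m g g1 s * (starRingEnd ℂ) (g s)).re| ≤ s ^ 2 * ((‖fd m g g1 s‖ ^ 2 + ‖g s‖ ^ 2) / 2) := by
          gcongr; exact re_le _ _
      _ = s / 2 * (‖g s‖ ^ 2 * s + ‖fd m g g1 s‖ ^ 2 * s) := by ring
      _ ≤ _ := by gcongr; exact hs.2
  · rw [intervalIntegrable_iff_integrableOn_Ioc_of_le hr.le]
    exact hI2.mono_set hsub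
  · rw [intervalIntegral.integral_of_le hr.le]
    refine (setIntegral_mono_set hI2 ?_ (LE.le.eventuallyLE hsub)).trans ?_
    · refine (ae_restrict_iff' measurableSet_Ioi).2 (Eventually.of_forall fun s hs => ?_)
      have : (0:ℝ) < s := hs
      simp only [Pi.zero_apply]
      positivity
    · rw [integral_const_mul]
      have e : ∫ s in Ioi (0:ℝ), (‖g s‖ ^ 2 * s + ‖fd m g g1 s‖ ^ 2 * s) = 4 * ((m:ℝ) + 1) + e0 := by
        rw [← h.mass, ← he]
        exact integral_add h.int0 h.fd_int
      rw [e]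
      apply le_of_eq; ring

lemma conc (h : Prof m B g g1) {C0 : ℝ} (hC0 : 0 ≤ C0) (hf : ∀ r, 0 < r →
    |r ^ 2 * ‖g r‖ ^ 2 / 2 - Mf g r * (2 * ((m:ℝ) + 1) - Mf g r)| ≤ C0 * r)
    {δ η r0 r1 : ℝ} (hδ : 0 < δ) (hη : 0 < η) (h0 : 0 < r0) (h01 : r0 < r1) (hM0 : δ ≤ Mf g r0)
    (hM1 : Mf g r1 ≤ 2 * ((m:ℝ) + 1) - η) :
    δ * η * (Real.log r1 - Real.log r0) ≤ 2 * ((m:ℝ) + 1) + C0 * r1 := by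
  have hd : ∀ x, 0 < x → HasDerivAt (fun s => Mf g s - δ * η * Real.log s + C0 * s)
      (‖g x‖ ^ 2 * x / 2 - δ * η * x⁻¹ + C0 * 1) x := fun x hx =>
    ((h.Mder x).sub ((Real.hasDerivAt_log hx.ne').const_mul _)).add ((hasDerivAt_id x).const_mul C0)
  have mono : MonotoneOn (fun s => Mf g s - δ * η * Real.log s + C0 * s) (Icc r0 r1) := by
    refine monotoneOn_of_deriv_nonneg (convex_Icc _ _) ?_ ?_ ?_
    · exact fun x hx => (hd x (by linarith [hx.1])).continuousAt.continuousWithinAt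
    · intro x hx
      rw [interior_Icc] at hx
      exact (hd x (by linarith [hx.1])).differentiableAt.differentiableWithinAt
    · intro x hx
      rw [interior_Icc] at hx
      have hx0 : 0 < x := by linarith [hx.1]
      rw [(hd x hx0).deriv]
      have k1 := (abs_le.1 (hf x hx0)).1
      have k2 := h.Mmono h0.le hx.1.le
      have k3 := h.Mmono hx0.le hx.2.le
      have k4 : δ * η ≤ Mf g x * (2 * ((m:ℝ) + 1) - Mf g x) := by
        apply mul_le_mul <;> linarith
      have k5 : 0 ≤ x * (‖g x‖ ^ 2 * x / 2 - δ * η * x⁻¹ + C0 * 1) := by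
        have : x * (‖g x‖ ^ 2 * x / 2 - δ * η * x⁻¹ + C0 * 1) = x ^ 2 * ‖g x‖ ^ 2 / 2 - δ * η + C0 * x := by
          field_simp
        rw [this]
        linarith
      exact nonneg_of_mul_nonneg_right k5 hx0
  have := mono ⟨le_rfl, h01.le⟩ ⟨h01.le, le_rfl⟩ h01.le
  simp only at this
  have q1 := Mnonneg (g := g) h0.le
  have q2 : 0 ≤ C0 * r0 := by positivity
  nlinarith

lemma gradb (h : Prof m B g g1) (hm : 1 ≤ m) (he : ∫ r in Ioi (0:ℝ), ‖fd m g g1 r‖ ^ 2 * r = e0)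
    {C0 : ℝ} (hC0 : 0 ≤ C0) (hf : ∀ r, 0 < r →
    |r ^ 2 * ‖g r‖ ^ 2 / 2 - Mf g r * (2 * ((m:ℝ) + 1) - Mf g r)| ≤ C0 * r)
    {δ r0 : ℝ} (hδ : δ * (2 * ((m:ℝ) + 1)) ≤ 1 / 16) (h0 : 0 < r0) (hr0 : C0 * r0 ≤ 1 / 16) (hM0 : Mf g r0 < δ) :
    ∫ r in Ioi (0:ℝ), ‖g1 r‖ ^ 2 * r ≤ (e0 + m / (4 * r0 ^ 2)) +
      (2 * e0 + 2 * ((m:ℝ) + 2) ^ 2 / r0 ^ 2 * (4 * (m + 1))) := by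
  have c0 := h.cont
  have c1 := h.cont1
  have cM := h.Mcont
  have hm1 : (1:ℝ) ≤ m := by exact_mod_cast hm
  have hs1 : Ioc 0 r0 ⊆ Ioi (0:ℝ) := fun x hx => hx.1
  have hs2 : Ioi r0 ⊆ Ioi (0:ℝ) := Ioi_subset_Ioi h0.le
  have hfd0 : ∀ S ⊆ Ioi (0:ℝ), ∫ r in S, ‖fd m g g1 r‖ ^ 2 * r ≤ e0 := by
    intro S hS
    rw [← he]
    refine setIntegral_mono_set h.fd_int ?_ (LE.le.eventuallyLE hS)
    refine (ae_restrict_iff' measurableSet_Ioi).2 (Eventually.of_forall fun s hs => ?_)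
    have : (0:ℝ) < s := hs
    simp only [Pi.zero_apply]
    positivity
  have hδ0 : 0 ≤ Mf g r0 := Mnonneg h0.le
  have hδ1 : δ ≤ 1 / 2 := by nlinarith
  have rho : ∀ r, 0 < r → r ≤ r0 → r ^ 2 * ‖g r‖ ^ 2 ≤ 1 / 4 ∧ Mf g r ≤ 1 / 2 := by
    intro r hr hrr
    have k1 := (abs_le.1 (hf r hr)).2
    have k2 := h.Mmono hr.le hrr
    have k3 := Mnonneg (g := g) hr.le
    have k4 : Mf g r * (2 * ((m:ℝ) + 1) - Mf g r) ≤ δ * (2 * ((m:ℝ) + 1)) := by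
      apply mul_le_mul <;> nlinarith
    have k5 : C0 * r ≤ C0 * r0 := by gcongr
    constructor <;> linarith
  have split : ∫ r in Ioi (0:ℝ), ‖g1 r‖ ^ 2 * r =
      (∫ r in Ioc 0 r0, ‖g1 r‖ ^ 2 * r) + ∫ r in Ioi r0, ‖g1 r‖ ^ 2 * r := by
    rw [← Ioc_union_Ioi_eq_Ioi h0.le, setIntegral_union _ measurableSet_Ioi (h.int1.mono_set hs1)
      (h.int1.mono_set hs2)]
    exact Set.disjoint_left.2 fun x hx hx' => not_lt.2 hx.2 hx'
  rw [split]
  refine add_le_add ?_ ?_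
  · set Dy : ℝ → ℝ := fun r => -(‖g r‖ ^ 2 * r / 2) * ‖g r‖ ^ 2 +
      ((m:ℝ) - Mf g r) * (2 * (g1 r * (starRingEnd ℂ) (g r)).re) with hDy
    have hd : ∀ x, HasDerivAt (fun r => ((m:ℝ) - Mf g r) * ‖g r‖ ^ 2) (Dy x) x := fun x =>
      ((h.Mder x).const_sub (m:ℝ)).mul (hasDerivAt_normsq (h.der x))
    have hDc : Continuous Dy := by
      have : Continuous fun r => (g1 r * (starRingEnd ℂ) (g r)).re :=
        Complex.continuous_re.comp (c1.mul (Complex.continuous_conj.comp c0))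
      simp only [hDy]
      fun_prop
    have hint := intervalIntegral.integral_eq_sub_of_hasDerivAt (a := 0) (b := r0) (fun x _ => hd x)
      (hDc.intervalIntegrable _ _)
    rw [intervalIntegral.integral_of_le h0.le, h.g0] at hint
    have hDi : IntegrableOn Dy (Ioc 0 r0) := (hDc.integrableOn_Icc).mono_set Ioc_subset_Icc_self
    have hfi := h.fd_int.mono_set hs1
    have k1 : ∫ r in Ioc 0 r0, ‖g1 r‖ ^ 2 * r ≤ ∫ r in Ioc 0 r0, (‖fd m g g1 r‖ ^ 2 * r + Dy r) := by
      refine setIntegral_mono_on (h.int1.mono_set hs1) (hfi.add hDi) measurableSet_Ioc fun r hr => ?_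
      obtain ⟨q1, q2⟩ := rho r hr.1 hr.2
      have hrp : 0 < r := hr.1
      rw [h.fd_sq hr.1]
      simp only [hDy]
      have q3 : ‖g r‖ ^ 2 * r / 2 * ‖g r‖ ^ 2 ≤ (1 / 8) * (‖g r‖ ^ 2 / r) := by
        have : ‖g r‖ ^ 2 * r / 2 * ‖g r‖ ^ 2 = (r ^ 2 * ‖g r‖ ^ 2) / 2 * (‖g r‖ ^ 2 / r) := by field_simp
        rw [this]
        have : 0 ≤ ‖g r‖ ^ 2 / r := by positivity
        nlinarith
      have q4 : (1 / 8) * (‖g r‖ ^ 2 / r) ≤ ((m:ℝ) - Mf g r) ^ 2 * (‖g r‖ ^ 2 / r) := by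
        gcongr
        nlinarith
      linarith
    have k2 : ∫ r in Ioc 0 r0, (‖fd m g g1 r‖ ^ 2 * r + Dy r) =
        (∫ r in Ioc 0 r0, ‖fd m g g1 r‖ ^ 2 * r) + ∫ r in Ioc 0 r0, Dy r := integral_add hfi hDi
    rw [k2, hint] at k1
    have k3 := hfd0 _ hs1
    have k4 : ((m:ℝ) - Mf g r0) * ‖g r0‖ ^ 2 ≤ m / (4 * r0 ^ 2) := by
      rw [le_div_iff₀ (by positivity)]
      have q := (rho r0 h0 le_rfl).1
      have : ((m:ℝ) - Mf g r0) * (r0 ^ 2 * ‖g r0‖ ^ 2) ≤ m * (1 / 4) := by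
        apply mul_le_mul _ q (by positivity) (by positivity)
        linarith
      nlinarith
    simp only [norm_zero] at k1
    nlinarith
  · have hfi := (h.fd_int.mono_set hs2).const_mul 2
    have hgi := (h.int0.mono_set hs2).const_mul (2 * ((m:ℝ) + 2) ^ 2 / r0 ^ 2)
    have k1 : ∫ r in Ioi r0, ‖g1 r‖ ^ 2 * r ≤ ∫ r in Ioi r0, (2 * (‖fd m g g1 r‖ ^ 2 * r) +
        2 * ((m:ℝ) + 2) ^ 2 / r0 ^ 2 * (‖g r‖ ^ 2 * r)) := by
      refine setIntegral_mono_on (h.int1.mono_set hs2) (hfi.add hgi) measurableSet_Ioi fun r hr => ?_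
      have hrr : r0 < r := hr
      have hrp : 0 < r := h0.trans hrr
      have q1 := h.Mle hrp.le
      have q2 := Mnonneg (g := g) hrp.le
      have q3 : |(m:ℝ) - Mf g r| ≤ m + 2 := by rw [abs_le]; constructor <;> linarith
      have q4 : ‖g1 r‖ ≤ ‖fd m g g1 r‖ + (m + 2) / r0 * ‖g r‖ := by
        have e : g1 r = fd m g g1 r + ((((m:ℝ) - Mf g r) / r : ℝ) : ℂ) * g r := by simp [fd]
        calc ‖g1 r‖ = ‖fd m g g1 r + ((((m:ℝ) - Mf g r) / r : ℝ) : ℂ) * g r‖ := by rw [← e]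
          _ ≤ ‖fd m g g1 r‖ + ‖((((m:ℝ) - Mf g r) / r : ℝ) : ℂ) * g r‖ := norm_add_le _ _
          _ ≤ _ := by
            rw [norm_mul, Complex.norm_real, Real.norm_eq_abs, abs_div, abs_of_pos hrp]
            gcongr
      have q5 : ‖g1 r‖ ^ 2 ≤ 2 * ‖fd m g g1 r‖ ^ 2 + 2 * ((m:ℝ) + 2) ^ 2 / r0 ^ 2 * ‖g r‖ ^ 2 := by
        have : ‖g1 r‖ ^ 2 ≤ (‖fd m g g1 r‖ + (m + 2) / r0 * ‖g r‖) ^ 2 := by gcongr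
        have e : 2 * ((m:ℝ) + 2) ^ 2 / r0 ^ 2 * ‖g r‖ ^ 2 = 2 * ((m + 2) / r0 * ‖g r‖) ^ 2 := by
          field_simp
        rw [e]
        nlinarith [sq_nonneg (‖fd m g g1 r‖ - (m + 2) / r0 * ‖g r‖)]
      nlinarith
    have k2 : ∫ r in Ioi r0, (2 * (‖fd m g g1 r‖ ^ 2 * r) + 2 * ((m:ℝ) + 2) ^ 2 / r0 ^ 2 * (‖g r‖ ^ 2 * r)) =
        (∫ r in Ioi r0, 2 * (‖fd m g g1 r‖ ^ 2 * r)) +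
          ∫ r in Ioi r0, 2 * ((m:ℝ) + 2) ^ 2 / r0 ^ 2 * (‖g r‖ ^ 2 * r) := integral_add hfi hgi
    rw [k2, integral_const_mul, integral_const_mul] at k1
    refine k1.trans ?_
    have k3 := hfd0 _ hs2
    have k4 : ∫ r in Ioi r0, ‖g r‖ ^ 2 * r ≤ 4 * ((m:ℝ) + 1) := by
      rw [← h.mass]
      refine setIntegral_mono_set h.int0 ?_ (LE.le.eventuallyLE hs2)
      refine (ae_restrict_iff' measurableSet_Ioi).2 (Eventually.of_forall fun s hs => ?_)
      have : (0:ℝ) < s := hs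
      simp only [Pi.zero_apply]
      positivity
    gcongr

lemma wmass (h : Prof m B g g1) {R r1 η : ℝ} (hR : 0 < R) (h1 : 0 < r1) {φ : ℝ → ℝ} (hφc : Continuous φ)
    (hφ1 : ∀ x : ℝ, 0 ≤ x → φ x ∈ Icc (0:ℝ) 1) (hφ2 : ∀ x : ℝ, 2 ≤ x → φ x = 0)
    (hM : 2 * ((m:ℝ) + 1) - η < Mf g r1) :
    0 ≤ ∫ r in Ioi (0:ℝ), φ (r / R) ^ 2 * r ^ 2 * ‖g r‖ ^ 2 * r ∧
    ∫ r in Ioi (0:ℝ), φ (r / R) ^ 2 * r ^ 2 * ‖g r‖ ^ 2 * r ≤ r1 ^ 2 * (4 * ((m:ℝ) + 1)) + 4 * R ^ 2 * (2 * η) := by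
  have c0 := h.cont
  have hs1 : Ioc 0 r1 ⊆ Ioi (0:ℝ) := fun x hx => hx.1
  have hs2 : Ioi r1 ⊆ Ioi (0:ℝ) := Ioi_subset_Ioi h1.le
  have hle : ∀ r, 0 < r → φ (r / R) ^ 2 * r ^ 2 ≤ 4 * R ^ 2 := by
    intro r hr
    rcases le_total (r / R) 2 with h | h
    · obtain ⟨a, b⟩ := hφ1 (r / R) (by positivity)
      rw [div_le_iff₀ hR] at h
      calc φ (r / R) ^ 2 * r ^ 2 ≤ 1 ^ 2 * (2 * R) ^ 2 := by gcongr
        _ = _ := by ring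
    · rw [hφ2 _ h]
      simp; positivity
  have hle1 : ∀ r, 0 < r → r ≤ r1 → φ (r / R) ^ 2 * r ^ 2 ≤ r1 ^ 2 := by
    intro r hr hr1
    obtain ⟨a, b⟩ := hφ1 (r / R) (by positivity)
    calc φ (r / R) ^ 2 * r ^ 2 ≤ 1 ^ 2 * r1 ^ 2 := by gcongr
        _ = _ := by ring
  have hi : IntegrableOn (fun r => φ (r / R) ^ 2 * r ^ 2 * ‖g r‖ ^ 2 * r) (Ioi 0) := by
    refine dom_int (Continuous.continuousOn (by fun_prop)) (h.int0.const_mul (4 * R ^ 2)) fun r hr => ?_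
    rw [Real.norm_of_nonneg (by positivity), mul_assoc]
    have := hle r hr
    gcongr
  refine ⟨setIntegral_nonneg measurableSet_Ioi fun r hr => ?_, ?_⟩
  · have : (0:ℝ) < r := hr
    positivity
  have split : ∀ {f : ℝ → ℝ}, IntegrableOn f (Ioi 0) → ∫ r in Ioi (0:ℝ), f r =
      (∫ r in Ioc 0 r1, f r) + ∫ r in Ioi r1, f r := by
    intro f hf
    rw [← Ioc_union_Ioi_eq_Ioi h1.le, setIntegral_union _ measurableSet_Ioi (hf.mono_set hs1)
      (hf.mono_set hs2)]
    exact Set.disjoint_left.2 fun x hx hx' => not_lt.2 hx.2 hx'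
  rw [split hi]
  have a1 := split h.int0
  have a2 : ∫ r in Ioc 0 r1, ‖g r‖ ^ 2 * r = 2 * Mf g r1 := by
    unfold Mf
    rw [intervalIntegral.integral_of_le h1.le]
    ring
  rw [h.mass, a2] at a1
  have a3 := h.Mle h1.le
  refine add_le_add ?_ ?_
  · have : ∫ r in Ioc 0 r1, φ (r / R) ^ 2 * r ^ 2 * ‖g r‖ ^ 2 * r ≤ ∫ r in Ioc 0 r1, r1 ^ 2 * (‖g r‖ ^ 2 * r) := by
      refine setIntegral_mono_on (hi.mono_set hs1) ((h.int0.mono_set hs1).const_mul _) measurableSet_Ioc fun r hr => ?_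
      have hr0 : 0 < r := hr.1
      rw [mul_assoc _ (‖g r‖ ^ 2) r]
      have := hle1 r hr.1 hr.2
      gcongr
    refine this.trans ?_
    rw [integral_const_mul, a2]
    refine mul_le_mul_of_nonneg_left ?_ (by positivity)
    linarith
  · have : ∫ r in Ioi r1, φ (r / R) ^ 2 * r ^ 2 * ‖g r‖ ^ 2 * r ≤ ∫ r in Ioi r1, 4 * R ^ 2 * (‖g r‖ ^ 2 * r) := by
      refine setIntegral_mono_on (hi.mono_set hs2) ((h.int0.mono_set hs2).const_mul _) measurableSet_Ioi fun r hr => ?_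
      have hr0 : 0 < r := hs2 hr
      rw [mul_assoc _ (‖g r‖ ^ 2) r]
      have := hle r hr0
      gcongr
    refine this.trans ?_
    rw [integral_const_mul]
    gcongr
    linarith

end Prof

theorem stmt10 (m : ℕ) (hm : 1 ≤ m) (u : ℝ → ℝ → ℂ)
    (hu : IsCSS m (Set.Ioo (-1 : ℝ) 0) u)
    (hmass : ∀ t ∈ Set.Ioo (-1 : ℝ) 0, L2sq (u t) = 8 * Real.pi * (m + 1))
    (hblow : Tendsto
      (fun t => Real.sqrt (2 * Real.pi * ∫ r in Set.Ioi (0:ℝ), ‖deriv (u t) r‖ ^ 2 * r))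
      (nhdsWithin 0 (Set.Ioo (-1 : ℝ) 0)) atTop) :
    ∀ R : ℝ, 0 < R → ∀ φ : ℝ → ℝ, ContDiff ℝ (⊤ : ℕ∞) φ →
      (∀ x : ℝ, 0 ≤ x → φ x ∈ Set.Icc (0:ℝ) 1) →
      (∀ x ∈ Set.Icc (0:ℝ) 1, φ x = 1) → (∀ x : ℝ, 2 ≤ x → φ x = 0) →
      Tendsto (fun t => 2 * Real.pi * ∫ r in Set.Ioi (0:ℝ),
          φ (r / R) ^ 2 * r ^ 2 * ‖u t r‖ ^ 2 * r)
        (nhdsWithin 0 (Set.Ioo (-1 : ℝ) 0)) (nhds 0) := by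
  intro R hR φ hφ hφ1 _ hφ2
  obtain ⟨T, hT0, e0, v, vr, hT1, huv, hprof⟩ := reduce hm hu hmass hblow
  have hpi := Real.pi_pos
  have hm0 : (0:ℝ) ≤ m := by positivity
  have he0 : 0 ≤ e0 := by
    obtain ⟨B, _, hB⟩ := hprof (T / 2) ⟨by linarith, by linarith⟩
    rw [← hB]
    refine setIntegral_nonneg measurableSet_Ioi fun r hr => ?_
    have : (0:ℝ) < r := hr
    positivity
  rw [Metric.tendsto_nhds]
  intro ε hε
  set N : ℝ := 2 * ((m:ℝ) + 1) with hN
  have hN0 : 0 < N := by positivity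
  set C0 : ℝ := N + e0 / 2 with hC0
  have hC0p : 0 < C0 := by positivity
  obtain ⟨r1, h1, hr1⟩ : ∃ r1 : ℝ, 0 < r1 ∧ 2 * Real.pi * (r1 ^ 2 * (4 * ((m:ℝ) + 1))) < ε / 2 := by
    have : Tendsto (fun x : ℝ => 2 * Real.pi * (x ^ 2 * (4 * ((m:ℝ) + 1)))) (nhdsWithin 0 (Ioi 0)) (nhds 0) := by
      have c : Continuous fun x : ℝ => 2 * Real.pi * (x ^ 2 * (4 * ((m:ℝ) + 1))) := by fun_prop
      have := c.tendsto 0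
      simp only [ne_eq, OfNat.ofNat_ne_zero, not_false_eq_true, zero_pow, zero_mul, mul_zero] at this
      exact this.mono_left nhdsWithin_le_nhds
    obtain ⟨x, hx1, hx2⟩ := ((this.eventually_lt_const (half_pos hε)).and self_mem_nhdsWithin).exists
    exact ⟨x, hx2, hx1⟩
  obtain ⟨η, hη, hη1⟩ : ∃ η : ℝ, 0 < η ∧ 2 * Real.pi * (4 * R ^ 2 * (2 * η)) ≤ ε / 2 := by
    refine ⟨ε / (32 * Real.pi * R ^ 2), by positivity, le_of_eq ?_⟩
    field_simp
    norm_num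
  set δ : ℝ := 1 / (16 * N) with hδ
  have hδ0 : 0 < δ := by positivity
  have hδN : δ * N ≤ 1 / 16 := by rw [hδ]; apply le_of_eq; field_simp
  set L : ℝ := (N + C0 * r1) / (δ * η) + 1 with hL
  have hL0 : 0 < L := by positivity
  obtain ⟨r0, h0, hr0C, hr0L⟩ : ∃ r0 : ℝ, 0 < r0 ∧ C0 * r0 ≤ 1 / 16 ∧ r0 ≤ r1 * Real.exp (-L) := by
    refine ⟨min (1 / (16 * C0)) (r1 * Real.exp (-L)), by positivity, ?_, min_le_right _ _⟩
    calc C0 * min (1 / (16 * C0)) (r1 * Real.exp (-L)) ≤ C0 * (1 / (16 * C0)) := by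
          gcongr; exact min_le_left _ _
      _ = _ := by field_simp
  have h01 : r0 < r1 := by
    have : Real.exp (-L) < 1 := by rw [← Real.exp_zero]; exact Real.exp_lt_exp.2 (by linarith)
    nlinarith
  have hlog : L ≤ Real.log r1 - Real.log r0 := by
    have := Real.log_le_log h0 hr0L
    rw [Real.log_mul h1.ne' (Real.exp_pos _).ne', Real.log_exp] at this
    linarith
  set K : ℝ := (e0 + m / (4 * r0 ^ 2)) + (2 * e0 + 2 * ((m:ℝ) + 2) ^ 2 / r0 ^ 2 * (4 * (m + 1))) with hK
  have hT : ∀ᶠ t in nhdsWithin 0 (Ioo (-1 : ℝ) 0), t ∈ Ioo T 0 := by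
    rw [nhdsWithin_Ioo_eq_nhdsLT (by norm_num)]
    exact Ioo_mem_nhdsLT hT0
  filter_upwards [hblow.eventually_gt_atTop (Real.sqrt (2 * Real.pi * K)), hT] with t hbig ht
  obtain ⟨B, P, hB⟩ := hprof t ht
  have hflow : ∀ r, 0 < r → |r ^ 2 * ‖v t r‖ ^ 2 / 2 - Mf (v t) r * (2 * ((m:ℝ) + 1) - Mf (v t) r)| ≤ C0 * r :=
    fun r hr => P.flow hB hr
  have hMr0 : δ ≤ Mf (v t) r0 := by
    by_contra hc
    have k := P.gradb hm hB hC0p.le hflow hδN h0 hr0C (not_le.1 hc)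
    have e : ∫ r in Ioi (0:ℝ), ‖deriv (u t) r‖ ^ 2 * r = ∫ r in Ioi (0:ℝ), ‖vr t r‖ ^ 2 * r :=
      setIntegral_congr_fun measurableSet_Ioi fun r hr => by simp only [(huv t ht r hr).2]
    rw [e] at hbig
    refine absurd hbig (not_lt.2 (Real.sqrt_le_sqrt ?_))
    gcongr
  have hMr1 : 2 * ((m:ℝ) + 1) - η < Mf (v t) r1 := by
    by_contra hc
    have k := P.conc hC0p.le hflow hδ0 hη h0 h01 hMr0 (not_lt.1 hc)
    have k2 : δ * η * L ≤ δ * η * (Real.log r1 - Real.log r0) := by gcongr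
    have k3 : δ * η * L = N + C0 * r1 + δ * η := by
      rw [hL]; field_simp
    have : 0 < δ * η := by positivity
    linarith
  obtain ⟨w1, w2⟩ := P.wmass hR h1 hφ.continuous hφ1 hφ2 hMr1
  have e : ∫ r in Ioi (0:ℝ), φ (r / R) ^ 2 * r ^ 2 * ‖u t r‖ ^ 2 * r =
      ∫ r in Ioi (0:ℝ), φ (r / R) ^ 2 * r ^ 2 * ‖v t r‖ ^ 2 * r :=
    setIntegral_congr_fun measurableSet_Ioi fun r hr => by simp only [(huv t ht r hr).1]
  rw [e, Real.dist_eq, sub_zero, abs_of_nonneg (by positivity)]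
  have w3 := mul_le_mul_of_nonneg_left w2 (by positivity : 0 ≤ 2 * Real.pi)
  linarith
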